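/- arXiv:1410.3333 — 2 statements merged into one kernel-verified Lean document; each statement's English description precedes it below -/
import Mathlib

section
/- There exists a constant C (depending only on f) such that for all x ≥ 2, |∑_{p ≤ x, p prime} ν₁(p)·log p/(p − 1) − log x| ≤ C. -/
open Polynomial

/-- ν₁(d) = #{a mod d : gcd(a,d) = 1 and f(a) ≡ 0 (mod d)} -/
def nu1 (f : Polynomial ℤ) (d : ℕ) : ℕ :=
  ((Finset.range d).filter (fun a : ℕ => Nat.gcd a d = 1 ∧ (d : ℤ) ∣ f.eval (a : ℤ))).card

namespace PrimeIdealMertens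

open NumberField Module

section BoxCounting

variable (K : Type*) [Field K] [NumberField K]

/-- The algebraic integers of `K` whose coordinates in the integral basis are at most `R`. -/
noncomputable def box (R : ℕ) : Finset (𝓞 K) :=
  (Finset.Icc (fun _ => -(R : ℤ)) (fun _ => (R : ℤ))).map
    (RingOfIntegers.basis K).equivFun.symm.toEquiv.toEmbedding

variable {K}

theorem mem_box {R : ℕ} {a : 𝓞 K} :
    a ∈ box K R ↔ ∀ i, |(RingOfIntegers.basis K).repr a i| ≤ R := by
  simp only [box, Finset.mem_map_equiv, Finset.mem_Icc, Pi.le_def, abs_le, forall_and]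
  rfl

theorem zero_mem_box (R : ℕ) : (0 : 𝓞 K) ∈ box K R := by
  simp [mem_box]

variable (K) in
theorem card_box (R : ℕ) : (box K R).card = (2 * R + 1) ^ finrank ℚ K := by
  rw [box, Finset.card_map, Pi.card_Icc, ← RingOfIntegers.rank K,
    finrank_eq_card_basis (RingOfIntegers.basis K)]
  simp only [Int.card_Icc, Finset.prod_const, Finset.card_univ]
  congr 1
  omega

theorem add_mem_box {R S : ℕ} {a b : 𝓞 K} (ha : a ∈ box K R) (hb : b ∈ box K S) :
    a + b ∈ box K (R + S) := by
  rw [mem_box] at *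
  intro i
  rw [map_add, Finsupp.add_apply]
  push_cast
  exact (abs_add_le _ _).trans (add_le_add (ha i) (hb i))

theorem neg_mem_box {R : ℕ} {a : 𝓞 K} (ha : a ∈ box K R) : -a ∈ box K R := by
  rw [mem_box] at *
  simpa using ha

variable (K) in
/-- The coordinates of a product are bounded by the product of the coordinate bounds. -/
theorem exists_repr_mul_le : ∃ C : ℕ, ∀ (x y : K) (A B : ℚ),
    (∀ i, |(integralBasis K).repr x i| ≤ A) → (∀ i, |(integralBasis K).repr y i| ≤ B) →
    ∀ i, |(integralBasis K).repr (x * y) i| ≤ C * (A * B) := by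
  set b := integralBasis K
  obtain ⟨C, hC⟩ := exists_nat_ge (∑ i, ∑ j, ∑ k, |b.repr (b j * b k) i|)
  refine ⟨C, fun x y A B hx hy i => ?_⟩
  have hA : 0 ≤ A := (abs_nonneg _).trans (hx i)
  have hB : 0 ≤ B := (abs_nonneg _).trans (hy i)
  have hxy : x * y = ∑ j, ∑ k, (b.repr x j * b.repr y k) • (b j * b k) := by
    conv_lhs => rw [← b.sum_repr x, ← b.sum_repr y, Finset.sum_mul_sum]
    exact Finset.sum_congr rfl fun j _ => Finset.sum_congr rfl fun k _ => smul_mul_smul_comm ..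
  have key : |b.repr (x * y) i| ≤ ∑ j, ∑ k, |b.repr (b j * b k) i| * (A * B) := by
    rw [hxy]
    simp only [map_sum, map_smul, Finsupp.coe_finsetSum, Finset.sum_apply, Finsupp.smul_apply,
      smul_eq_mul]
    refine (Finset.abs_sum_le_sum_abs _ _).trans (Finset.sum_le_sum fun j _ => ?_)
    refine (Finset.abs_sum_le_sum_abs _ _).trans (Finset.sum_le_sum fun k _ => ?_)
    rw [abs_mul, abs_mul, mul_comm]
    exact mul_le_mul_of_nonneg_left (mul_le_mul (hx j) (hy k) (abs_nonneg _) hA) (abs_nonneg _)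
  refine key.trans ?_
  simp only [← Finset.sum_mul]
  refine mul_le_mul_of_nonneg_right (le_trans ?_ hC) (mul_nonneg hA hB)
  exact Finset.single_le_sum (f := fun i => ∑ j, ∑ k, |b.repr (b j * b k) i|)
    (fun i _ => Finset.sum_nonneg fun j _ => Finset.sum_nonneg fun k _ => abs_nonneg _)
    (Finset.mem_univ i)

/-- An ideal of norm less than `(m + 1) ^ n` contains a nonzero element with coordinates
at most `m`. -/
theorem exists_ne_zero_mem_ideal_mem_box {I : Ideal (𝓞 K)} {m : ℕ} (hI : I ≠ ⊥)
    (hm : I.absNorm < (m + 1) ^ finrank ℚ K) : ∃ a ∈ I, a ≠ 0 ∧ a ∈ box K m := by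
  classical
  have hfin : Finite (𝓞 K ⧸ I) := Ideal.finiteQuotientOfFreeOfNeBot I hI
  have := Fintype.ofFinite (𝓞 K ⧸ I)
  set e := (RingOfIntegers.basis K).equivFun.symm.toEquiv.toEmbedding
  set s : Finset (𝓞 K) := (Finset.Icc (fun _ => (0 : ℤ)) (fun _ => (m : ℤ))).map e
  have hs : s.card = (m + 1) ^ finrank ℚ K := by
    rw [Finset.card_map, Pi.card_Icc, ← RingOfIntegers.rank K,
      finrank_eq_card_basis (RingOfIntegers.basis K)]
    simp
  have hcard : (Finset.univ : Finset (𝓞 K ⧸ I)).card < s.card := by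
    rw [hs, Finset.card_univ, ← Nat.card_eq_fintype_card]
    exact hm
  obtain ⟨x, hx, y, hy, hne, hxy⟩ := Finset.exists_ne_map_eq_of_card_lt_of_maps_to hcard
    (f := Ideal.Quotient.mk I) (fun _ _ => Finset.mem_univ _)
  refine ⟨x - y, Ideal.Quotient.eq.mp hxy, sub_ne_zero.mpr hne, mem_box.mpr fun i => ?_⟩
  have aux : ∀ z ∈ s, 0 ≤ (RingOfIntegers.basis K).repr z i ∧
      (RingOfIntegers.basis K).repr z i ≤ m := by
    intro z hz
    simp only [s, e, Finset.mem_map_equiv, Finset.mem_Icc, Pi.le_def] at hz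
    exact ⟨hz.1 i, hz.2 i⟩
  have h1 := aux x hx
  have h2 := aux y hy
  rw [map_sub, Finsupp.sub_apply, abs_le]
  constructor <;> linarith

variable (K) in
/-- Every residue class modulo an ideal `I` has a representative with coordinates
`O((N I) ^ (1 / n))`. -/
theorem exists_sub_mem_ideal_mem_box : ∃ C : ℕ, ∀ (I : Ideal (𝓞 K)) (m : ℕ), I ≠ ⊥ →
    I.absNorm < (m + 1) ^ finrank ℚ K → ∀ t : 𝓞 K, ∃ v ∈ box K (C * m), t - v ∈ I := by
  obtain ⟨C, hC⟩ := exists_repr_mul_le K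
  refine ⟨C, fun I m hI hm t => ?_⟩
  obtain ⟨a, haI, ha0, ha⟩ := exists_ne_zero_mem_ideal_mem_box hI hm
  set b := integralBasis K
  have ha0' : (a : K) ≠ 0 := by simpa using ha0
  set c := b.repr ((t : K) / a)
  set q : 𝓞 K := ∑ i, ⌊c i⌋ • RingOfIntegers.basis K i
  have hq : ∀ i, b.repr (q : K) i = ⌊c i⌋ := by
    intro i
    have : (RingOfIntegers.basis K).repr q i = ⌊c i⌋ := by
      simp only [q]
      rw [(RingOfIntegers.basis K).repr_sum_self]
    rw [integralBasis_repr_apply, this]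
    rfl
  refine ⟨t - q * a, mem_box.mpr fun i => ?_, ?_⟩
  · have h := hC a ((t : K) / a - q) m 1 (fun i => ?_) (fun i => ?_) i
    · have e : (a : K) * ((t : K) / a - q) = ((t - q * a : 𝓞 K) : K) := by
        push_cast
        field_simp
      rw [e, integralBasis_repr_apply, mul_one, eq_intCast] at h
      exact_mod_cast h
    · rw [integralBasis_repr_apply, eq_intCast]
      exact_mod_cast mem_box.mp ha i
    · rw [map_sub, Finsupp.sub_apply, hq, abs_le]
      constructor
      · linarith [Int.floor_le (c i)]
      · linarith [Int.lt_floor_add_one (c i)]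
  · simpa using I.mul_mem_left q haI

open Classical in
variable (K) in
/-- The points of the box lying in an ideal. -/
noncomputable def idealBox (I : Ideal (𝓞 K)) (R : ℕ) : Finset (𝓞 K) :=
  (box K R).filter (· ∈ I)

theorem mem_idealBox {I : Ideal (𝓞 K)} {R : ℕ} {a : 𝓞 K} :
    a ∈ idealBox K I R ↔ a ∈ box K R ∧ a ∈ I := by
  simp [idealBox]

/-- If `D` is a covering radius for `I`, the number of points of `I` in a box is comparable to
the number expected. -/
theorem card_idealBox_bounds {I : Ideal (𝓞 K)} {D : ℕ} (hI : I ≠ ⊥)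
    (hD : ∀ t : 𝓞 K, ∃ v ∈ box K D, t - v ∈ I) (R : ℕ) :
    I.absNorm * (idealBox K I R).card ≤ (2 * (R + D) + 1) ^ finrank ℚ K ∧
    (2 * R + 1) ^ finrank ℚ K ≤ I.absNorm * (idealBox K I (R + D)).card := by
  classical
  have hfin : Finite (𝓞 K ⧸ I) := Ideal.finiteQuotientOfFreeOfNeBot I hI
  have := Fintype.ofFinite (𝓞 K ⧸ I)
  have hN : I.absNorm = (Finset.univ : Finset (𝓞 K ⧸ I)).card := by
    rw [Finset.card_univ, ← Nat.card_eq_fintype_card]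
    rfl
  have hv : ∀ q : 𝓞 K ⧸ I, ∃ v ∈ box K D, Ideal.Quotient.mk I v = q := by
    intro q
    obtain ⟨t, rfl⟩ := Ideal.Quotient.mk_surjective q
    obtain ⟨v, hv, htv⟩ := hD t
    exact ⟨v, hv, (Ideal.Quotient.eq.mpr htv).symm⟩
  choose v hv hvq using hv
  rw [hN, ← card_box, ← card_box, ← Finset.card_product, ← Finset.card_product]
  constructor
  · refine Finset.card_le_card_of_injOn (fun z => z.2 + v z.1) ?_ ?_
    · rintro ⟨q, b⟩ hz
      simp only [Finset.coe_product, Set.mem_prod, Finset.mem_coe, mem_idealBox] at hz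
      exact add_mem_box hz.2.1 (hv q)
    · rintro ⟨q, b⟩ hz ⟨q', b'⟩ hz' h
      simp only [Finset.coe_product, Set.mem_prod, Finset.mem_coe, mem_idealBox] at hz hz' h
      have hq := congrArg (Ideal.Quotient.mk I) h
      rw [map_add, map_add, hvq, hvq, Ideal.Quotient.eq_zero_iff_mem.mpr hz.2.2,
        Ideal.Quotient.eq_zero_iff_mem.mpr hz'.2.2, zero_add, zero_add] at hq
      subst hq
      simpa using h
  · refine Finset.card_le_card_of_injOn
      (fun x => (Ideal.Quotient.mk I x, x + -v (Ideal.Quotient.mk I x))) ?_ ?_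
    · intro x hx
      simp only [Finset.coe_product, Set.mem_prod, Finset.mem_coe, mem_idealBox]
      refine ⟨Finset.mem_univ _, add_mem_box hx (neg_mem_box (hv _)), ?_⟩
      rw [← Ideal.Quotient.eq_zero_iff_mem, map_add, map_neg, hvq, add_neg_cancel]
    · intro x _ y _ h
      simp only [Prod.mk.injEq] at h
      rw [h.1] at h
      simpa using h.2

end BoxCounting

section NormsInBoxes

variable (K : Type*) [Field K] [NumberField K]

theorem sum_posLog_div_le (R : ℕ) (T : Finset ℤ) :
    ∑ j ∈ T, Real.posLog (R / j) ≤ 2 * R := by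
  have h0 : ∀ j : ℤ, 0 ≤ Real.posLog (R / j : ℝ) := fun j => Real.posLog_nonneg
  have h1 : ∑ j ∈ T, Real.posLog (R / j) ≤
      ∑ j ∈ Finset.Icc (-(R : ℤ)) R, Real.posLog (R / j : ℝ) := by
    rw [← Finset.sum_filter_ne_zero]
    refine Finset.sum_le_sum_of_subset_of_nonneg (fun j hj => ?_) fun j _ _ => h0 j
    replace hj := (Finset.mem_filter.mp hj).2
    by_contra hj'
    refine hj ((Real.posLog_eq_zero_iff _).mpr ?_)
    have : (R : ℤ) < |j| := by
      by_contra h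
      exact hj' (by rw [Finset.mem_Icc]; exact abs_le.mp (not_lt.mp h))
    have h2 : (R : ℝ) < |(j : ℝ)| := by exact_mod_cast this
    rw [abs_div, Nat.abs_cast]
    exact div_le_one_of_le₀ h2.le (abs_nonneg _)
  refine h1.trans ?_
  rw [Finset.sum_Icc_of_even_eq_range (fun j => by simp [div_neg])]
  have h2 : ∑ j ∈ Finset.range (R + 1), Real.posLog (R / ((j : ℕ) : ℤ) : ℝ) ≤ R := by
    rw [Finset.sum_range_succ']
    have : ∀ j ∈ Finset.range R, Real.posLog (R / (((j + 1 : ℕ) : ℤ) : ℝ)) =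
        Real.log (R / (((j + 1 : ℕ)) : ℝ)) := by
      intro j hj
      have hj : (j + 1 : ℕ) ≤ R := Finset.mem_range.mp hj
      rw [Int.cast_natCast, Real.posLog_eq_log]
      rw [abs_of_nonneg (by positivity), one_le_div (by positivity)]
      exact_mod_cast hj
    rw [Finset.sum_congr rfl this]
    rcases Nat.eq_zero_or_pos R with rfl | hR
    · simp
    rw [← Real.log_prod fun j _ => by positivity, Finset.prod_div_distrib]
    simp only [Finset.prod_const, Finset.card_range, Nat.cast_zero, Int.cast_zero, div_zero,
      Real.posLog_zero, add_zero]
    rw [← Nat.cast_prod, Finset.prod_range_add_one_eq_factorial]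
    rw [Real.log_le_iff_le_exp (by positivity)]
    exact Real.pow_div_factorial_le_exp _ (by positivity) R
  simp only [nsmul_eq_mul]
  simp only [Int.cast_zero, div_zero, Real.posLog_zero, sub_zero]
  push_cast at h2 ⊢
  linarith

variable {K} in
theorem embedding_eq_sum (σ : K →+* ℂ) (a : 𝓞 K) :
    σ a = ∑ i, ((RingOfIntegers.basis K).repr a i : ℂ) * σ (RingOfIntegers.basis K i) := by
  have h := congrArg (σ.comp (algebraMap (𝓞 K) K)) ((RingOfIntegers.basis K).sum_repr a)
  rw [map_sum] at h
  simpa using h.symm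

theorem exists_norm_embedding_le : ∃ C : ℝ, 1 ≤ C ∧ ∀ (σ : K →+* ℂ) (R : ℕ), ∀ a ∈ box K R,
    ‖σ a‖ ≤ C * R := by
  refine ⟨1 + ∑ σ : K →+* ℂ, ∑ i, ‖σ (RingOfIntegers.basis K i)‖, ?_, fun σ R a ha => ?_⟩
  · linarith [Finset.sum_nonneg fun (σ : K →+* ℂ) (_ : σ ∈ Finset.univ) =>
      Finset.sum_nonneg fun i (_ : i ∈ Finset.univ) =>
        norm_nonneg (σ (RingOfIntegers.basis K i))]
  have h1 : ‖σ a‖ ≤ (∑ i, ‖σ (RingOfIntegers.basis K i)‖) * R := by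
    rw [embedding_eq_sum, Finset.sum_mul]
    refine norm_sum_le_of_le _ fun i _ => ?_
    rw [norm_mul, mul_comm, Complex.norm_intCast]
    refine mul_le_mul_of_nonneg_left ?_ (norm_nonneg _)
    exact_mod_cast mem_box.mp ha i
  refine h1.trans (mul_le_mul_of_nonneg_right ?_ (Nat.cast_nonneg _))
  have h2 := Finset.single_le_sum (f := fun σ : K →+* ℂ => ∑ i, ‖σ (RingOfIntegers.basis K i)‖)
    (fun σ _ => Finset.sum_nonneg fun i _ => norm_nonneg _) (Finset.mem_univ σ)
  linarith

variable {K} in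
theorem natAbs_norm_eq_prod (a : 𝓞 K) :
    ((Algebra.norm ℤ a).natAbs : ℝ) = ∏ σ : K →+* ℂ, ‖σ a‖ := by
  have h := congr_arg (‖·‖) (Algebra.norm_eq_prod_embeddings ℚ ℂ (a : K))
  rw [norm_prod, ← Fintype.prod_equiv (RingHom.equivRatAlgHom K ℂ) (fun f => ‖f a‖)
      (fun φ => ‖φ a‖) fun _ => by simp [RingHom.equivRatAlgHom_apply]] at h
  rw [← h, ← Algebra.coe_norm_int]
  simp [Nat.cast_natAbs]

variable {K} in
theorem log_natAbs_norm (a : 𝓞 K) :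
    Real.log (Algebra.norm ℤ a).natAbs = ∑ σ : K →+* ℂ, Real.log ‖σ a‖ := by
  rw [natAbs_norm_eq_prod]
  by_cases ha : a = 0
  · simp [ha]
  · rw [Real.log_prod]
    intro σ _
    simpa using ha

variable {K} in
theorem one_le_natAbs_norm {a : 𝓞 K} (ha : a ≠ 0) : 1 ≤ (Algebra.norm ℤ a).natAbs := by
  rw [Nat.one_le_iff_ne_zero, Int.natAbs_ne_zero]
  exact Algebra.norm_ne_zero_iff.mpr ha

variable {K} in
theorem natAbs_norm_le {C : ℝ} (hC : ∀ (σ : K →+* ℂ) (R : ℕ), ∀ a ∈ box K R, ‖σ a‖ ≤ C * R)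
    {R : ℕ} {a : 𝓞 K} (ha : a ∈ box K R) :
    ((Algebra.norm ℤ a).natAbs : ℝ) ≤ (C * R) ^ finrank ℚ K := by
  rw [natAbs_norm_eq_prod, ← Embeddings.card K ℂ, ← Finset.card_univ, ← Finset.prod_const]
  exact Finset.prod_le_prod (fun _ _ => norm_nonneg _) fun σ _ => hC σ R a ha

variable {K} in
theorem neg_le_log_norm_embedding {C : ℝ} (hC1 : 1 ≤ C)
    (hC : ∀ (σ : K →+* ℂ) (R : ℕ), ∀ a ∈ box K R, ‖σ a‖ ≤ C * R)
    {R : ℕ} (hR : 1 ≤ R) {a : 𝓞 K} (ha : a ∈ box K R) (σ : K →+* ℂ) :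
    -(finrank ℚ K * Real.log (C * R)) ≤ Real.log ‖σ a‖ := by
  have hR' : (1 : ℝ) ≤ R := by exact_mod_cast hR
  have hCR : 1 ≤ C * R := one_le_mul_of_one_le_of_one_le hC1 hR'
  have hlog : 0 ≤ Real.log (C * R) := Real.log_nonneg hCR
  by_cases ha0 : a = 0
  · simp only [ha0, map_zero, norm_zero, Real.log_zero, Left.neg_nonpos_iff]
    positivity
  have h0 : 0 ≤ ∑ τ : K →+* ℂ, Real.log ‖τ a‖ := by
    rw [← log_natAbs_norm]
    exact Real.log_natCast_nonneg _
  classical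
  rw [← Finset.add_sum_erase _ _ (Finset.mem_univ σ)] at h0
  have h1 : ∑ τ ∈ Finset.univ.erase σ, Real.log ‖τ a‖ ≤
      ∑ τ ∈ (Finset.univ : Finset (K →+* ℂ)), Real.log (C * R) :=
    (Finset.sum_le_sum fun τ _ => Real.log_le_log (by simpa using ha0) (hC τ R a ha)).trans
      (Finset.sum_le_sum_of_subset_of_nonneg (Finset.erase_subset _ _) fun _ _ _ => hlog)
  rw [Finset.sum_const, Finset.card_univ, Embeddings.card, nsmul_eq_mul] at h1
  linarith

variable {K} in
/-- The number of points of a box with one coordinate prescribed in terms of the others. -/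
theorem card_filter_coord_le (R : ℕ) (i : Free.ChooseBasisIndex ℤ (𝓞 K)) (k : 𝓞 K → ℤ)
    (hk : ∀ a b : 𝓞 K, (∀ j ≠ i, (RingOfIntegers.basis K).repr a j =
      (RingOfIntegers.basis K).repr b j) → k a = k b) (c : ℤ) :
    ((box K R).filter fun a => (RingOfIntegers.basis K).repr a i - k a = c).card ≤
      (2 * R + 1) ^ (finrank ℚ K - 1) := by
  classical
  have hcard : (Finset.Icc (fun _ : {j // j ≠ i} => -(R : ℤ)) (fun _ => (R : ℤ))).card =
      (2 * R + 1) ^ (finrank ℚ K - 1) := by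
    rw [Pi.card_Icc, ← RingOfIntegers.rank K, finrank_eq_card_basis (RingOfIntegers.basis K)]
    simp only [Int.card_Icc, Finset.prod_const, Finset.card_univ, ne_eq, Fintype.card_subtype_compl,
      Fintype.card_unique]
    congr 1
    omega
  rw [← hcard]
  refine Finset.card_le_card_of_injOn
    (fun a (j : {j // j ≠ i}) => (RingOfIntegers.basis K).repr a j) ?_ ?_
  · intro a ha
    have ha := (Finset.mem_filter.mp ha).1
    rw [mem_box] at ha
    simp only [Finset.coe_Icc, Set.mem_Icc, Pi.le_def]
    exact ⟨fun j => (abs_le.mp (ha j)).1, fun j => (abs_le.mp (ha j)).2⟩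
  · intro a ha b hb hab
    have hab' : ∀ j ≠ i, (RingOfIntegers.basis K).repr a j = (RingOfIntegers.basis K).repr b j :=
      fun j hj => congrFun hab ⟨j, hj⟩
    have h1 := (Finset.mem_filter.mp ha).2
    have h2 := (Finset.mem_filter.mp hb).2
    have h3 := hk a b hab'
    refine (RingOfIntegers.basis K).repr.injective (Finsupp.ext fun j => ?_)
    by_cases hj : j = i
    · subst hj
      linarith
    · exact hab' j hj

theorem log_norm_embedding_sum_ge (σ : K →+* ℂ) : ∃ C : ℝ, ∀ R : ℕ, 1 ≤ R →
    (2 * R + 1 : ℝ) ^ finrank ℚ K * (Real.log R - C) ≤ ∑ a ∈ box K R, Real.log ‖σ a‖ := by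
  classical
  obtain ⟨C, hC1, hC⟩ := exists_norm_embedding_le K
  set n := finrank ℚ K
  set B := RingOfIntegers.basis K
  obtain ⟨i⟩ : Nonempty (Free.ChooseBasisIndex ℤ (𝓞 K)) := inferInstance
  set u : ℂ := σ (B i)
  have hu : 0 < ‖u‖ := by simp [u, B.ne_zero i]
  set β : 𝓞 K → ℝ := fun a => (∑ j ∈ Finset.univ.erase i, (B.repr a j : ℂ) * σ (B j) / u).re
  set k : 𝓞 K → ℤ := fun a => round (-β a)
  have hk : ∀ a b : 𝓞 K, (∀ j ≠ i, B.repr a j = B.repr b j) → k a = k b := by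
    intro a b hab
    have : β a = β b := by
      simp only [β]
      congr 1
      refine Finset.sum_congr rfl fun j hj => ?_
      rw [hab j (Finset.ne_of_mem_erase hj)]
    simp only [k, this]
  have hσ : ∀ a : 𝓞 K, ‖u‖ * |(B.repr a i : ℝ) + β a| ≤ ‖σ a‖ := by
    intro a
    have h1 : σ a = u * ((B.repr a i : ℂ) +
        ∑ j ∈ Finset.univ.erase i, (B.repr a j : ℂ) * σ (B j) / u) := by
      rw [embedding_eq_sum, ← Finset.add_sum_erase _ _ (Finset.mem_univ i), mul_add,
        Finset.mul_sum]
      have hu' : u ≠ 0 := norm_pos_iff.mp hu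
      congr 1
      · rw [mul_comm]
      · refine Finset.sum_congr rfl fun j _ => ?_
        field_simp
        rfl
    rw [h1, norm_mul]
    refine mul_le_mul_of_nonneg_left ?_ hu.le
    refine le_trans (le_of_eq ?_) (Complex.abs_re_le_norm _)
    simp [β]
  set c1 : ℝ := |Real.log (‖u‖ / 2)|
  refine ⟨c1 + n * C + 2, fun R hR => ?_⟩
  have hR' : (1 : ℝ) ≤ R := by exact_mod_cast hR
  have hlogR : 0 ≤ Real.log R := Real.log_nonneg hR'
  set M : ℝ := n * Real.log (C * R) + Real.log R
  have hM0 : 0 ≤ Real.log (C * R) :=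
    Real.log_nonneg (one_le_mul_of_one_le_of_one_le hC1 hR')
  have hM0' : 0 ≤ M := by positivity
  have hM : M ≤ n * (C * R) + R := by
    have := Real.log_le_self (show 0 ≤ C * R by positivity)
    have := Real.log_le_self (show (0 : ℝ) ≤ R by positivity)
    simp only [M]
    gcongr
  have hpt : ∀ a ∈ box K R, Real.log R - c1 - (Real.posLog (R / (B.repr a i - k a : ℤ)) +
      if B.repr a i - k a = 0 then M else 0) ≤ Real.log ‖σ a‖ := by
    intro a ha
    split_ifs with h
    · rw [h]
      simp only [Int.cast_zero, div_zero, Real.posLog_zero, zero_add]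
      have := neg_le_log_norm_embedding hC1 hC hR ha σ
      have : 0 ≤ c1 := abs_nonneg _
      simp only [M]
      linarith
    · set j := B.repr a i - k a
      have hj1 : (1 : ℝ) ≤ |(j : ℝ)| := by exact_mod_cast Int.one_le_abs h
      have h1 : |(j : ℝ)| / 2 ≤ |(B.repr a i : ℝ) + β a| := by
        have h2 := abs_sub_round (-β a)
        have h3 : (j : ℝ) = ((B.repr a i : ℝ) + β a) + (-β a - round (-β a)) := by
          simp only [j, k]
          push_cast
          ring
        have h4 := abs_add_le ((B.repr a i : ℝ) + β a) (-β a - round (-β a))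
        rw [← h3] at h4
        linarith
      have h2 : (‖u‖ / 2) * |(j : ℝ)| ≤ ‖σ a‖ := by
        refine le_trans (le_of_eq (by ring)) ((mul_le_mul_of_nonneg_left h1 hu.le).trans (hσ a))
      have h3 := Real.log_le_log (by positivity) h2
      rw [Real.log_mul (by positivity) (by positivity), Real.log_abs] at h3
      have h4 : Real.log (R / j) ≤ Real.posLog (R / j) := by
        rw [Real.posLog_apply]; exact le_max_right _ _
      rw [Real.log_div (by positivity) (by exact_mod_cast h)] at h4
      have h5 : -c1 ≤ Real.log (‖u‖ / 2) := neg_abs_le _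
      linarith
  refine le_trans ?_ (Finset.sum_le_sum hpt)
  rw [Finset.sum_sub_distrib, Finset.sum_const, card_box]
  set H : ℤ → ℝ := fun j => Real.posLog (R / j) + if j = 0 then M else 0
  have hH : ∑ a ∈ box K R, H (B.repr a i - k a) ≤ (2 * R + 1 : ℝ) ^ (n - 1) * (2 * R + M) := by
    rw [Finset.sum_comp H (fun a => B.repr a i - k a)]
    have hH0 : ∀ j, 0 ≤ H j := fun j => by
      have : 0 ≤ Real.posLog (R / j : ℝ) := Real.posLog_nonneg
      simp only [H]
      split_ifs <;> positivity
    have h1 : ∀ T : Finset ℤ, ∑ j ∈ T, H j ≤ 2 * R + M := by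
      intro T
      rw [Finset.sum_add_distrib]
      refine add_le_add (sum_posLog_div_le R T) ?_
      rw [Finset.sum_ite_eq']
      split_ifs <;> simp [hM0']
    refine le_trans (Finset.sum_le_sum (g := fun j => (2 * R + 1 : ℝ) ^ (n - 1) * H j)
      fun j _ => ?_) ?_
    · rw [nsmul_eq_mul]
      refine mul_le_mul_of_nonneg_right ?_ (hH0 j)
      exact_mod_cast card_filter_coord_le R i k hk j
    · rw [← Finset.mul_sum]
      exact mul_le_mul_of_nonneg_left (h1 _) (by positivity)
  have hn : (2 * R + 1 : ℝ) ^ n = (2 * R + 1 : ℝ) ^ (n - 1) * (2 * R + 1) := by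
    rw [← pow_succ, Nat.sub_add_cancel finrank_pos]
  have hle : (2 * R + 1 : ℝ) ^ (n - 1) * (2 * R + M) ≤ (2 * R + 1 : ℝ) ^ n * (n * C + 2) := by
    rw [hn, mul_assoc]
    refine mul_le_mul_of_nonneg_left ?_ (by positivity)
    have : 0 ≤ n * C := by positivity
    nlinarith
  rw [nsmul_eq_mul]
  push_cast
  have hfin : ∑ a ∈ box K R, (Real.posLog (R / (((B.repr a i : ℤ) : ℝ) - (k a : ℝ))) +
      if B.repr a i - k a = 0 then M else 0) = ∑ a ∈ box K R, H (B.repr a i - k a) := by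
    refine Finset.sum_congr rfl fun a _ => ?_
    simp [H]
  rw [hfin]
  linarith

/-- The logarithms of the norms of the algebraic integers in a box. -/
theorem exists_abs_sum_log_norm_le : ∃ C : ℝ, ∀ R : ℕ, 1 ≤ R →
    |∑ a ∈ box K R, Real.log (Algebra.norm ℤ a).natAbs -
      (2 * R + 1 : ℝ) ^ finrank ℚ K * (finrank ℚ K * Real.log R)| ≤
        C * (2 * R + 1 : ℝ) ^ finrank ℚ K := by
  obtain ⟨C, hC1, hC⟩ := exists_norm_embedding_le K
  choose c hc using log_norm_embedding_sum_ge K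
  set n := finrank ℚ K
  refine ⟨max (n * Real.log C) (∑ σ, c σ), fun R hR => ?_⟩
  have hR' : (1 : ℝ) ≤ R := by exact_mod_cast hR
  have hpos : (0 : ℝ) < (2 * R + 1 : ℝ) ^ n := by positivity
  rw [abs_le]
  constructor
  · have h1 : ∑ a ∈ box K R, Real.log (Algebra.norm ℤ a).natAbs =
        ∑ σ : K →+* ℂ, ∑ a ∈ box K R, Real.log ‖σ a‖ := by
      rw [Finset.sum_comm]
      exact Finset.sum_congr rfl fun a _ => log_natAbs_norm a
    have h2 := Finset.sum_le_sum fun (σ : K →+* ℂ) (_ : σ ∈ Finset.univ) => hc σ R hR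
    rw [← h1, ← Finset.mul_sum, Finset.sum_sub_distrib, Finset.sum_const, Finset.card_univ,
      Embeddings.card, nsmul_eq_mul] at h2
    have h3 := mul_le_mul_of_nonneg_right (le_max_right (n * Real.log C) (∑ σ, c σ)) hpos.le
    linarith
  · have h1 : ∀ a ∈ box K R, Real.log (Algebra.norm ℤ a).natAbs ≤
        n * Real.log C + n * Real.log R := by
      intro a ha
      by_cases ha0 : a = 0
      · simp only [ha0, Algebra.norm_zero, Int.natAbs_zero, Nat.cast_zero, Real.log_zero]
        have := Real.log_nonneg hC1
        have := Real.log_nonneg hR'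
        positivity
      rw [← mul_add, ← Real.log_mul (by positivity) (by positivity), ← Real.log_pow]
      refine Real.log_le_log ?_ (natAbs_norm_le hC ha)
      exact_mod_cast one_le_natAbs_norm ha0
    have h2 := Finset.sum_le_sum h1
    rw [Finset.sum_const, card_box, nsmul_eq_mul] at h2
    push_cast at h2
    have h3 := mul_le_mul_of_nonneg_right (le_max_left (n * Real.log C) (∑ σ, c σ)) hpos.le
    linarith

end NormsInBoxes

section IdealFactorization

variable (K : Type*) [Field K] [NumberField K]

open Classical in
/-- The nonzero prime ideals of norm at most `Y`. -/
noncomputable def primeIdeals (Y : ℕ) : Finset (Ideal (𝓞 K)) :=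
  (Ideal.finite_setOfPred_absNorm_le (S := 𝓞 K) Y).toFinset.filter Prime

variable {K}

theorem mem_primeIdeals {Y : ℕ} {P : Ideal (𝓞 K)} :
    P ∈ primeIdeals K Y ↔ P.absNorm ≤ Y ∧ Prime P := by
  simp [primeIdeals]

theorem absNorm_ne_zero {I : Ideal (𝓞 K)} (hI : I ≠ ⊥) : I.absNorm ≠ 0 := by
  rwa [Ne, Ideal.absNorm_eq_zero_iff]

theorem exists_absNorm_eq_minFac_pow {P : Ideal (𝓞 K)} (hP : Prime P) :
    P.absNorm.minFac.Prime ∧ (P.absNorm.minFac : 𝓞 K) ∈ P ∧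
      ∃ f : ℕ, 0 < f ∧ P.absNorm = P.absNorm.minFac ^ f := by
  have := (Ideal.isPrime_of_prime hP).isMaximal hP.ne_zero
  obtain ⟨q, n, hn, hqP, hq, H⟩ := Ideal.exists_prime_and_absNorm_eq_pow P
  have hmin : P.absNorm.minFac = q := by
    rw [H, hq.pow_minFac hn.ne']
  rw [hmin]
  exact ⟨hq, by simpa using hqP, n, hn, H⟩

theorem two_le_absNorm {P : Ideal (𝓞 K)} (hP : Prime P) : 2 ≤ P.absNorm := by
  obtain ⟨h1, -, f, hf, h⟩ := exists_absNorm_eq_minFac_pow hP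
  rw [h]
  exact h1.two_le.trans (Nat.le_self_pow hf.ne' _)

theorem card_filter_minFac_le (Y p : ℕ) :
    ((primeIdeals K Y).filter fun P => P.absNorm.minFac = p).card ≤ finrank ℚ K := by
  set s := (primeIdeals K Y).filter fun P => P.absNorm.minFac = p
  rcases s.eq_empty_or_nonempty with hs | ⟨P0, hP0⟩
  · simp [hs]
  have hmem : ∀ P ∈ s, Prime P ∧ P.absNorm.minFac = p := fun P hP =>
    ⟨(mem_primeIdeals.mp (Finset.mem_filter.mp hP).1).2, (Finset.mem_filter.mp hP).2⟩
  have hp : p.Prime := by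
    have := exists_absNorm_eq_minFac_pow (hmem P0 hP0).1
    rw [(hmem P0 hP0).2] at this
    exact this.1
  have hdvd : ∏ P ∈ s, P ∣ Ideal.span {(p : 𝓞 K)} := by
    refine Finset.prod_primes_dvd _ (fun P hP => (hmem P hP).1) fun P hP => ?_
    have := (exists_absNorm_eq_minFac_pow (hmem P hP).1).2.1
    rw [(hmem P hP).2] at this
    rwa [Ideal.dvd_span_singleton]
  have hN := map_dvd Ideal.absNorm hdvd
  rw [map_prod, Ideal.absNorm_span_natCast, RingOfIntegers.rank] at hN
  have h1 : p ^ s.card ∣ ∏ P ∈ s, P.absNorm := by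
    rw [← Finset.prod_const]
    refine Finset.prod_dvd_prod_of_dvd _ _ fun P hP => ?_
    rw [← (hmem P hP).2]
    exact Nat.minFac_dvd _
  exact (Nat.pow_dvd_pow_iff_le_right hp.one_lt).mp (h1.trans hN)

/-- The factorization of the norm of an algebraic integer. -/
theorem log_natAbs_norm_eq_sum {a : 𝓞 K} (ha : a ≠ 0) {Y : ℕ}
    (hY : (Algebra.norm ℤ a).natAbs ≤ Y) [∀ I : Ideal (𝓞 K), Decidable (a ∈ I)] :
    Real.log (Algebra.norm ℤ a).natAbs = ∑ P ∈ primeIdeals K Y, ∑ k ∈ Finset.Icc 1 Y,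
      if a ∈ P ^ k then Real.log P.absNorm else 0 := by
  classical
  set I : Ideal (𝓞 K) := Ideal.span {a}
  have hI : I ≠ ⊥ := by simpa [I] using ha
  have hNI : I.absNorm = (Algebra.norm ℤ a).natAbs := Ideal.absNorm_span_singleton a
  set F := UniqueFactorizationMonoid.normalizedFactors I
  have hF : ∀ P ∈ F, Prime P := fun P hP =>
    UniqueFactorizationMonoid.prime_of_normalized_factor P hP
  have hsub : F.toFinset ⊆ primeIdeals K Y := by
    intro P hP
    have hP := Multiset.mem_toFinset.mp hP
    refine mem_primeIdeals.mpr ⟨?_, hF P hP⟩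
    have h := map_dvd Ideal.absNorm (UniqueFactorizationMonoid.dvd_of_mem_normalizedFactors hP)
    exact (Nat.le_of_dvd (Nat.pos_of_ne_zero (absNorm_ne_zero hI)) h).trans (hNI ▸ hY)
  have hprod : (I.absNorm : ℝ) = ∏ P ∈ primeIdeals K Y, (P.absNorm : ℝ) ^ F.count P := by
    conv_lhs => rw [← Ideal.prod_normalizedFactors_eq_self hI,
      Finset.prod_multiset_count_of_subset _ _ hsub]
    rw [map_prod]
    push_cast
    simp [F]
  rw [← hNI, hprod, Real.log_prod]
  swap
  · intro P hP
    exact pow_ne_zero _ (Nat.cast_ne_zero.mpr (absNorm_ne_zero (mem_primeIdeals.mp hP).2.ne_zero))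
  refine Finset.sum_congr rfl fun P hP => ?_
  have hPP := (mem_primeIdeals.mp hP).2
  have hiff : ∀ k, a ∈ P ^ k ↔ k ≤ F.count P := by
    intro k
    rw [← Ideal.dvd_span_singleton, Multiset.le_count_iff_replicate_le]
    have := UniqueFactorizationMonoid.dvd_iff_normalizedFactors_le_normalizedFactors
      (pow_ne_zero k hPP.ne_zero) hI
    rw [this, UniqueFactorizationMonoid.normalizedFactors_pow,
      UniqueFactorizationMonoid.normalizedFactors_irreducible hPP.irreducible, normalize_eq,
      Multiset.nsmul_singleton]
  have hle : F.count P ≤ Y := by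
    have h1 : a ∈ P ^ F.count P := (hiff _).mpr le_rfl
    have h2 := Ideal.absNorm_dvd_absNorm_of_le ((Ideal.span_singleton_le_iff_mem _).mpr h1)
    rw [map_pow] at h2
    have h3 := Nat.le_of_dvd (Nat.pos_of_ne_zero (absNorm_ne_zero hI)) h2
    exact (Nat.lt_pow_self (two_le_absNorm hPP)).le.trans (h3.trans (hNI ▸ hY))
  rw [Real.log_pow, ← Finset.sum_filter, Finset.sum_const, nsmul_eq_mul]
  congr 2
  have : (Finset.Icc 1 Y).filter (fun k => a ∈ P ^ k) = Finset.Icc 1 (F.count P) := by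
    ext k
    simp only [Finset.mem_filter, Finset.mem_Icc, hiff]
    omega
  rw [this, Nat.card_Icc, Nat.add_sub_cancel]

theorem one_le_card_idealBox (I : Ideal (𝓞 K)) (R : ℕ) : 1 ≤ (idealBox K I R).card :=
  Finset.card_pos.mpr ⟨0, mem_idealBox.mpr ⟨zero_mem_box R, I.zero_mem⟩⟩

theorem sum_log_norm_eq {R Y : ℕ} (hY : ∀ a ∈ box K R, (Algebra.norm ℤ a).natAbs ≤ Y) :
    ∑ a ∈ box K R, Real.log (Algebra.norm ℤ a).natAbs =
      ∑ P ∈ primeIdeals K Y, ∑ k ∈ Finset.Icc 1 Y,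
        Real.log P.absNorm * ((idealBox K (P ^ k) R).card - 1) := by
  classical
  rw [← Finset.add_sum_erase _ _ (zero_mem_box R)]
  simp only [Algebra.norm_zero, Int.natAbs_zero, Nat.cast_zero, Real.log_zero, zero_add]
  rw [Finset.sum_congr rfl fun a ha => log_natAbs_norm_eq_sum (Finset.ne_of_mem_erase ha)
    (hY a (Finset.mem_of_mem_erase ha)), Finset.sum_comm]
  refine Finset.sum_congr rfl fun P _ => ?_
  rw [Finset.sum_comm]
  refine Finset.sum_congr rfl fun k _ => ?_
  rw [← Finset.sum_filter, Finset.sum_const, nsmul_eq_mul, mul_comm]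
  congr 1
  have : ((box K R).erase 0).filter (fun a => a ∈ P ^ k) = (idealBox K (P ^ k) R).erase 0 := by
    ext a
    simp only [Finset.mem_filter, Finset.mem_erase, mem_idealBox]
    tauto
  rw [this, Finset.card_erase_of_mem (mem_idealBox.mpr ⟨zero_mem_box R, Ideal.zero_mem _⟩),
    Nat.cast_sub (one_le_card_idealBox _ _), Nat.cast_one]

variable (K) in
/-- There is `B` such that every element of the box of size `R` has norm at most `(B R) ^ n`. -/
theorem exists_natAbs_norm_le : ∃ B : ℕ, 1 ≤ B ∧ ∀ R : ℕ, ∀ a ∈ box K R,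
    (Algebra.norm ℤ a).natAbs ≤ (B * R) ^ finrank ℚ K := by
  obtain ⟨C, hC1, hC⟩ := exists_norm_embedding_le K
  obtain ⟨B, hB⟩ := exists_nat_ge C
  refine ⟨B, by exact_mod_cast hC1.trans hB, fun R a ha => ?_⟩
  have h := natAbs_norm_le hC ha
  have h2 : (C * R) ^ finrank ℚ K ≤ (B * R : ℝ) ^ finrank ℚ K := by gcongr
  exact_mod_cast h.trans h2

theorem pow_sub_pow_le {x y : ℝ} (hy : 0 ≤ y) (hxy : y ≤ x) (n : ℕ) :
    x ^ n - y ^ n ≤ (x - y) * n * x ^ (n - 1) := by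
  have h := abs_pow_sub_pow_le x y n
  rw [abs_of_nonneg (sub_nonneg.mpr hxy), abs_of_nonneg hy, abs_of_nonneg (hy.trans hxy),
    max_eq_left hxy] at h
  exact (le_abs_self _).trans h

variable (K) in
/-- Lattice point counts for ideals in boxes. -/
theorem exists_card_idealBox_bounds {B : ℕ} (hB1 : 1 ≤ B) (hB : ∀ R : ℕ, ∀ a ∈ box K R,
    (Algebra.norm ℤ a).natAbs ≤ (B * R) ^ finrank ℚ K) :
    ∃ M : ℝ, 0 ≤ M ∧ ∀ (I : Ideal (𝓞 K)) (R : ℕ), I ≠ ⊥ → 1 ≤ R →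
      ((idealBox K I R).card - 1 : ℝ) * I.absNorm ≤ M * (2 * R + 1 : ℝ) ^ finrank ℚ K ∧
      (I.absNorm ≤ (B * R) ^ finrank ℚ K →
        |(idealBox K I R).card * (I.absNorm : ℝ) - (2 * R + 1 : ℝ) ^ finrank ℚ K| ≤
          M * (2 * R + 1 : ℝ) ^ (finrank ℚ K - 1) * (I.absNorm : ℝ) ^ (1 / (finrank ℚ K : ℝ))) := by
  obtain ⟨C, hC⟩ := exists_sub_mem_ideal_mem_box K
  set n := finrank ℚ K
  have hn : n ≠ 0 := finrank_pos.ne'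
  have hn1 : (1 : ℝ) ≤ n := by exact_mod_cast finrank_pos
  set E : ℝ := 1 + C * B
  have hE1 : 1 ≤ E := by simp only [E]; linarith [show (0 : ℝ) ≤ C * B by positivity]
  refine ⟨E ^ n + 3 * C * n * E ^ (n - 1), by positivity, fun I R hI hR => ?_⟩
  set N := I.absNorm
  have hN : 1 ≤ N := Nat.one_le_iff_ne_zero.mpr (absNorm_ne_zero hI)
  set r : ℝ := (N : ℝ) ^ (1 / (n : ℝ))
  have hr0 : 0 ≤ r := by positivity
  have hrn : r ^ n = N := by
    rw [← Real.rpow_natCast, ← Real.rpow_mul (by positivity), one_div_mul_cancel (by positivity),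
      Real.rpow_one]
  set m : ℕ := ⌊r⌋₊
  have hm : (m : ℝ) ≤ r := Nat.floor_le hr0
  have hmN : N < (m + 1) ^ n := by
    have : (N : ℝ) < (m + 1 : ℝ) ^ n := by
      rw [← hrn]
      exact pow_lt_pow_left₀ (Nat.lt_floor_add_one r) hr0 hn
    exact_mod_cast this
  set D := C * m
  have hD : ∀ t : 𝓞 K, ∃ v ∈ box K D, t - v ∈ I := hC I m hI hmN
  have hDr : (D : ℝ) ≤ C * r := by
    simp only [D]
    push_cast
    gcongr
  have hRR : (1 : ℝ) ≤ R := by exact_mod_cast hR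
  set w : ℝ := 2 * R + 1
  have hw : 0 < w := by positivity
  have hupper : ((idealBox K I R).card : ℝ) * N ≤ (w + 2 * D) ^ n := by
    have := (card_idealBox_bounds hI hD R).1
    rw [mul_comm]
    refine le_trans (b := ((2 * (R + D) + 1 : ℕ) : ℝ) ^ n) (by exact_mod_cast this) (le_of_eq ?_)
    simp only [w]
    push_cast
    ring
  have hDX : N ≤ (B * R) ^ n → w + 2 * D ≤ E * w := by
    intro hNY
    have hrBR : r ≤ B * R := by
      refine le_of_pow_le_pow_left₀ hn (by positivity) ?_
      rw [hrn]
      exact_mod_cast hNY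
    have h1 : (D : ℝ) ≤ C * (B * R) := hDr.trans (by gcongr)
    have h2 : (0 : ℝ) ≤ C * B := by positivity
    simp only [E, w]
    nlinarith
  constructor
  · by_cases hNY : N ≤ (B * R) ^ n
    · calc ((idealBox K I R).card - 1 : ℝ) * N ≤ (idealBox K I R).card * N := by
            gcongr; linarith
        _ ≤ (E * w) ^ n := hupper.trans (pow_le_pow_left₀ (by positivity) (hDX hNY) n)
        _ = E ^ n * w ^ n := mul_pow _ _ _
        _ ≤ _ := by
            refine mul_le_mul_of_nonneg_right ?_ (by positivity)
            linarith [show 0 ≤ 3 * C * n * E ^ (n - 1) by positivity]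
    · have : idealBox K I R ⊆ {0} := by
        intro a ha
        rw [Finset.mem_singleton]
        by_contra ha0
        obtain ⟨ha1, ha2⟩ := mem_idealBox.mp ha
        have h1 := Ideal.absNorm_dvd_absNorm_of_le ((Ideal.span_singleton_le_iff_mem _).mpr ha2)
        rw [Ideal.absNorm_span_singleton] at h1
        exact hNY ((Nat.le_of_dvd (one_le_natAbs_norm ha0) h1).trans (hB R a ha1))
      have h1 : (idealBox K I R).card ≤ 1 := Finset.card_le_card this
      have h2 : ((idealBox K I R).card : ℝ) ≤ 1 := by exact_mod_cast h1
      calc ((idealBox K I R).card - 1 : ℝ) * N ≤ 0 :=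
            mul_nonpos_of_nonpos_of_nonneg (by linarith) (by positivity)
        _ ≤ _ := by positivity
  · intro hNY
    have hE : 1 ≤ E ^ (n - 1) := one_le_pow₀ hE1
    have hEn : 0 ≤ E ^ n := by positivity
    have hXX : w ^ n = w ^ (n - 1) * w := by
      rw [← pow_succ, Nat.sub_add_cancel finrank_pos]
    have hXn : 0 < w ^ (n - 1) := by positivity
    have hbound : ∀ t : ℝ, 0 ≤ t → t ≤ 3 * n * E ^ (n - 1) →
        w ^ (n - 1) * D * t ≤ (E ^ n + 3 * C * n * E ^ (n - 1)) * w ^ (n - 1) * r := by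
      intro t ht0 ht
      calc w ^ (n - 1) * D * t ≤ w ^ (n - 1) * (C * r) * (3 * n * E ^ (n - 1)) := by gcongr
        _ ≤ _ := by
          have : 0 ≤ E ^ n * w ^ (n - 1) * r := by positivity
          linarith
    rw [abs_le]
    constructor
    · by_cases hDR : D ≤ R
      · have hlow := (card_idealBox_bounds hI hD (R - D)).2
        rw [Nat.sub_add_cancel hDR] at hlow
        have hlow' : (w - 2 * D) ^ n ≤ (idealBox K I R).card * (N : ℝ) := by
          rw [mul_comm _ (N : ℝ)]
          refine le_trans (b := ((2 * (R - D) + 1 : ℕ) : ℝ) ^ n) (le_of_eq ?_)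
            (by exact_mod_cast hlow)
          simp only [w]
          push_cast [Nat.cast_sub hDR]
          ring
        have hDR' : (D : ℝ) ≤ R := by exact_mod_cast hDR
        have h1 := pow_sub_pow_le (x := w) (y := w - 2 * D) (by simp only [w]; linarith)
          (by linarith [show (0 : ℝ) ≤ D by positivity]) n
        have h2 := hbound (2 * n) (by positivity) (by nlinarith)
        linarith
      · have hDR' : (R : ℝ) ≤ D := by exact_mod_cast (not_le.mp hDR).le
        have h2 := hbound 3 (by positivity) (by nlinarith)
        have h3 : w ≤ D * 3 := by simp only [w]; linarith
        have h4 : w ^ n ≤ w ^ (n - 1) * D * 3 := by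
          rw [hXX, mul_assoc]
          gcongr
        have h5 : 0 ≤ (idealBox K I R).card * (N : ℝ) := by positivity
        linarith
    · have h1 := pow_sub_pow_le (x := w + 2 * D) (y := w) hw.le
        (by linarith [show (0 : ℝ) ≤ D by positivity]) n
      have h3 : (w + 2 * D) ^ (n - 1) ≤ E ^ (n - 1) * w ^ (n - 1) := by
        rw [← mul_pow]
        exact pow_le_pow_left₀ (by positivity) (hDX hNY) _
      have h4 : (w + 2 * D - w) * n * (w + 2 * D) ^ (n - 1) ≤
          (2 * D) * n * (E ^ (n - 1) * w ^ (n - 1)) := by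
        rw [add_sub_cancel_left]
        gcongr
      have h2 := hbound (2 * n * E ^ (n - 1)) (by positivity) (by gcongr; norm_num)
      linarith

/-- Chebyshev's upper bound, weighted by a power. -/
theorem exists_sum_log_mul_rpow_le {s : ℝ} (hs : 0 < s) (hs1 : s ≤ 1) :
    ∃ C : ℝ, 0 ≤ C ∧ ∀ Y : ℕ, ∑ p ∈ (Finset.range (Y + 1)).filter Nat.Prime,
      Real.log p * (p : ℝ) ^ (s - 1) ≤ C * (Y : ℝ) ^ s := by
  have h2s : (2 : ℝ) ^ (-s) < 1 := Real.rpow_lt_one_of_one_lt_of_neg (by norm_num) (by linarith)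
  set C : ℝ := 4 / (1 - (2 : ℝ) ^ (-s))
  have hC : C * (1 - (2 : ℝ) ^ (-s)) = 4 := div_mul_cancel₀ _ (by linarith)
  have hC0 : 0 ≤ C := div_nonneg (by norm_num) (by linarith)
  refine ⟨C, hC0, fun Y => ?_⟩
  induction Y using Nat.strong_induction_on with
  | _ Y ih =>
  rcases Nat.eq_zero_or_pos Y with rfl | hY
  · simp only [zero_add, Finset.range_one]
    rw [Finset.filter_singleton, if_neg (by norm_num)]
    simp [hs.ne']
  have hY0 : (0 : ℝ) < Y := by exact_mod_cast hY
  have hsplit : ∑ p ∈ (Finset.range (Y + 1)).filter Nat.Prime, Real.log p * (p : ℝ) ^ (s - 1) ≤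
      ∑ p ∈ (Finset.range (Y / 2 + 1)).filter Nat.Prime, Real.log p * (p : ℝ) ^ (s - 1) +
      ∑ p ∈ (Finset.range (Y + 1)).filter Nat.Prime, Real.log p * (Y / 2 : ℝ) ^ (s - 1) := by
    rw [← Finset.sum_filter_add_sum_filter_not _ (fun p => p < Y / 2 + 1)]
    refine add_le_add (le_of_eq (Finset.sum_congr ?_ fun _ _ => rfl)) ?_
    · ext p
      simp only [Finset.mem_filter, Finset.mem_range]
      constructor
      · rintro ⟨⟨_, h1⟩, h2⟩
        exact ⟨h2, h1⟩
      · rintro ⟨h1, h2⟩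
        exact ⟨⟨by omega, h2⟩, h1⟩
    · refine (Finset.sum_le_sum fun p hp => ?_).trans
        (Finset.sum_le_sum_of_subset_of_nonneg (Finset.filter_subset _ _) fun p _ _ => ?_)
      · have hp2 : Y < 2 * p := by
          have := (Finset.mem_filter.mp hp).2
          omega
        have hp3 : (Y / 2 : ℝ) ≤ p := by
          have : (Y : ℝ) < 2 * p := by exact_mod_cast hp2
          linarith
        refine mul_le_mul_of_nonneg_left ?_ (Real.log_natCast_nonneg p)
        exact Real.rpow_le_rpow_of_nonpos (by positivity) hp3 (by linarith)
      · exact mul_nonneg (Real.log_natCast_nonneg p) (by positivity)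
  have htheta : ∑ p ∈ (Finset.range (Y + 1)).filter Nat.Prime, Real.log p ≤ 2 * Y := by
    have h1 := Chebyshev.theta_le_log4_mul_x (x := Y) (by positivity)
    rw [Chebyshev.theta_eq_sum_Icc, Nat.floor_natCast] at h1
    have h2 : Finset.Icc 0 Y = Finset.range (Y + 1) := by
      ext; simp
    rw [h2] at h1
    have h3 : Real.log 4 ≤ 2 := by
      have : Real.log 4 = 2 * Real.log 2 := by
        rw [show (4 : ℝ) = 2 ^ 2 by norm_num, Real.log_pow]; norm_num
      linarith [Real.log_two_lt_d9]
    exact h1.trans (by gcongr)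
  rw [← Finset.sum_mul] at hsplit
  have hlow := ih (Y / 2) (by omega)
  have hhalf : ((Y / 2 : ℕ) : ℝ) ^ s ≤ (Y : ℝ) ^ s * (2 : ℝ) ^ (-s) := by
    rw [Real.rpow_neg (by norm_num), ← div_eq_mul_inv, ← Real.div_rpow hY0.le (by norm_num)]
    exact Real.rpow_le_rpow (by positivity) Nat.cast_div_le hs.le
  have hhi : 2 * (Y : ℝ) * (Y / 2 : ℝ) ^ (s - 1) ≤ 4 * (Y : ℝ) ^ s := by
    have h1 : 2 * (Y : ℝ) * (Y / 2 : ℝ) ^ (s - 1) = 4 * (Y / 2 : ℝ) ^ s := by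
      rw [Real.rpow_sub_one (by positivity)]
      field_simp
      ring
    rw [h1]
    gcongr
    linarith
  calc _ ≤ _ := hsplit
    _ ≤ C * ((Y : ℝ) ^ s * (2 : ℝ) ^ (-s)) + 2 * (Y : ℝ) * (Y / 2 : ℝ) ^ (s - 1) := by
        gcongr
        exact hlow.trans (by gcongr)
    _ ≤ C * ((Y : ℝ) ^ s * (2 : ℝ) ^ (-s)) + C * (1 - (2 : ℝ) ^ (-s)) * (Y : ℝ) ^ s := by
        rw [hC]
        gcongr
    _ = C * (Y : ℝ) ^ s := by ring

end IdealFactorization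

section PrimeIdealSums

variable {K : Type*} [Field K] [NumberField K]

theorem sum_inv_pow_le {x : ℝ} (hx : 2 ≤ x) (m Y : ℕ) :
    ∑ k ∈ Finset.Icc m Y, (x ^ k)⁻¹ ≤ 2 * (x ^ m)⁻¹ := by
  have hx1 : x⁻¹ ≤ 2⁻¹ := inv_anti₀ (by norm_num) hx
  have hx0 : 0 ≤ x⁻¹ := by positivity
  have h := geom_sum_Ico_le_of_lt_one (m := m) (n := Y + 1) hx0 (by linarith)
  rw [Finset.Ico_add_one_right_eq_Icc] at h
  simp only [← inv_pow]
  refine h.trans ?_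
  rw [div_le_iff₀ (by linarith)]
  have : 0 ≤ x⁻¹ ^ m := by positivity
  nlinarith

/-- A sum over prime ideals of a function of the residue characteristic. -/
theorem sum_primeIdeals_minFac_le (Y : ℕ) {g : ℕ → ℝ} (hg : ∀ p, 0 ≤ g p) :
    ∑ P ∈ primeIdeals K Y, g P.absNorm.minFac ≤
      finrank ℚ K * ∑ p ∈ (Finset.range (Y + 1)).filter Nat.Prime, g p := by
  rw [← Finset.sum_fiberwise_of_maps_to (s := primeIdeals K Y)
    (t := (Finset.range (Y + 1)).filter Nat.Prime) (g := fun P => P.absNorm.minFac), Finset.mul_sum]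
  · refine Finset.sum_le_sum fun p _ => ?_
    rw [Finset.sum_congr rfl fun P hP => by rw [(Finset.mem_filter.mp hP).2], Finset.sum_const,
      nsmul_eq_mul]
    exact mul_le_mul_of_nonneg_right (by exact_mod_cast card_filter_minFac_le Y p) (hg p)
  · intro P hP
    obtain ⟨hPY, hP⟩ := mem_primeIdeals.mp hP
    have h2 := two_le_absNorm hP
    simp only [Finset.mem_filter, Finset.mem_range]
    exact ⟨Nat.lt_succ_of_le ((Nat.minFac_le (by omega)).trans hPY),
      (exists_absNorm_eq_minFac_pow hP).1⟩

theorem log_div_le {x y : ℝ} (hy : 1 ≤ y) (hyx : y ^ 2 ≤ x) :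
    Real.log x / x ≤ 4 * y ^ (-(3 / 2) : ℝ) := by
  have hx : 0 < x := by nlinarith
  have h1 := Real.log_le_rpow_div hx.le (ε := 1 / 4) (by norm_num)
  calc Real.log x / x ≤ (x ^ (1 / 4 : ℝ) / (1 / 4)) / x := by gcongr
    _ = 4 * x ^ (-(3 / 4) : ℝ) := by
      rw [show (-(3 / 4) : ℝ) = 1 / 4 - 1 by norm_num, Real.rpow_sub_one hx.ne']
      ring
    _ ≤ 4 * (y ^ 2) ^ (-(3 / 4) : ℝ) := by
      refine mul_le_mul_of_nonneg_left ?_ (by norm_num)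
      exact Real.rpow_le_rpow_of_nonpos (by positivity) hyx (by norm_num)
    _ = _ := by
      rw [← Real.rpow_natCast, ← Real.rpow_mul (by positivity)]
      norm_num

theorem sum_log_mul_card_le {R Y a : ℕ} {M W : ℝ} {P : Ideal (𝓞 K)} (hP : Prime P)
    (hM : ∀ I : Ideal (𝓞 K), I ≠ ⊥ → ((idealBox K I R).card - 1 : ℝ) * I.absNorm ≤ M * W)
    (hMW : 0 ≤ M * W) {y : ℝ} (hy : 1 ≤ y) (hyP : y ^ 2 ≤ (P.absNorm : ℝ) ^ a) (ha : 1 ≤ a) :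
    ∑ k ∈ Finset.Icc a Y, Real.log P.absNorm * ((idealBox K (P ^ k) R).card - 1) ≤
      8 * (M * W) * y ^ (-(3 / 2) : ℝ) := by
  have h2 : (2 : ℝ) ≤ P.absNorm := by exact_mod_cast two_le_absNorm hP
  have hlog : 0 ≤ Real.log P.absNorm := Real.log_natCast_nonneg _
  calc _ ≤ ∑ k ∈ Finset.Icc a Y, Real.log P.absNorm * (M * W) * ((P.absNorm : ℝ) ^ k)⁻¹ := by
        refine Finset.sum_le_sum fun k _ => ?_
        rw [mul_assoc]
        refine mul_le_mul_of_nonneg_left ?_ hlog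
        rw [← div_eq_mul_inv, le_div_iff₀ (by positivity)]
        have := hM (P ^ k) (pow_ne_zero k hP.ne_zero)
        rwa [map_pow, Nat.cast_pow] at this
    _ ≤ Real.log P.absNorm * (M * W) * (2 * ((P.absNorm : ℝ) ^ a)⁻¹) := by
        rw [← Finset.mul_sum]
        exact mul_le_mul_of_nonneg_left (sum_inv_pow_le h2 a Y) (by positivity)
    _ ≤ Real.log ((P.absNorm : ℝ) ^ a) * (M * W) * (2 * ((P.absNorm : ℝ) ^ a)⁻¹) := by
        gcongr
        exact le_self_pow₀ (by linarith) (by omega)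
    _ = 2 * (M * W) * (Real.log ((P.absNorm : ℝ) ^ a) / (P.absNorm : ℝ) ^ a) := by ring
    _ ≤ 2 * (M * W) * (4 * y ^ (-(3 / 2) : ℝ)) := by
        gcongr
        exact log_div_le hy hyP
    _ = _ := by ring

theorem abs_sum_log_mul_card_sub_le {B R : ℕ} {M : ℝ} (hM0 : 0 ≤ M)
    (hM : ∀ I : Ideal (𝓞 K), I ≠ ⊥ →
      ((idealBox K I R).card - 1 : ℝ) * I.absNorm ≤ M * (2 * R + 1 : ℝ) ^ finrank ℚ K ∧
      (I.absNorm ≤ (B * R) ^ finrank ℚ K →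
        |(idealBox K I R).card * (I.absNorm : ℝ) - (2 * R + 1 : ℝ) ^ finrank ℚ K| ≤
          M * (2 * R + 1 : ℝ) ^ (finrank ℚ K - 1) * (I.absNorm : ℝ) ^ (1 / (finrank ℚ K : ℝ))))
    {P : Ideal (𝓞 K)} (hP : P ∈ primeIdeals K ((B * R) ^ finrank ℚ K)) :
    |∑ k ∈ Finset.Icc 1 ((B * R) ^ finrank ℚ K),
        Real.log P.absNorm * ((idealBox K (P ^ k) R).card - 1) -
      (2 * R + 1 : ℝ) ^ finrank ℚ K *
        if P.absNorm.Prime then Real.log P.absNorm / P.absNorm else 0| ≤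
    8 * (M * (2 * R + 1 : ℝ) ^ finrank ℚ K) * (P.absNorm.minFac : ℝ) ^ (-(3 / 2) : ℝ) +
      (M + B ^ (finrank ℚ K - 1)) * (2 * R + 1 : ℝ) ^ (finrank ℚ K - 1) *
      (Real.log P.absNorm.minFac * (P.absNorm.minFac : ℝ) ^ (1 / (finrank ℚ K : ℝ) - 1)) := by
  set n := finrank ℚ K
  have hn : 0 < n := finrank_pos
  have hn' : (n : ℝ) ≠ 0 := by positivity
  set w : ℝ := 2 * R + 1
  have hw : 0 < w := by positivity
  obtain ⟨hPY, hP⟩ := mem_primeIdeals.mp hP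
  obtain ⟨hp, -, f, hf, hNf⟩ := exists_absNorm_eq_minFac_pow hP
  set p := P.absNorm.minFac
  have hp1 : (1 : ℝ) ≤ p := by exact_mod_cast hp.one_le
  set N := P.absNorm
  have hN2 : 2 ≤ N := two_le_absNorm hP
  have hN0 : (0 : ℝ) < N := by positivity
  have hlog : 0 ≤ Real.log N := Real.log_natCast_nonneg _
  have hterm : ∀ k, 0 ≤ Real.log N * ((idealBox K (P ^ k) R).card - 1) := by
    intro k
    have : (1 : ℝ) ≤ (idealBox K (P ^ k) R).card := by exact_mod_cast one_le_card_idealBox _ _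
    exact mul_nonneg hlog (by linarith)
  have hMW : 0 ≤ M * w ^ n := by positivity
  have hlogp : 0 ≤ Real.log p := Real.log_natCast_nonneg _
  by_cases hNp : N.Prime
  · have hpN : p = N := hNp.minFac_eq
    rw [if_pos hNp]
    have hYpos : 1 ≤ (B * R) ^ n := le_trans (by omega) hPY
    rw [← Finset.add_sum_Ioc_eq_sum_Icc hYpos, ← Finset.Icc_succ_left_eq_Ioc]
    have h2 := sum_log_mul_card_le (R := R) (Y := (B * R) ^ n) (a := 2) hP
      (fun I hI => (hM I hI).1) hMW hp1 (by rw [hpN]) (by norm_num)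
    have h2' := Finset.sum_nonneg fun k (_ : k ∈ Finset.Icc (Order.succ 1) ((B * R) ^ n)) => hterm k
    have h1 := (hM P hP.ne_zero).2 hPY
    have hsub : |Real.log N * ((idealBox K (P ^ 1) R).card - 1) - w ^ n * (Real.log N / N)| ≤
        (M + B ^ (n - 1)) * w ^ (n - 1) * (Real.log p * (p : ℝ) ^ (1 / (n : ℝ) - 1)) := by
      have hroot : (N : ℝ) ^ (1 - 1 / (n : ℝ)) ≤ (B * w) ^ (n - 1) := by
        calc (N : ℝ) ^ (1 - 1 / (n : ℝ)) ≤ ((B * R : ℝ) ^ n) ^ (1 - 1 / (n : ℝ)) := by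
              refine Real.rpow_le_rpow hN0.le (by exact_mod_cast hPY) ?_
              rw [sub_nonneg, div_le_one (by positivity)]
              exact_mod_cast hn
          _ = (B * R : ℝ) ^ (n - 1) := by
              rw [← Real.rpow_natCast, ← Real.rpow_mul (by positivity), mul_sub, mul_one,
                mul_one_div_cancel hn', ← Real.rpow_natCast, Nat.cast_sub hn, Nat.cast_one]
          _ ≤ _ := by
              gcongr
              simp only [w]
              linarith [show (0 : ℝ) ≤ R by positivity]
      have hone : (1 : ℝ) ≤ B ^ (n - 1) * w ^ (n - 1) * (N : ℝ) ^ (1 / (n : ℝ) - 1) := by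
        rw [← mul_pow, ← neg_sub, Real.rpow_neg hN0.le, ← div_eq_mul_inv,
          one_le_div (by positivity)]
        exact hroot
      rw [hpN, pow_one, show Real.log N * ((idealBox K P R).card - 1 : ℝ) - w ^ n * (Real.log N / N) =
        Real.log N * (((idealBox K P R).card * (N : ℝ) - w ^ n) / N - 1) by field_simp; ring,
        abs_mul, abs_of_nonneg hlog]
      calc _ ≤ Real.log N * (M * w ^ (n - 1) * (N : ℝ) ^ (1 / (n : ℝ)) / N +
            B ^ (n - 1) * w ^ (n - 1) * (N : ℝ) ^ (1 / (n : ℝ) - 1)) := by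
            refine mul_le_mul_of_nonneg_left ((abs_sub _ _).trans ?_) hlog
            rw [abs_div, abs_of_pos hN0, abs_one]
            gcongr
        _ = _ := by
            rw [Real.rpow_sub_one hN0.ne']
            ring
    rw [add_sub_right_comm]
    refine (abs_add_le _ _).trans ?_
    rw [add_comm]
    refine add_le_add ?_ hsub
    rw [abs_of_nonneg h2']
    exact h2
  · rw [if_neg hNp, mul_zero, sub_zero, abs_of_nonneg (Finset.sum_nonneg fun k _ => hterm k)]
    have hf2 : 2 ≤ f := by
      by_contra h
      obtain rfl : f = 1 := by omega
      rw [pow_one] at hNf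
      exact hNp (hNf ▸ hp)
    have h2 := sum_log_mul_card_le (R := R) (Y := (B * R) ^ n) (a := 1) hP
      (fun I hI => (hM I hI).1) hMW hp1 (by
        rw [pow_one]
        calc (p : ℝ) ^ 2 ≤ (p : ℝ) ^ f := by gcongr
          _ = N := by exact_mod_cast hNf.symm) le_rfl
    refine h2.trans (le_add_of_nonneg_right (by positivity))

end PrimeIdealSums

section Mertens

variable (K : Type*) [Field K] [NumberField K]

/-- The number of ideals of norm `m`. -/
noncomputable def idealCount (m : ℕ) : ℕ :=
  (Ideal.finite_setOfPred_absNorm_eq (S := 𝓞 K) m).toFinset.card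

theorem primeIdeals_filter_absNorm_eq {Y p : ℕ} (hp : p.Prime) (hpY : p ≤ Y) :
    ((primeIdeals K Y).filter fun P => P.absNorm = p) =
      (Ideal.finite_setOfPred_absNorm_eq (S := 𝓞 K) p).toFinset := by
  ext P
  simp only [Finset.mem_filter, mem_primeIdeals, Set.Finite.mem_toFinset, Set.mem_ofPred_eq]
  refine ⟨fun h => h.2, fun h => ⟨⟨h ▸ hpY, ?_⟩, h⟩⟩
  refine Ideal.prime_of_isPrime (fun hbot => ?_)
    (Ideal.isPrime_of_irreducible_absNorm (h ▸ hp.prime.irreducible))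
  rw [hbot, Ideal.absNorm_bot] at h
  exact hp.ne_zero h.symm

theorem idealCount_le {p : ℕ} (hp : p.Prime) : idealCount K p ≤ finrank ℚ K := by
  rw [idealCount, ← primeIdeals_filter_absNorm_eq K hp le_rfl]
  refine (Finset.card_le_card fun P hP => ?_).trans (card_filter_minFac_le p p)
  obtain ⟨h1, h2⟩ := Finset.mem_filter.mp hP
  exact Finset.mem_filter.mpr ⟨h1, by rw [h2, hp.minFac_eq]⟩

theorem sum_primeIdeals_prime_norm (Y : ℕ) :
    ∑ P ∈ primeIdeals K Y, (if P.absNorm.Prime then Real.log P.absNorm / P.absNorm else 0) =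
      ∑ p ∈ (Finset.range (Y + 1)).filter Nat.Prime, (idealCount K p : ℝ) * (Real.log p / p) := by
  rw [← Finset.sum_filter, ← Finset.sum_fiberwise_of_maps_to
    (t := (Finset.range (Y + 1)).filter Nat.Prime) (g := fun P => P.absNorm)]
  · refine Finset.sum_congr rfl fun p hp => ?_
    obtain ⟨hpY, hp⟩ := Finset.mem_filter.mp hp
    have hpY : p ≤ Y := Nat.lt_succ_iff.mp (Finset.mem_range.mp hpY)
    rw [Finset.sum_congr rfl fun P hP => by rw [(Finset.mem_filter.mp hP).2], Finset.sum_const,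
      nsmul_eq_mul, idealCount, ← primeIdeals_filter_absNorm_eq K hp hpY, Finset.filter_filter]
    congr 4
    ext P
    exact ⟨fun h => h.2, fun h => ⟨h ▸ hp, h⟩⟩
  · intro P hP
    obtain ⟨h1, h2⟩ := Finset.mem_filter.mp hP
    exact Finset.mem_filter.mpr
      ⟨Finset.mem_range.mpr (Nat.lt_succ_of_le (mem_primeIdeals.mp h1).1), h2⟩

/-- Mertens' theorem for degree one primes along the sequence `(B R) ^ n`. -/
theorem exists_abs_sum_idealCount_le : ∃ B : ℕ, 1 ≤ B ∧ ∃ C : ℝ, ∀ R : ℕ, 1 ≤ R →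
    |∑ p ∈ (Finset.range ((B * R) ^ finrank ℚ K + 1)).filter Nat.Prime,
      (idealCount K p : ℝ) * (Real.log p / p) - finrank ℚ K * Real.log R| ≤ C := by
  obtain ⟨B, hB1, hB⟩ := exists_natAbs_norm_le K
  obtain ⟨M, hM0, hM⟩ := exists_card_idealBox_bounds K hB1 hB
  obtain ⟨C, hC⟩ := exists_abs_sum_log_norm_le K
  set n := finrank ℚ K
  have hn : 0 < n := finrank_pos
  have hn1 : (1 : ℝ) ≤ n := by exact_mod_cast hn
  obtain ⟨C', hC'0, hC'⟩ := exists_sum_log_mul_rpow_le (s := 1 / n) (by positivity)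
    ((div_le_one (by positivity)).mpr hn1)
  have hsum : Summable fun p : ℕ => (p : ℝ) ^ (-(3 / 2) : ℝ) :=
    Real.summable_nat_rpow.mpr (by norm_num)
  set Z := ∑' p : ℕ, (p : ℝ) ^ (-(3 / 2) : ℝ)
  refine ⟨B, hB1, C + n * (8 * M * Z + (M + B ^ (n - 1)) * (C' * B)), fun R hR => ?_⟩
  have hCR := hC R hR
  rw [sum_log_norm_eq (hB R)] at hCR
  rw [← sum_primeIdeals_prime_norm]
  set w : ℝ := 2 * R + 1
  set Y := (B * R) ^ n
  have hw : 0 < w := by positivity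
  have hwn : w ^ n = w ^ (n - 1) * w := by rw [← pow_succ, Nat.sub_add_cancel hn]
  have hdiff : |∑ P ∈ primeIdeals K Y, ∑ k ∈ Finset.Icc 1 Y,
        Real.log P.absNorm * ((idealBox K (P ^ k) R).card - 1) - w ^ n * ∑ P ∈ primeIdeals K Y,
        (if P.absNorm.Prime then Real.log P.absNorm / P.absNorm else 0)| ≤
      n * (8 * M * Z + (M + B ^ (n - 1)) * (C' * B)) * w ^ n := by
    rw [Finset.mul_sum, ← Finset.sum_sub_distrib]
    refine (Finset.abs_sum_le_sum_abs _ _).trans ((Finset.sum_le_sum fun P hP =>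
      abs_sum_log_mul_card_sub_le hM0 (fun I hI => hM I R hI hR) hP).trans ?_)
    refine (sum_primeIdeals_minFac_le Y (g := fun p => 8 * (M * w ^ n) * (p : ℝ) ^ (-(3 / 2) : ℝ) +
      (M + B ^ (n - 1)) * w ^ (n - 1) * (Real.log p * (p : ℝ) ^ (1 / (n : ℝ) - 1)))
      fun p => ?_).trans ?_
    · have := Real.log_natCast_nonneg p
      positivity
    · rw [Finset.sum_add_distrib, ← Finset.mul_sum, ← Finset.mul_sum]
      have h1 : ∑ p ∈ (Finset.range (Y + 1)).filter Nat.Prime, (p : ℝ) ^ (-(3 / 2) : ℝ) ≤ Z :=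
        hsum.sum_le_tsum _ fun p _ => by positivity
      have h2 : ∑ p ∈ (Finset.range (Y + 1)).filter Nat.Prime,
          Real.log p * (p : ℝ) ^ (1 / (n : ℝ) - 1) ≤ C' * (B * w) := by
        refine (hC' Y).trans (mul_le_mul_of_nonneg_left ?_ hC'0)
        simp only [Y]
        push_cast
        rw [← Real.rpow_natCast, ← Real.rpow_mul (by positivity), mul_one_div_cancel (by positivity),
          Real.rpow_one]
        gcongr
        simp only [w]
        linarith [show (0 : ℝ) ≤ R by positivity]
      calc _ ≤ n * (8 * (M * w ^ n) * Z + (M + B ^ (n - 1)) * w ^ (n - 1) * (C' * (B * w))) := by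
            gcongr
        _ = _ := by
            rw [hwn]
            ring
  refine le_of_mul_le_mul_left ?_ (pow_pos hw n)
  rw [← abs_of_pos (pow_pos hw n), ← abs_mul, abs_of_pos (pow_pos hw n), mul_sub]
  rw [abs_le] at hdiff hCR ⊢
  constructor <;> linarith [hdiff.1, hdiff.2, hCR.1, hCR.2]

/-- Mertens' theorem for the prime ideals of degree one. -/
theorem exists_abs_sum_idealCount_sub_log_le : ∃ C : ℝ, ∀ x : ℝ, 2 ≤ x →
    |∑ p ∈ (Finset.range (⌊x⌋₊ + 1)).filter Nat.Prime,
      (idealCount K p : ℝ) * (Real.log p / p) - Real.log x| ≤ C := by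
  obtain ⟨B, hB1, C, hC⟩ := exists_abs_sum_idealCount_le K
  set n := finrank ℚ K
  have hn : 0 < n := finrank_pos
  set φ : ℕ → ℝ := fun Y => ∑ p ∈ (Finset.range (Y + 1)).filter Nat.Prime,
    (idealCount K p : ℝ) * (Real.log p / p)
  have hφ0 : ∀ p : ℕ, 0 ≤ (idealCount K p : ℝ) * (Real.log p / p) := fun p => by
    have := Real.log_natCast_nonneg p
    positivity
  have hφ : Monotone φ := fun a b hab =>
    Finset.sum_le_sum_of_subset_of_nonneg
      (Finset.filter_subset_filter _ (Finset.range_subset_range.mpr (by omega)))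
      fun p _ _ => hφ0 p
  have hB0 : (0 : ℝ) < B := by exact_mod_cast hB1
  have hlogB : 0 ≤ n * Real.log B := mul_nonneg (by positivity) (Real.log_natCast_nonneg B)
  have hlog2 : 0 ≤ n * Real.log 2 := by positivity
  refine ⟨C + n * Real.log 2 + n * Real.log B, fun x hx => ?_⟩
  change |φ ⌊x⌋₊ - Real.log x| ≤ _
  set r : ℝ := x ^ (1 / (n : ℝ))
  have hrn : r ^ n = x := by
    rw [← Real.rpow_natCast, ← Real.rpow_mul (by positivity), one_div_mul_cancel (by positivity),
      Real.rpow_one]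
  set R := ⌊r / B⌋₊
  have hr0 : 0 ≤ r := by positivity
  have hlow : (B * R : ℝ) ^ n ≤ x := by
    rw [← hrn]
    refine pow_le_pow_left₀ (by positivity) ?_ n
    rw [mul_comm, ← le_div_iff₀ hB0]
    exact Nat.floor_le (by positivity)
  have hhigh : x ≤ (B * (R + 1 : ℕ) : ℝ) ^ n := by
    rw [← hrn]
    refine pow_le_pow_left₀ hr0 ?_ n
    rw [mul_comm, ← div_le_iff₀ hB0]
    push_cast
    exact (Nat.lt_floor_add_one _).le
  have hφhigh : φ ⌊x⌋₊ ≤ φ ((B * (R + 1)) ^ n) :=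
    hφ (Nat.floor_le_of_le (by exact_mod_cast hhigh))
  have hC1 := abs_le.mp (hC (R + 1) (by omega))
  have hloghigh := Real.log_le_log (by linarith) hhigh
  rw [Real.log_pow, Real.log_mul (by positivity) (by positivity), mul_add] at hloghigh
  have hlogx : 0 ≤ Real.log x := Real.log_nonneg (by linarith)
  rcases Nat.eq_zero_or_pos R with hR | hR
  · have h0 : 0 ≤ φ ⌊x⌋₊ := Finset.sum_nonneg fun p _ => hφ0 p
    simp only [hR, zero_add, Nat.cast_one, Real.log_one, mul_zero, add_zero] at hC1 hloghigh hφhigh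
    have h3 : φ ((B * 1) ^ n) ≤ C := by linarith [hC1.2]
    rw [abs_le]
    constructor <;> linarith
  · have hC2 := abs_le.mp (hC R hR)
    have hφlow : φ ((B * R) ^ n) ≤ φ ⌊x⌋₊ := hφ (Nat.le_floor (by exact_mod_cast hlow))
    have hR0 : (0 : ℝ) < R := by exact_mod_cast hR
    have hloglow := Real.log_le_log (by positivity) hlow
    rw [Real.log_pow, Real.log_mul (by positivity) (by positivity), mul_add] at hloglow
    have hstep : n * Real.log (R + 1 : ℕ) ≤ n * Real.log R + n * Real.log 2 := by
      rw [← mul_add, ← Real.log_mul (by positivity) (by positivity)]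
      refine mul_le_mul_of_nonneg_left (Real.log_le_log (by positivity) ?_) (by positivity)
      have : (1 : ℝ) ≤ R := by exact_mod_cast hR
      push_cast
      linarith
    have h1 : φ ((B * (R + 1)) ^ n) ≤ C + n * Real.log (R + 1 : ℕ) := by linarith [hC1.2]
    have h2 : n * Real.log R - C ≤ φ ((B * R) ^ n) := by linarith [hC2.1]
    rw [abs_le]
    constructor <;> linarith

end Mertens

section RootCounting

theorem exponent_ne_zero {K : Type*} [Field K] [NumberField K] {θ : 𝓞 K}
    (hθ : Algebra.adjoin ℚ {(θ : K)} = ⊤) : RingOfIntegers.exponent θ ≠ 0 := by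
  have hint : IsIntegral ℤ (θ : K) := θ.isIntegral_coe
  set pb : PowerBasis ℚ K := PowerBasis.ofAdjoinEqTop' (hint.tower_top (A := ℚ)) hθ
  have hgen : pb.gen = θ := PowerBasis.ofAdjoinEqTop'_gen _ _
  have hdisc : IsIntegral ℤ (Algebra.discr ℚ pb.basis) :=
    Algebra.discr_isIntegral ℚ fun i => by
      rw [pb.basis_eq_pow, hgen]
      exact hint.pow _
  obtain ⟨d, hd⟩ := IsIntegrallyClosed.isIntegral_iff.mp hdisc
  have hd0 : d ≠ 0 := by
    rintro rfl
    exact Algebra.discr_not_zero_of_basis ℚ pb.basis (by simpa using hd.symm)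
  have hmem : (d : 𝓞 K) ∈ conductor ℤ θ := by
    intro b
    have h := Algebra.discr_mul_isIntegral_mem_adjoin (R := ℤ) ℚ (B := pb) (hgen ▸ hint)
      b.isIntegral_coe
    rw [hgen, ← hd] at h
    have hmap : (Algebra.adjoin ℤ {θ}).map (IsScalarTower.toAlgHom ℤ (𝓞 K) K) =
        Algebra.adjoin ℤ {(θ : K)} := by
      rw [AlgHom.map_adjoin_singleton]
      rfl
    rw [← hmap] at h
    obtain ⟨y, hy, hyb⟩ := h
    have : y = d * b := by
      apply RingOfIntegers.coe_injective
      rw [map_mul]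
      refine hyb.trans ?_
      rw [algebraMap_smul, zsmul_eq_mul]
      simp
    exact this ▸ hy
  rw [RingOfIntegers.exponent, Ne, Ideal.absNorm_eq_zero_iff]
  intro hbot
  have : d ∈ Ideal.under ℤ (conductor ℤ θ) := by
    rw [Ideal.mem_comap]
    simpa using hmem
  rw [hbot] at this
  exact hd0 (by simpa using this)

/-- By the Kummer-Dedekind theorem, prime ideals of norm `p` correspond to roots modulo `p`. -/
theorem idealCount_eq_card_roots {K : Type*} [Field K] [NumberField K] {θ : 𝓞 K} {p : ℕ}
    [Fact p.Prime] (hp : ¬ p ∣ RingOfIntegers.exponent θ) :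
    idealCount K p = ((minpoly ℤ θ).map (Int.castRingHom (ZMod p))).roots.toFinset.card := by
  classical
  set g := (minpoly ℤ θ).map (Int.castRingHom (ZMod p)) with hg
  have hg0 : g ≠ 0 := Polynomial.map_monic_ne_zero (minpoly.monic θ.isIntegral)
  have hpp : p.Prime := Fact.out
  set e := NumberField.Ideal.primesOverSpanEquivMonicFactorsMod hp
  have hnorm : ∀ (Q : (ZMod p)[X]) (hQ : Q ∈ RingOfIntegers.monicFactorsMod θ p),
      (e.symm ⟨Q, hQ⟩ : Ideal (𝓞 K)).absNorm = p ^ Q.natDegree := by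
    intro Q hQ
    have := (e.symm ⟨Q, hQ⟩).2.1
    have := (e.symm ⟨Q, hQ⟩).2.2
    have h := Ideal.absNorm_pow_inertiaDeg (Ideal.span {(p : ℤ)}) (e.symm ⟨Q, hQ⟩ : Ideal (𝓞 K))
    rw [NumberField.Ideal.inertiaDeg_primesOverSpanEquivMonicFactorsMod_symm_apply' hp hQ] at h
    rw [← h]
    simp
  have hmem : ∀ a : ZMod p, a ∈ g.roots.toFinset ↔
      X - C a ∈ RingOfIntegers.monicFactorsMod θ p := by
    intro a
    rw [Multiset.mem_toFinset, Polynomial.mem_roots hg0, ← Polynomial.dvd_iff_isRoot,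
      Multiset.mem_toFinset, Polynomial.mem_normalizedFactors_iff hg0]
    exact ⟨fun h => ⟨irreducible_X_sub_C a, monic_X_sub_C a, h⟩, fun h => h.2.2⟩
  symm
  refine Finset.card_bij (fun a ha => (e.symm ⟨X - C a, (hmem a).mp ha⟩ : Ideal (𝓞 K))) ?_ ?_ ?_
  · intro a ha
    simp [hnorm]
  · intro a ha b hb hab
    have := e.symm.injective (Subtype.ext hab)
    simpa using congrArg Subtype.val this
  · intro P hP
    have hP : P.absNorm = p := by simpa using hP
    have hprime : P.IsPrime := Ideal.isPrime_of_irreducible_absNorm (hP ▸ hpp.prime.irreducible)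
    have hover : P.LiesOver (Ideal.span {(p : ℤ)}) := by
      have hpP : (p : ℤ) ∈ P.under ℤ := by
        rw [Ideal.mem_comap]
        simpa [hP] using Ideal.absNorm_mem P
      have hmax : (Ideal.span {(p : ℤ)}).IsMaximal := Int.ideal_span_isMaximal_of_prime p
      exact ⟨hmax.eq_of_le (Ideal.IsPrime.under ℤ P).ne_top
        ((Ideal.span_singleton_le_iff_mem _).mpr hpP)⟩
    obtain ⟨⟨Q, hQ⟩, hQe⟩ := e.symm.surjective ⟨P, hprime, hover⟩
    have h1 := hnorm Q hQ
    rw [hQe, hP] at h1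
    have hdeg : Q.natDegree = 1 := by
      have : p ^ 1 = p ^ Q.natDegree := by rw [pow_one, ← h1]
      exact (Nat.pow_right_injective hpp.two_le this).symm
    have hmonic := ((Polynomial.mem_normalizedFactors_iff hg0).mp (Multiset.mem_toFinset.mp hQ)).2.1
    have hQX : Q = X - C (-Q.coeff 0) := by
      rw [map_neg, sub_neg_eq_add]
      exact hmonic.eq_X_add_C hdeg
    refine ⟨-Q.coeff 0, (hmem _).mpr (hQX ▸ hQ), ?_⟩
    have : e.symm ⟨Q, hQ⟩ = e.symm ⟨X - C (-Q.coeff 0), hQX ▸ hQ⟩ := by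
      congr 2
    rw [← this, hQe]

/-- Away from finitely many primes, `nu1 f p` is the number of roots of `f` modulo `p`. -/
theorem nu1_eq_card_roots {f : ℤ[X]} {p : ℕ} [Fact p.Prime]
    (h0 : ¬ (p : ℤ) ∣ f.coeff 0) :
    nu1 f p = (f.map (Int.castRingHom (ZMod p))).roots.toFinset.card := by
  have hpp : p.Prime := Fact.out
  have hf0 : f.map (Int.castRingHom (ZMod p)) ≠ 0 := by
    intro h
    have := congrArg (fun g => coeff g 0) h
    simp only [coeff_map, coeff_zero, eq_intCast] at this
    exact h0 ((ZMod.intCast_zmod_eq_zero_iff_dvd _ _).mp this)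
  have hev : ∀ a : ℤ, (f.map (Int.castRingHom (ZMod p))).IsRoot (a : ZMod p) ↔
      (p : ℤ) ∣ f.eval a := by
    intro a
    rw [IsRoot.def, ← eq_intCast (Int.castRingHom (ZMod p)), eval_map_apply, eq_intCast,
      ZMod.intCast_zmod_eq_zero_iff_dvd]
  refine Finset.card_bij (fun a _ => (a : ZMod p)) ?_ ?_ ?_
  · intro a ha
    rw [Multiset.mem_toFinset, mem_roots hf0, ← Int.cast_natCast, hev]
    exact (Finset.mem_filter.mp ha).2.2
  · intro a ha b hb hab
    have ha := Finset.mem_range.mp (Finset.mem_filter.mp ha).1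
    have hb := Finset.mem_range.mp (Finset.mem_filter.mp hb).1
    have := congrArg ZMod.val hab
    rwa [ZMod.val_cast_of_lt ha, ZMod.val_cast_of_lt hb] at this
  · intro b hb
    have hcast : ((b.val : ℤ) : ZMod p) = b := by simp
    rw [Multiset.mem_toFinset, mem_roots hf0, ← hcast, hev] at hb
    refine ⟨b.val, Finset.mem_filter.mpr ⟨Finset.mem_range.mpr b.val_lt, ?_, hb⟩, by simp⟩
    rw [← Nat.coprime_iff_gcd_eq_one, Nat.coprime_comm, hpp.coprime_iff_not_dvd]
    intro hdvd
    refine h0 ((Int.dvd_iff_dvd_of_dvd_sub ?_).mp hb)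
    have h1 := sub_dvd_eval_sub (b.val : ℤ) 0 f
    rw [sub_zero, ← coeff_zero_eq_eval_zero] at h1
    exact (Int.natCast_dvd_natCast.mpr hdvd).trans h1

theorem card_roots_integralNormalization {F : Type*} [Field F] [DecidableEq F] {f : ℤ[X]}
    (φ : ℤ →+* F) (hdeg : 1 ≤ f.natDegree) (hc : φ f.leadingCoeff ≠ 0) :
    (f.integralNormalization.map φ).roots.toFinset.card = (f.map φ).roots.toFinset.card := by
  have hf : f ≠ 0 := by
    rintro rfl
    simp at hdeg
  have hf0 : f.map φ ≠ 0 := fun h => hc (by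
    have := congrArg (fun g => coeff g f.natDegree) h
    simpa using this)
  have hg0 : f.integralNormalization.map φ ≠ 0 :=
    map_monic_ne_zero (monic_integralNormalization hf)
  have hiff : ∀ x, (f.integralNormalization.map φ).IsRoot (φ f.leadingCoeff * x) ↔
      (f.map φ).IsRoot x := by
    intro x
    rw [IsRoot.def, IsRoot.def, eval_map, eval_map,
      integralNormalization_eval₂_leadingCoeff_mul hdeg, mul_eq_zero,
      or_iff_right (pow_ne_zero _ hc)]
  symm
  refine Finset.card_bij (fun x _ => φ f.leadingCoeff * x) ?_ ?_ ?_
  · intro x hx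
    rw [Multiset.mem_toFinset, mem_roots hg0, hiff]
    rwa [Multiset.mem_toFinset, mem_roots hf0] at hx
  · intro x _ y _ hxy
    exact mul_left_cancel₀ hc hxy
  · intro y hy
    refine ⟨(φ f.leadingCoeff)⁻¹ * y, ?_, mul_inv_cancel_left₀ hc y⟩
    rw [Multiset.mem_toFinset, mem_roots hf0, ← hiff, mul_inv_cancel_left₀ hc]
    rwa [Multiset.mem_toFinset, mem_roots hg0] at hy

/-- For all but finitely many primes `p`, `nu1 f p` counts the prime ideals of norm `p` in the
number field defined by `f`. -/
theorem exists_nu1_eq_idealCount {f : ℤ[X]} (hirr : Irreducible f) (hdeg : 1 ≤ f.natDegree)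
    (hconst : f.coeff 0 ≠ 0) : ∃ (K : Type) (_ : Field K) (_ : NumberField K) (m : ℕ), m ≠ 0 ∧
      ∀ p : ℕ, p.Prime → ¬ p ∣ m → nu1 f p = idealCount K p := by
  set F : ℚ[X] := f.map (Int.castRingHom ℚ) with hF
  have hprim : f.IsPrimitive := hirr.isPrimitive (by omega)
  have hFirr : Irreducible F := (IsPrimitive.Int.irreducible_iff_irreducible_map_cast hprim).mp hirr
  have : Fact (Irreducible F) := ⟨hFirr⟩
  set K := AdjoinRoot F
  have hF0 : F ≠ 0 := hFirr.ne_zero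
  set pb := AdjoinRoot.powerBasis hF0
  have : FiniteDimensional ℚ K := pb.finite
  have hNF : NumberField K := ⟨⟩
  set c := f.leadingCoeff with hc
  have hc0 : c ≠ 0 := leadingCoeff_ne_zero.mpr hirr.ne_zero
  set α : K := AdjoinRoot.root F
  have hα : aeval α f = 0 := by
    have h := AdjoinRoot.aeval_eq (f := F) F
    rw [AdjoinRoot.mk_self, hF] at h
    rw [← h]
    exact (aeval_map_algebraMap ℚ α f).symm
  have hroot : aeval ((c : K) * α) f.integralNormalization = 0 := by
    have := integralNormalization_aeval_eq_zero hα fun x hx => by simpa using hx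
    simpa using this
  have hmonic := monic_integralNormalization hirr.ne_zero
  have hint : IsIntegral ℤ ((c : K) * α) := ⟨_, hmonic, hroot⟩
  set θ : 𝓞 K := ⟨(c : K) * α, hint⟩
  have hθ : (θ : K) = c * α := rfl
  have hcK : (c : K) ≠ 0 := Int.cast_ne_zero.mpr hc0
  have hadj : Algebra.adjoin ℚ {(θ : K)} = ⊤ := by
    refine PowerBasis.adjoin_eq_top_of_gen_mem_adjoin (B := pb) ?_
    have h1 := Subalgebra.smul_mem _ (Algebra.self_mem_adjoin_singleton ℚ (θ : K)) (c : ℚ)⁻¹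
    have h2 : (c : ℚ)⁻¹ • (θ : K) = pb.gen := by
      rw [Algebra.smul_def, hθ, map_inv₀]
      simp only [map_intCast]
      rw [inv_mul_cancel_left₀ hcK]
      exact (AdjoinRoot.powerBasis_gen hF0).symm
    rwa [h2] at h1
  have hmin : minpoly ℤ θ = f.integralNormalization := by
    have hroot' : aeval θ f.integralNormalization = 0 := by
      apply RingOfIntegers.coe_injective
      rw [← aeval_algebraMap_apply, map_zero]
      exact hroot
    refine (eq_of_monic_of_dvd_of_natDegree_le (minpoly.monic θ.isIntegral) hmonic
      (minpoly.isIntegrallyClosed_dvd θ.isIntegral hroot') ?_).symm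
    rw [natDegree_integralNormalization]
    set G : ℚ[X] := ((minpoly ℤ θ).map (Int.castRingHom ℚ)).comp (C (c : ℚ) * X)
    have hG : F ∣ G := by
      rw [← AdjoinRoot.mk_eq_zero, ← AdjoinRoot.aeval_eq, aeval_comp]
      have h1 : aeval (AdjoinRoot.root F) (C (c : ℚ) * X) = (θ : K) := by
        rw [map_mul, aeval_C, aeval_X, hθ, map_intCast]
      refine (congrArg (fun z => aeval z ((minpoly ℤ θ).map (Int.castRingHom ℚ))) h1).trans ?_
      refine (aeval_map_algebraMap ℚ (θ : K) (minpoly ℤ θ)).trans ?_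
      rw [aeval_algebraMap_apply, minpoly.aeval, map_zero]
    have hlin : (C (c : ℚ) * X).natDegree = 1 :=
      natDegree_C_mul_X _ (Int.cast_ne_zero.mpr hc0)
    have hGdeg : G.natDegree = (minpoly ℤ θ).natDegree := by
      rw [natDegree_comp, hlin, mul_one, (minpoly.monic θ.isIntegral).natDegree_map]
    have hG0 : G ≠ 0 := by
      intro h
      have := minpoly.natDegree_pos θ.isIntegral
      rw [h, natDegree_zero] at hGdeg
      omega
    have := natDegree_le_of_dvd hG hG0
    rw [hGdeg] at this
    exact (natDegree_map_eq_of_injective (RingHom.injective_int (Int.castRingHom ℚ)) f).ge.trans this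
  refine ⟨K, inferInstance, hNF, (c * f.coeff 0).natAbs * RingOfIntegers.exponent θ, ?_, ?_⟩
  · exact mul_ne_zero (Int.natAbs_ne_zero.mpr (mul_ne_zero hc0 hconst)) (exponent_ne_zero hadj)
  · intro p hp hpm
    have : Fact p.Prime := ⟨hp⟩
    have hpe : ¬ p ∣ RingOfIntegers.exponent θ := fun h => hpm (h.mul_left _)
    have hpc : ¬ (p : ℤ) ∣ c := fun h =>
      hpm (Dvd.dvd.mul_right (Int.natCast_dvd.mp (h.mul_right _)) _)
    have hp0 : ¬ (p : ℤ) ∣ f.coeff 0 := fun h =>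
      hpm (Dvd.dvd.mul_right (Int.natCast_dvd.mp (h.mul_left _)) _)
    rw [nu1_eq_card_roots hp0, idealCount_eq_card_roots hpe, hmin]
    refine (card_roots_integralNormalization _ hdeg ?_).symm
    rw [eq_intCast, Ne, ZMod.intCast_zmod_eq_zero_iff_dvd]
    exact hpc

end RootCounting

theorem log_div_mul_pred_le {p : ℕ} (hp : 2 ≤ p) :
    Real.log p / (p * (p - 1)) ≤ 4 * (p : ℝ) ^ (-(3 / 2) : ℝ) := by
  have hp' : (2 : ℝ) ≤ p := by exact_mod_cast hp
  have hlog : 0 ≤ Real.log p := Real.log_natCast_nonneg p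
  refine le_trans ?_ (log_div_le (x := (p : ℝ) ^ 2) (by linarith) le_rfl)
  rw [Real.log_pow, div_le_div_iff₀ (by nlinarith) (by positivity)]
  have h : (p : ℝ) ^ 2 ≤ 2 * (p * (p - 1)) := by nlinarith
  push_cast
  nlinarith [mul_le_mul_of_nonneg_left h hlog]

theorem abs_idealCount_mul_log_sub_le {K : Type*} [Field K] [NumberField K] {p : ℕ} (hp : p.Prime) :
    |(idealCount K p : ℝ) * Real.log p / ((p : ℝ) - 1) -
      (idealCount K p : ℝ) * (Real.log p / p)| ≤
        finrank ℚ K * (4 * (p : ℝ) ^ (-(3 / 2) : ℝ)) := by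
  have hp' : (2 : ℝ) ≤ p := by exact_mod_cast hp.two_le
  have hp1 : (0 : ℝ) < p - 1 := by linarith
  have hlog : 0 ≤ Real.log p := Real.log_natCast_nonneg p
  rw [show (idealCount K p : ℝ) * Real.log p / ((p : ℝ) - 1) -
      (idealCount K p : ℝ) * (Real.log p / p) =
      idealCount K p * (Real.log p / (p * (p - 1))) by field_simp; ring,
    abs_of_nonneg (by positivity)]
  gcongr
  · exact idealCount_le K hp
  · exact log_div_mul_pred_le hp.two_le

end PrimeIdealMertens

open PrimeIdealMertens in
theorem nu1_sum_asymptotic (f : Polynomial ℤ) (hirr : Irreducible f)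
    (hdeg : 1 ≤ f.natDegree) (hconst : f.coeff 0 ≠ 0) :
    ∃ C : ℝ, ∀ x : ℝ, 2 ≤ x →
      |(∑ p ∈ (Finset.range (⌊x⌋₊ + 1)).filter Nat.Prime,
          (nu1 f p : ℝ) * Real.log p / ((p : ℝ) - 1)) - Real.log x| ≤ C := by
  obtain ⟨K, _, _, m, hm0, hm⟩ := exists_nu1_eq_idealCount hirr hdeg hconst
  obtain ⟨C, hC⟩ := exists_abs_sum_idealCount_sub_log_le K
  set δ : ℕ → ℝ := fun p => (nu1 f p : ℝ) * Real.log p / ((p : ℝ) - 1) -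
    (idealCount K p : ℝ) * (Real.log p / p)
  set g : ℕ → ℝ := fun p => Module.finrank ℚ K * (4 * (p : ℝ) ^ (-(3 / 2) : ℝ))
  have hg : Summable g :=
    ((Real.summable_nat_rpow.mpr (by norm_num)).mul_left 4).mul_left _
  have hg0 : ∀ p, 0 ≤ g p := fun p => by positivity
  have hδ : ∀ p : ℕ, p.Prime → |δ p| ≤ g p + if p ∈ m.divisors then |δ p| else 0 := by
    intro p hp
    split_ifs with hpm
    · linarith [hg0 p]
    · rw [add_zero]
      have hpm : ¬ p ∣ m := fun h => hpm (Nat.mem_divisors.mpr ⟨h, hm0⟩)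
      simp only [δ, hm p hp hpm]
      exact abs_idealCount_mul_log_sub_le hp
  refine ⟨∑' p, g p + ∑ p ∈ m.divisors, |δ p| + C, fun x hx => ?_⟩
  set s := (Finset.range (⌊x⌋₊ + 1)).filter Nat.Prime
  have hsum : |∑ p ∈ s, δ p| ≤ ∑' p, g p + ∑ p ∈ m.divisors, |δ p| := by
    refine (Finset.abs_sum_le_sum_abs _ _).trans ((Finset.sum_le_sum fun p hp =>
      hδ p (Finset.mem_filter.mp hp).2).trans ?_)
    rw [Finset.sum_add_distrib]
    refine add_le_add (hg.sum_le_tsum _ fun p _ => hg0 p) ?_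
    rw [← Finset.sum_filter]
    exact Finset.sum_le_sum_of_subset_of_nonneg (fun p hp => (Finset.mem_filter.mp hp).2)
      fun p _ _ => abs_nonneg _
  have hsplit : (∑ p ∈ s, (nu1 f p : ℝ) * Real.log p / ((p : ℝ) - 1)) - Real.log x =
      ∑ p ∈ s, δ p + (∑ p ∈ s, (idealCount K p : ℝ) * (Real.log p / p) - Real.log x) := by
    simp only [δ, Finset.sum_sub_distrib]
    ring
  rw [hsplit]
  exact (abs_add_le _ _).trans (add_le_add hsum (hC x hx))
end

section
/- There exists a constant C (depending only on f) such that for all x ≥ 2, |∑_{p ≤ x, p prime} ν₂(p)·log p/p − 2·log x| ≤ C. -/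
open Polynomial

/-- ν₂(d) = #{a mod d : a·f(a) ≡ 0 (mod d)} -/
def nu2 (f : Polynomial ℤ) (d : ℕ) : ℕ :=
  ((Finset.range d).filter (fun a : ℕ => (d : ℤ) ∣ (a : ℤ) * f.eval (a : ℤ))).card

section NumberFieldMertens

open NumberField Module

section Geometry

variable {K : Type*} [Field K] [NumberField K] {ι : Type*} [Fintype ι]

lemma card_basis_ringOfIntegers (b : Basis ι ℤ (𝓞 K)) : Fintype.card ι = finrank ℚ K := by
  rw [← RingOfIntegers.rank, finrank_eq_card_basis b]

lemma absNorm_span_eq_prod_norm_embeddings (α : 𝓞 K) :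
    (Ideal.absNorm (Ideal.span {α}) : ℝ) = ∏ σ : K →ₐ[ℚ] ℂ, ‖σ (α : K)‖ := by
  have h := Algebra.norm_eq_prod_embeddings ℚ ℂ (α : K)
  rw [← norm_prod, ← h, Ideal.absNorm_span_singleton, ← Algebra.coe_norm_int]
  simp [Nat.cast_natAbs]

lemma exists_norm_embedding_le (b : Basis ι ℤ (𝓞 K)) :
    ∃ H : ℝ, 1 ≤ H ∧ ∀ (σ : K →ₐ[ℚ] ℂ) (M : ℝ) (α : 𝓞 K),
      (∀ i, |(b.repr α i : ℝ)| ≤ M) → ‖σ (α : K)‖ ≤ H * M := by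
  refine ⟨1 + ∑ σ : K →ₐ[ℚ] ℂ, ∑ i, ‖σ (b i : K)‖, ?_, fun σ M α h ↦ ?_⟩
  · have : 0 ≤ ∑ σ : K →ₐ[ℚ] ℂ, ∑ i, ‖σ (b i : K)‖ := by positivity
    linarith
  have hα : σ (α : K) = ∑ i, (b.repr α i : ℂ) * σ (b i : K) := by
    conv_lhs => rw [← b.sum_repr α]
    simp
  obtain hι | ⟨⟨i₀⟩⟩ := isEmpty_or_nonempty ι
  · have := card_basis_ringOfIntegers b
    have h2 : 0 < finrank ℚ K := finrank_pos
    rw [Fintype.card_eq_zero] at this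
    omega
  have hM : 0 ≤ M := (abs_nonneg _).trans (h i₀)
  calc ‖σ (α : K)‖ ≤ ∑ i, ‖(b.repr α i : ℂ) * σ (b i : K)‖ := hα ▸ norm_sum_le _ _
    _ ≤ ∑ i, M * ‖σ (b i : K)‖ := by
        gcongr with i
        rw [norm_mul]
        gcongr
        simpa using h i
    _ = (∑ i, ‖σ (b i : K)‖) * M := by rw [← Finset.mul_sum, mul_comm]
    _ ≤ _ := by
        gcongr
        have := Finset.single_le_sum (f := fun σ : K →ₐ[ℚ] ℂ ↦ ∑ i, ‖σ (b i : K)‖)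
          (fun _ _ ↦ by positivity) (Finset.mem_univ σ)
        linarith

lemma absNorm_span_le_pow (b : Basis ι ℤ (𝓞 K)) {H M : ℝ} {α : 𝓞 K}
    (h : ∀ σ : K →ₐ[ℚ] ℂ, ‖σ (α : K)‖ ≤ H * M) :
    (Ideal.absNorm (Ideal.span {α}) : ℝ) ≤ (H * M) ^ Fintype.card ι := by
  rw [absNorm_span_eq_prod_norm_embeddings, card_basis_ringOfIntegers b, ← AlgHom.card ℚ K ℂ]
  exact (Finset.prod_le_prod (fun _ _ ↦ norm_nonneg _) fun σ _ ↦ h σ).trans (by simp)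

lemma le_absNorm_span_pow (b : Basis ι ℤ (𝓞 K)) {M : ℝ} (hM : 0 ≤ M) {α : 𝓞 K}
    (h : ∀ σ : K →ₐ[ℚ] ℂ, M ≤ ‖σ (α : K)‖) :
    M ^ Fintype.card ι ≤ (Ideal.absNorm (Ideal.span {α}) : ℝ) := by
  rw [absNorm_span_eq_prod_norm_embeddings, card_basis_ringOfIntegers b, ← AlgHom.card ℚ K ℂ]
  exact le_trans (by simp) (Finset.prod_le_prod (fun _ _ ↦ hM) fun σ _ ↦ h σ)

/-- If elements of an ideal of norm below `(absNorm I) ^ (1 / n)` in size vanish, a set of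
congruent elements in a box has at most one element in each small cell. -/
lemma card_le_prod_of_congruent (b : Basis ι ℤ (𝓞 K)) {H : ℝ}
    (hH : ∀ (σ : K →ₐ[ℚ] ℂ) (M : ℝ) (α : 𝓞 K),
      (∀ i, |(b.repr α i : ℝ)| ≤ M) → ‖σ (α : K)‖ ≤ H * M)
    {I : Ideal (𝓞 K)} {m : ℝ} (hm : 0 < m)
    (hmI : (H * m) ^ Fintype.card ι < Ideal.absNorm I)
    (E : Finset (𝓞 K)) (hE : ∀ α ∈ E, ∀ β ∈ E, α - β ∈ I) (a L : ι → ℝ) (hL : ∀ i, 0 ≤ L i)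
    (hbox : ∀ α ∈ E, ∀ i, a i ≤ b.repr α i ∧ (b.repr α i : ℝ) ≤ a i + L i) :
    (E.card : ℝ) ≤ ∏ i, (L i / m + 1) := by
  classical
  have hcard : E.card ≤ (Fintype.piFinset fun i ↦ Finset.range (⌊L i / m⌋₊ + 1)).card := by
    refine Finset.card_le_card_of_injOn (fun α i ↦ ⌊((b.repr α i : ℝ) - a i) / m⌋₊) ?_ ?_
    · intro α hα
      simp only [Finset.mem_coe, Fintype.mem_piFinset, Finset.mem_range, Order.lt_add_one_iff]
      intro i
      apply Nat.floor_le_floor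
      have := hbox α hα i
      gcongr
      linarith
    · intro α hα β hβ hαβ
      by_contra hne
      have hlt : ∀ i, |(b.repr (α - β) i : ℝ)| ≤ m := by
        intro i
        have h1 := congrFun hαβ i
        simp only at h1
        have hα0 : 0 ≤ ((b.repr α i : ℝ) - a i) / m := by
          have := hbox α hα i; apply div_nonneg _ hm.le; linarith
        have hβ0 : 0 ≤ ((b.repr β i : ℝ) - a i) / m := by
          have := hbox β hβ i; apply div_nonneg _ hm.le; linarith
        have h2 := Nat.floor_le hα0
        have h3 := Nat.lt_floor_add_one (((b.repr α i : ℝ) - a i) / m)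
        have h4 := Nat.floor_le hβ0
        have h5 := Nat.lt_floor_add_one (((b.repr β i : ℝ) - a i) / m)
        rw [h1] at h2 h3
        have h6 : |((b.repr α i : ℝ) - a i) / m - ((b.repr β i : ℝ) - a i) / m| ≤ 1 := by
          rw [abs_le]; constructor <;> linarith
        rw [← sub_div, abs_div, abs_of_pos hm, div_le_one hm] at h6
        simpa using h6
      have h1 := absNorm_span_le_pow b (H := H) (M := m) fun σ ↦ hH σ m _ hlt
      have h2 : Ideal.absNorm I ≤ Ideal.absNorm (Ideal.span {α - β}) := by
        apply Nat.le_of_dvd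
        · rw [Nat.pos_iff_ne_zero, Ne, Ideal.absNorm_eq_zero_iff, Ideal.span_singleton_eq_bot]
          exact sub_ne_zero.mpr hne
        · exact Ideal.absNorm_dvd_absNorm_of_le
            ((Ideal.span_singleton_le_iff_mem _).mpr (hE α hα β hβ))
      have h3 : (Ideal.absNorm I : ℝ) ≤ Ideal.absNorm (Ideal.span {α - β}) := by exact_mod_cast h2
      linarith
  calc (E.card : ℝ) ≤ ((Fintype.piFinset fun i ↦ Finset.range (⌊L i / m⌋₊ + 1)).card : ℝ) := by
        exact_mod_cast hcard
    _ = ∏ i, ((⌊L i / m⌋₊ : ℝ) + 1) := by simp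
    _ ≤ _ := by
        gcongr with i
        exact Nat.floor_le (div_nonneg (hL i) hm.le)

lemma natCard_quotient_eq_absNorm (I : Ideal (𝓞 K)) : Nat.card (𝓞 K ⧸ I) = Ideal.absNorm I := by
  rw [Ideal.absNorm_apply, Submodule.cardQuot_apply]

lemma exists_short_mem (b : Basis ι ℤ (𝓞 K)) {I : Ideal (𝓞 K)} (hI : I ≠ ⊥) {r : ℝ}
    (hr : 0 ≤ r) (hrI : Ideal.absNorm I ≤ r ^ Fintype.card ι) :
    ∃ γ ∈ I, γ ≠ 0 ∧ ∀ i, |(b.repr γ i : ℝ)| ≤ r := by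
  classical
  set q := ⌊r⌋₊
  have hfin : Finite (𝓞 K ⧸ I) := (Ideal.absNorm_ne_zero_iff I).mp
    (by rwa [Ne, Ideal.absNorm_eq_zero_iff])
  have := Fintype.ofFinite (𝓞 K ⧸ I)
  have hn : Fintype.card ι ≠ 0 := by
    rw [card_basis_ringOfIntegers b]; exact finrank_pos.ne'
  have hcard : Fintype.card (𝓞 K ⧸ I) < Fintype.card (ι → Fin (q + 1)) := by
    rw [Fintype.card_eq_nat_card, natCard_quotient_eq_absNorm]
    simp only [Fintype.card_pi, Fintype.card_fin, Finset.prod_const, Finset.card_univ]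
    have : (Ideal.absNorm I : ℝ) < ((q : ℝ) + 1) ^ Fintype.card ι :=
      hrI.trans_lt (pow_lt_pow_left₀ (Nat.lt_floor_add_one r) hr hn)
    exact_mod_cast this
  obtain ⟨x, y, hxy, h⟩ := Fintype.exists_ne_map_eq_of_card_lt
    (fun x : ι → Fin (q + 1) ↦ Ideal.Quotient.mk I (b.equivFun.symm fun i ↦ ((x i : ℕ) : ℤ))) hcard
  refine ⟨_, (Ideal.Quotient.eq).mp h, ?_, fun i ↦ ?_⟩
  · rw [sub_ne_zero]
    intro h2
    have h3 := b.equivFun.symm.injective h2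
    apply hxy
    funext i
    have := congrFun h3 i
    simp only [Nat.cast_inj] at this
    exact Fin.ext this
  · have hrepr : ∀ z : ι → ℤ, b.repr (b.equivFun.symm z) i = z i := fun z ↦ by
      rw [← b.equivFun_apply, LinearEquiv.apply_symm_apply]
    rw [map_sub, Finsupp.sub_apply, hrepr, hrepr]
    have hq : (q : ℝ) ≤ r := Nat.floor_le hr
    have h1 : ((x i : ℕ) : ℝ) ≤ q := by exact_mod_cast Nat.lt_succ_iff.mp (x i).2
    have h2 : ((y i : ℕ) : ℝ) ≤ q := by exact_mod_cast Nat.lt_succ_iff.mp (y i).2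
    have h3 : (0 : ℝ) ≤ ((x i : ℕ) : ℝ) := by positivity
    have h4 : (0 : ℝ) ≤ ((y i : ℕ) : ℝ) := by positivity
    push_cast
    rw [abs_le]
    constructor <;> linarith

omit [NumberField K] in
lemma exists_abs_repr_mul_le (b : Basis ι ℤ (𝓞 K)) :
    ∃ W : ℝ, 0 ≤ W ∧ ∀ (γ : 𝓞 K) (r : ℝ), (∀ i, |(b.repr γ i : ℝ)| ≤ r) →
      ∀ i k, |(b.repr (γ * b i) k : ℝ)| ≤ W * r := by
  obtain ⟨W, hW⟩ := (Set.finite_range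
    fun t : ι × ι × ι ↦ |(b.repr (b t.1 * b t.2.1) t.2.2 : ℝ)|).bddAbove
  refine ⟨Fintype.card ι * |W|, by positivity, fun γ r hγ i k ↦ ?_⟩
  have h1 : b.repr (γ * b i) k = ∑ j, b.repr γ j * b.repr (b j * b i) k := by
    conv_lhs => rw [← b.sum_repr γ]
    simp only [Finset.sum_mul, smul_mul_assoc, map_sum, map_smul, Finsupp.coe_finsetSum,
      Finset.sum_apply, Finsupp.smul_apply, smul_eq_mul]
  rw [h1]
  push_cast
  refine (Finset.abs_sum_le_sum_abs _ _).trans ?_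
  refine (Finset.sum_le_card_nsmul _ _ (|W| * r) fun j _ ↦ ?_).trans (by simp [mul_assoc])
  rw [abs_mul, mul_comm]
  exact mul_le_mul ((hW ⟨(j, i, k), rfl⟩).trans (le_abs_self W)) (hγ j) (abs_nonneg _)
    (abs_nonneg _)

lemma exists_short_representative (b : Basis ι ℤ (𝓞 K)) :
    ∃ D : ℝ, 0 ≤ D ∧ ∀ (I : Ideal (𝓞 K)), I ≠ ⊥ → ∀ r : ℝ, 0 ≤ r →
      Ideal.absNorm I ≤ r ^ Fintype.card ι → ∀ α : 𝓞 K, ∃ u : 𝓞 K, α - u ∈ I ∧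
        ∀ i, |(b.repr u i : ℝ)| ≤ D * r := by
  classical
  obtain ⟨W, hW0, hW⟩ := exists_abs_repr_mul_le b
  refine ⟨Fintype.card ι * W, by positivity, fun I hI r hr hrI α ↦ ?_⟩
  obtain ⟨γ, hγI, hγ0, hγ⟩ := exists_short_mem b hI hr hrI
  set N := Ideal.absNorm (Ideal.span {γ})
  have hN : 0 < N := by
    rw [Nat.pos_iff_ne_zero, Ne, Ideal.absNorm_eq_zero_iff, Ideal.span_singleton_eq_bot]
    exact hγ0
  obtain ⟨γ', hγ'⟩ := Ideal.mem_span_singleton.mp (Ideal.absNorm_mem (Ideal.span {γ}))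
  set β : 𝓞 K := b.equivFun.symm fun i ↦ b.repr (α * γ') i / N
  refine ⟨α - γ * β, by simpa using I.mul_mem_right β hγI, fun k ↦ ?_⟩
  have hNu : (N : 𝓞 K) * (α - γ * β) = ∑ i, (b.repr (α * γ') i % N) • (γ * b i) := by
    have h1 : α * γ' - N * β = ∑ i, (b.repr (α * γ') i % N) • b i := by
      conv_lhs => rw [← b.sum_repr (α * γ')]
      simp only [β, b.equivFun_symm_apply]
      rw [Finset.mul_sum, ← Finset.sum_sub_distrib]
      refine Finset.sum_congr rfl fun i _ ↦ ?_
      rw [Int.emod_def]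
      simp only [zsmul_eq_mul]
      push_cast
      ring
    calc (N : 𝓞 K) * (α - γ * β) = γ * (α * γ' - N * β) := by
          linear_combination α * hγ'
      _ = _ := by rw [h1, Finset.mul_sum]; simp [mul_left_comm]
  have hcoord : (N : ℝ) * b.repr (α - γ * β) k =
      ∑ i, ((b.repr (α * γ') i % N : ℤ) : ℝ) * b.repr (γ * b i) k := by
    have h1 := congrArg (fun z ↦ b.repr z k) hNu
    have h2 : (N : 𝓞 K) * (α - γ * β) = (N : ℤ) • (α - γ * β) := by simp
    simp only [h2, map_smul, map_sum, Finsupp.smul_apply, Finsupp.coe_finsetSum,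
      Finset.sum_apply, smul_eq_mul] at h1
    exact_mod_cast h1
  have hN' : (0 : ℝ) < N := by exact_mod_cast hN
  have hle : (N : ℝ) * |(b.repr (α - γ * β) k : ℝ)| ≤
      N * (Fintype.card ι * W * r) := by
    rw [← abs_of_pos hN', ← abs_mul, abs_of_pos hN', hcoord]
    refine (Finset.abs_sum_le_sum_abs _ _).trans ?_
    refine (Finset.sum_le_card_nsmul _ _ (N * (W * r)) fun i _ ↦ ?_).trans
      (le_of_eq ?_)
    · rw [abs_mul]
      gcongr
      · have h1 := Int.emod_nonneg (b.repr (α * γ') i) (b := (N : ℤ)) (by omega)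
        have h2 := Int.emod_lt_of_pos (b.repr (α * γ') i) (b := (N : ℤ)) (by omega)
        rw [abs_of_nonneg (by exact_mod_cast h1)]
        exact_mod_cast h2.le
      · exact hW γ r hγ i k
    · simp only [Finset.card_univ, nsmul_eq_mul]; ring
  exact le_of_mul_le_mul_left hle hN'

lemma card_basis_ne_zero (b : Basis ι ℤ (𝓞 K)) : Fintype.card ι ≠ 0 := by
  rw [card_basis_ringOfIntegers b]; exact finrank_pos.ne'

end Geometry

section Box

variable {K : Type*} [Field K] [NumberField K] {ι : Type*} [Fintype ι] [DecidableEq ι]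

/-- The algebraic integers whose `i`-th coordinate lies in `[a i, a i + X)` for all `i`. -/
noncomputable def coordBox (b : Basis ι ℤ (𝓞 K)) (a : ι → ℤ) (X : ℕ) : Finset (𝓞 K) :=
  (Fintype.piFinset fun i ↦ Finset.Ico (a i) (a i + X)).map b.equivFun.symm.toEquiv.toEmbedding

omit [NumberField K] in
lemma mem_coordBox {b : Basis ι ℤ (𝓞 K)} {a : ι → ℤ} {X : ℕ} {α : 𝓞 K} :
    α ∈ coordBox b a X ↔ ∀ i, a i ≤ b.repr α i ∧ b.repr α i < a i + X := by
  simp only [coordBox, Finset.mem_map_equiv, Fintype.mem_piFinset, Finset.mem_Ico]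
  rfl

omit [NumberField K] in
lemma card_coordBox (b : Basis ι ℤ (𝓞 K)) (a : ι → ℤ) (X : ℕ) :
    (coordBox b a X).card = X ^ Fintype.card ι := by
  simp [coordBox]

omit [DecidableEq ι] in
lemma mul_half_pow_lt_absNorm (b : Basis ι ℤ (𝓞 K)) {H : ℝ} (hH1 : 1 ≤ H) {I : Ideal (𝓞 K)}
    {r : ℝ} (hr : 0 < r) (hrI : r ^ Fintype.card ι = Ideal.absNorm I) :
    (H * (r / (2 * H))) ^ Fintype.card ι < Ideal.absNorm I := by
  have : H * (r / (2 * H)) = r / 2 := by field_simp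
  rw [this, ← hrI]
  exact pow_lt_pow_left₀ (by linarith) (by linarith) (card_basis_ne_zero b)

lemma exists_card_coordBox_inter_ideal_le (b : Basis ι ℤ (𝓞 K)) {T : ℝ} (hT : 0 ≤ T) :
    ∃ C : ℝ, 0 ≤ C ∧ ∀ (I : Ideal (𝓞 K)) (a : ι → ℤ) (X : ℕ) (r : ℝ), 0 < r →
      r ^ Fintype.card ι = Ideal.absNorm I → r ≤ T * X → ∀ E : Finset (𝓞 K),
      (∀ α ∈ E, α ∈ coordBox b a X ∧ α ∈ I) →
      (E.card : ℝ) ≤ C * (X ^ Fintype.card ι / Ideal.absNorm I) := by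
  obtain ⟨H, hH1, hH⟩ := exists_norm_embedding_le b
  refine ⟨(2 * H + T) ^ Fintype.card ι, by positivity, fun I a X r hr hrI hrX E hE ↦ ?_⟩
  have hm : 0 < r / (2 * H) := by positivity
  refine (card_le_prod_of_congruent b hH hm (mul_half_pow_lt_absNorm b hH1 hr hrI)
    E (fun α hα β hβ ↦ I.sub_mem (hE α hα).2 (hE β hβ).2) (fun i ↦ a i) (fun _ ↦ X)
    (fun _ ↦ by positivity) fun α hα i ↦ ?_).trans ?_
  · have := mem_coordBox.mp (hE α hα).1 i
    exact ⟨by exact_mod_cast this.1, by exact_mod_cast this.2.le⟩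
  · rw [← hrI, ← div_pow, ← mul_pow, Finset.prod_const, Finset.card_univ]
    gcongr
    have h1 : (X : ℝ) / (r / (2 * H)) = 2 * H * (X / r) := by field_simp
    have h2 : 1 ≤ T * (X / r) := by rw [← mul_div_assoc, one_le_div hr]; exact hrX
    rw [h1, add_mul]
    linarith

lemma card_slab_le (b : Basis ι ℤ (𝓞 K)) {H : ℝ} (hH1 : 1 ≤ H)
    (hH : ∀ (σ : K →ₐ[ℚ] ℂ) (M : ℝ) (α : 𝓞 K),
      (∀ i, |(b.repr α i : ℝ)| ≤ M) → ‖σ (α : K)‖ ≤ H * M)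
    {I : Ideal (𝓞 K)} {a : ι → ℤ} {X : ℕ} {r T D : ℝ} (hr : 0 < r)
    (hrI : r ^ Fintype.card ι = Ideal.absNorm I) (hrX : r ≤ T * X) (hD : 0 ≤ D)
    (E : Finset (𝓞 K)) (hE : ∀ α ∈ E, ∀ β ∈ E, α - β ∈ I)
    (hbox : ∀ α ∈ E, α ∈ coordBox b a X) (i₀ : ι) (l : ℝ)
    (hl : ∀ α ∈ E, l ≤ b.repr α i₀ ∧ (b.repr α i₀ : ℝ) ≤ l + D * r) :
    (E.card : ℝ) ≤
      (2 * H * D + 1) * (2 * H + T) ^ (Fintype.card ι - 1) * (X / r) ^ (Fintype.card ι - 1) := by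
  have hm : 0 < r / (2 * H) := by positivity
  refine (card_le_prod_of_congruent b hH hm (mul_half_pow_lt_absNorm b hH1 hr hrI) E hE
    (Function.update (fun i ↦ (a i : ℝ)) i₀ l) (Function.update (fun _ ↦ (X : ℝ)) i₀ (D * r))
    (fun i ↦ ?_) fun α hα i ↦ ?_).trans ?_
  · by_cases h : i = i₀
    · subst h; simp; positivity
    · simp [h]
  · by_cases h : i = i₀
    · subst h; simpa using hl α hα
    · have := mem_coordBox.mp (hbox α hα) i
      simp only [Function.update_of_ne h]
      exact ⟨by exact_mod_cast this.1, by exact_mod_cast this.2.le⟩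
  · rw [← Finset.mul_prod_erase _ _ (Finset.mem_univ i₀), Function.update_self, mul_assoc,
      ← mul_pow]
    have h0 : D * r / (r / (2 * H)) = 2 * H * D := by field_simp
    have h1 : (X : ℝ) / (r / (2 * H)) = 2 * H * (X / r) := by field_simp
    have h2 : 1 ≤ T * (X / r) := by rw [← mul_div_assoc, one_le_div hr]; exact hrX
    rw [h0]
    gcongr
    rw [← Finset.card_univ, ← Finset.card_erase_of_mem (Finset.mem_univ i₀), ← Finset.prod_const]
    refine Finset.prod_le_prod (fun i hi ↦ ?_) fun i hi ↦ ?_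
    · rw [Function.update_of_ne (Finset.ne_of_mem_erase hi)]; positivity
    · rw [Function.update_of_ne (Finset.ne_of_mem_erase hi), h1, add_mul]
      linarith

open Classical in
lemma exists_card_coordBox_class_le (b : Basis ι ℤ (𝓞 K)) {T : ℝ} (hT : 0 ≤ T) :
    ∃ C : ℝ, 0 ≤ C ∧ ∀ (I : Ideal (𝓞 K)), I ≠ ⊥ → ∀ (a : ι → ℤ) (X : ℕ) (r : ℝ), 0 < r →
      r ^ Fintype.card ι = Ideal.absNorm I → r ≤ T * X → ∀ c d : 𝓞 K,
      (((coordBox b a X).filter fun α ↦ α - c ∈ I).card : ℝ) ≤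
        ((coordBox b a X).filter fun α ↦ α - d ∈ I).card + C * (X / r) ^ (Fintype.card ι - 1) := by
  obtain ⟨H, hH1, hH⟩ := exists_norm_embedding_le b
  obtain ⟨D, hD, hshort⟩ := exists_short_representative b
  refine ⟨Fintype.card ι * (2 * ((2 * H * D + 1) * (2 * H + T) ^ (Fintype.card ι - 1))),
    by positivity, fun I hI a X r hr hrI hrX c d ↦ ?_⟩
  obtain ⟨u, huI, hu⟩ := hshort I hI r hr.le hrI.ge (c - d)
  set S := (2 * H * D + 1) * (2 * H + T) ^ (Fintype.card ι - 1) * (X / r) ^ (Fintype.card ι - 1)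
    with hS
  set E := (coordBox b a X).filter fun α ↦ α - c ∈ I with hE
  set lo := fun i ↦ E.filter fun α ↦ (b.repr α i : ℝ) ≤ a i + D * r
  set hi := fun i ↦ E.filter fun α ↦ (a i + X - D * r : ℝ) ≤ b.repr α i
  have hcong : ∀ α ∈ E, ∀ β ∈ E, α - β ∈ I := fun α hα β hβ ↦ by
    have := I.sub_mem (Finset.mem_filter.mp hα).2 (Finset.mem_filter.mp hβ).2
    simpa using this
  have hlo : ∀ i, ((lo i).card : ℝ) ≤ S := fun i ↦ by
    refine card_slab_le b hH1 hH hr hrI hrX hD (lo i) (a := a) (fun α hα β hβ ↦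
      hcong α (Finset.filter_subset _ _ hα) β (Finset.filter_subset _ _ hβ))
      (fun α hα ↦ Finset.filter_subset _ _ (Finset.filter_subset _ _ hα)) i (a i) fun α hα ↦ ?_
    have h1 := mem_coordBox.mp (Finset.filter_subset _ _ (Finset.filter_subset _ _ hα)) i
    exact ⟨by exact_mod_cast h1.1, (Finset.mem_filter.mp hα).2⟩
  have hhi : ∀ i, ((hi i).card : ℝ) ≤ S := fun i ↦ by
    refine card_slab_le b hH1 hH hr hrI hrX hD (hi i) (a := a) (fun α hα β hβ ↦
      hcong α (Finset.filter_subset _ _ hα) β (Finset.filter_subset _ _ hβ))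
      (fun α hα ↦ Finset.filter_subset _ _ (Finset.filter_subset _ _ hα)) i
      (a i + X - D * r) fun α hα ↦ ?_
    have h1 := mem_coordBox.mp (Finset.filter_subset _ _ (Finset.filter_subset _ _ hα)) i
    refine ⟨(Finset.mem_filter.mp hα).2, ?_⟩
    have : (b.repr α i : ℝ) ≤ a i + X := by exact_mod_cast h1.2.le
    linarith
  have hsub : E ⊆ (E.filter fun α ↦ α - u ∈ coordBox b a X) ∪
      Finset.univ.biUnion fun i ↦ lo i ∪ hi i := by
    intro α hα
    by_cases h : α - u ∈ coordBox b a X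
    · exact Finset.mem_union_left _ (Finset.mem_filter.mpr ⟨hα, h⟩)
    · apply Finset.mem_union_right
      rw [mem_coordBox] at h
      push Not at h
      obtain ⟨i, hi'⟩ := h
      have hui := abs_le.mp (hu i)
      refine Finset.mem_biUnion.mpr ⟨i, Finset.mem_univ i, ?_⟩
      by_cases h2 : a i ≤ b.repr (α - u) i
      · have h3 : ((a i + X : ℤ) : ℝ) ≤ b.repr (α - u) i := by exact_mod_cast hi' h2
        rw [map_sub, Finsupp.sub_apply] at h3
        push_cast at h3
        refine Finset.mem_union_right _ (Finset.mem_filter.mpr ⟨hα, ?_⟩)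
        linarith
      · have h3 : (b.repr (α - u) i : ℝ) ≤ a i := by exact_mod_cast (not_le.mp h2).le
        rw [map_sub, Finsupp.sub_apply] at h3
        push_cast at h3
        refine Finset.mem_union_left _ (Finset.mem_filter.mpr ⟨hα, ?_⟩)
        linarith
  have hinj : (E.filter fun α ↦ α - u ∈ coordBox b a X).card ≤
      ((coordBox b a X).filter fun α ↦ α - d ∈ I).card := by
    refine Finset.card_le_card_of_injOn (fun α ↦ α - u) (fun α hα ↦ ?_)
      fun α _ β _ h ↦ sub_left_injective h
    have h1 := Finset.mem_filter.mp (Finset.mem_coe.mp hα)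
    refine Finset.mem_coe.mpr (Finset.mem_filter.mpr ⟨h1.2, ?_⟩)
    have := I.add_mem (Finset.mem_filter.mp h1.1).2 huI
    ring_nf at this ⊢
    exact this
  have hslab : ((Finset.univ.biUnion fun i ↦ lo i ∪ hi i).card : ℝ) ≤ Fintype.card ι * (2 * S) := by
    calc ((Finset.univ.biUnion fun i ↦ lo i ∪ hi i).card : ℝ)
        ≤ ∑ i, ((lo i).card + (hi i).card : ℝ) := by
          have h1 := Finset.card_biUnion_le (s := Finset.univ) (t := fun i ↦ lo i ∪ hi i)
          have h2 : ∑ i, (lo i ∪ hi i).card ≤ ∑ i, ((lo i).card + (hi i).card) :=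
            Finset.sum_le_sum fun i _ ↦ Finset.card_union_le _ _
          exact_mod_cast h1.trans h2
      _ ≤ ∑ i : ι, 2 * S := Finset.sum_le_sum fun i _ ↦ by linarith [hlo i, hhi i]
      _ = _ := by simp
  have hfinal : (E.card : ℝ) ≤ (E.filter fun α ↦ α - u ∈ coordBox b a X).card +
      (Finset.univ.biUnion fun i ↦ lo i ∪ hi i).card := by
    exact_mod_cast (Finset.card_le_card hsub).trans (Finset.card_union_le _ _)
  have hinj' : ((E.filter fun α ↦ α - u ∈ coordBox b a X).card : ℝ) ≤
      ((coordBox b a X).filter fun α ↦ α - d ∈ I).card := by exact_mod_cast hinj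
  calc (E.card : ℝ) ≤ _ := hfinal
    _ ≤ _ := add_le_add hinj' hslab
    _ = _ := by rw [hS]; ring

open Classical in
/-- The number of elements of an ideal in a coordinate box, with an error term controlled by the
surface of the box. -/
lemma exists_abs_card_coordBox_inter_ideal_sub_le (b : Basis ι ℤ (𝓞 K)) {T : ℝ} (hT : 0 ≤ T) :
    ∃ C : ℝ, 0 ≤ C ∧ ∀ (I : Ideal (𝓞 K)), I ≠ ⊥ → ∀ (a : ι → ℤ) (X : ℕ) (r : ℝ), 0 < r →
      r ^ Fintype.card ι = Ideal.absNorm I → r ≤ T * X →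
      |(((coordBox b a X).filter (· ∈ I)).card : ℝ) - X ^ Fintype.card ι / Ideal.absNorm I| ≤
        C * (X / r) ^ (Fintype.card ι - 1) := by
  obtain ⟨C, hC, hle⟩ := exists_card_coordBox_class_le b hT
  refine ⟨C, hC, fun I hI a X r hr hrI hrX ↦ ?_⟩
  have hcompare := hle I hI a X r hr hrI hrX
  set F := C * (X / r) ^ (Fintype.card ι - 1)
  have hfin : Finite (𝓞 K ⧸ I) := (Ideal.absNorm_ne_zero_iff I).mp
    (by rwa [Ne, Ideal.absNorm_eq_zero_iff])
  have := Fintype.ofFinite (𝓞 K ⧸ I)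
  have hN : (0 : ℝ) < Ideal.absNorm I := hrI ▸ by positivity
  have hNcard : (Fintype.card (𝓞 K ⧸ I) : ℝ) = Ideal.absNorm I := by
    rw [Fintype.card_eq_nat_card, natCard_quotient_eq_absNorm]
  set M := (((coordBox b a X).filter (· ∈ I)).card : ℝ) with hM
  have hM0 : (((coordBox b a X).filter fun α ↦ α - 0 ∈ I).card : ℝ) = M := by simp [hM]
  have hfib : (X : ℝ) ^ Fintype.card ι = ∑ q : 𝓞 K ⧸ I,
      (((coordBox b a X).filter fun α ↦ Ideal.Quotient.mk I α = q).card : ℝ) := by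
    have h1 := Finset.card_eq_sum_card_fiberwise (s := coordBox b a X) (t := Finset.univ)
      (f := Ideal.Quotient.mk I) (fun _ _ ↦ Finset.mem_coe.mpr (Finset.mem_univ _))
    rw [card_coordBox] at h1
    exact_mod_cast h1
  have hq : ∀ q : 𝓞 K ⧸ I, |(((coordBox b a X).filter
      fun α ↦ Ideal.Quotient.mk I α = q).card : ℝ) - M| ≤ F := by
    intro q
    obtain ⟨c, rfl⟩ := Ideal.Quotient.mk_surjective q
    simp only [Ideal.Quotient.eq]
    have h1 := hcompare c 0
    have h2 := hcompare 0 c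
    rw [hM0] at h1 h2
    rw [abs_le]
    constructor <;> linarith
  have hsum : |(X : ℝ) ^ Fintype.card ι - Ideal.absNorm I * M| ≤ Ideal.absNorm I * F := by
    calc |(X : ℝ) ^ Fintype.card ι - Ideal.absNorm I * M|
        = |∑ q : 𝓞 K ⧸ I, ((((coordBox b a X).filter
            fun α ↦ Ideal.Quotient.mk I α = q).card : ℝ) - M)| := by
          rw [Finset.sum_sub_distrib, ← hfib]
          simp [hNcard]
      _ ≤ ∑ q : 𝓞 K ⧸ I, F := (Finset.abs_sum_le_sum_abs _ _).trans
          (Finset.sum_le_sum fun q _ ↦ hq q)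
      _ = _ := by simp [hNcard]
  have h1 : (X : ℝ) ^ Fintype.card ι - Ideal.absNorm I * M =
      -(Ideal.absNorm I * (M - X ^ Fintype.card ι / Ideal.absNorm I)) := by
    field_simp
    ring
  rw [h1, abs_neg, abs_mul, abs_of_pos hN] at hsum
  exact le_of_mul_le_mul_left hsum hN

/-- Shifting a box far along a positive direction keeps all norms comparable to its volume. -/
lemma exists_coordBox_norm_bounds (b : Basis ι ℤ (𝓞 K)) :
    ∃ T : ℝ, 1 ≤ T ∧ ∀ X : ℕ, ∃ a : ι → ℤ, ∀ α ∈ coordBox b a X,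
      (X : ℝ) ^ Fintype.card ι ≤ Ideal.absNorm (Ideal.span {α}) ∧
      (Ideal.absNorm (Ideal.span {α}) : ℝ) ≤ (T * X) ^ Fintype.card ι := by
  obtain ⟨H, hH1, hH⟩ := exists_norm_embedding_le b
  obtain ⟨A, hA⟩ := exists_nat_ge (H + 1)
  refine ⟨A + H, by linarith, fun X ↦ ⟨fun i ↦ b.repr ((A * X : ℕ) : 𝓞 K) i, fun α hα ↦ ?_⟩⟩
  have hdiff : ∀ σ : K →ₐ[ℚ] ℂ, ‖σ ((α - ((A * X : ℕ) : 𝓞 K) : 𝓞 K) : K)‖ ≤ H * X := by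
    refine fun σ ↦ hH σ X _ fun i ↦ ?_
    have h1 := mem_coordBox.mp hα i
    have h2 : ((b.repr ((A * X : ℕ) : 𝓞 K) i : ℤ) : ℝ) ≤ b.repr α i := by exact_mod_cast h1.1
    have h3 : (b.repr α i : ℝ) ≤ (b.repr ((A * X : ℕ) : 𝓞 K) i : ℤ) + X := by
      exact_mod_cast h1.2.le
    rw [map_sub, Finsupp.sub_apply, Int.cast_sub, abs_le]
    constructor <;> linarith [show (0 : ℝ) ≤ X by positivity]
  have hσ : ∀ σ : K →ₐ[ℚ] ℂ, σ ((α - ((A * X : ℕ) : 𝓞 K) : 𝓞 K) : K) = σ α - (A * X : ℂ) := by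
    intro σ; simp
  have hnorm : ‖(A * X : ℂ)‖ = A * X := by simp
  constructor
  · refine le_absNorm_span_pow b (by positivity) fun σ ↦ ?_
    have h1 := hdiff σ
    rw [hσ, norm_sub_rev] at h1
    have h2 := norm_sub_norm_le (A * X : ℂ) (σ α)
    rw [hnorm] at h2
    nlinarith [show (0 : ℝ) ≤ X by positivity]
  · refine absNorm_span_le_pow b fun σ ↦ ?_
    have h1 := hdiff σ
    rw [hσ] at h1
    have h2 := norm_sub_norm_le (σ α) (A * X : ℂ)
    rw [hnorm] at h2
    linarith

end Box

section PrimeSums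

variable (K : Type*) [Field K] [NumberField K]

lemma finite_setOf_isPrime_absNorm_le (Y : ℝ) :
    {P : Ideal (𝓞 K) | P.IsPrime ∧ P ≠ ⊥ ∧ (Ideal.absNorm P : ℝ) ≤ Y}.Finite :=
  (Ideal.finite_setOfPred_absNorm_le ⌊Y⌋₊).subset fun _ h ↦ Nat.le_floor h.2.2

/-- The nonzero prime ideals of norm at most `Y`. -/
noncomputable def primeIdealsLE (Y : ℝ) : Finset (Ideal (𝓞 K)) :=
  (finite_setOf_isPrime_absNorm_le K Y).toFinset

variable {K}

lemma mem_primeIdealsLE {Y : ℝ} {P : Ideal (𝓞 K)} :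
    P ∈ primeIdealsLE K Y ↔ P.IsPrime ∧ P ≠ ⊥ ∧ (Ideal.absNorm P : ℝ) ≤ Y := by
  simp [primeIdealsLE]

lemma primeIdealsLE_mono {x y : ℝ} (h : x ≤ y) : primeIdealsLE K x ⊆ primeIdealsLE K y :=
  fun _ hP ↦ by
    rw [mem_primeIdealsLE] at hP ⊢
    exact ⟨hP.1, hP.2.1, hP.2.2.trans h⟩

lemma two_le_absNorm {P : Ideal (𝓞 K)} (hP : P.IsPrime) (hP0 : P ≠ ⊥) :
    2 ≤ Ideal.absNorm P := by
  have h0 : Ideal.absNorm P ≠ 0 := by rwa [Ne, Ideal.absNorm_eq_zero_iff]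
  have h1 : Ideal.absNorm P ≠ 1 := by rw [Ne, Ideal.absNorm_eq_one_iff]; exact hP.ne_top
  omega

lemma exists_absNorm_eq_prime_pow {P : Ideal (𝓞 K)} (hP : P.IsPrime) (hP0 : P ≠ ⊥) :
    ∃ p k : ℕ, 0 < k ∧ (p : 𝓞 K) ∈ P ∧ p.Prime ∧ Ideal.absNorm P = p ^ k ∧
      (Ideal.absNorm P).minFac = p := by
  have := hP.isMaximal hP0
  obtain ⟨p, k, hk, hpP, hp, hN⟩ := Ideal.exists_prime_and_absNorm_eq_pow P
  exact ⟨p, k, hk, hpP, hp, hN, by rw [hN, hp.pow_minFac hk.ne']⟩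

lemma log_absNorm_nonneg (P : Ideal (𝓞 K)) : 0 ≤ Real.log (Ideal.absNorm P) :=
  Real.log_natCast_nonneg _

lemma sum_log_absNorm_le_of_mem {S : Finset (Ideal (𝓞 K))} {m : ℕ} (hm : m ≠ 0)
    (hS : ∀ P ∈ S, P.IsPrime ∧ P ≠ ⊥ ∧ (m : 𝓞 K) ∈ P) :
    ∑ P ∈ S, Real.log (Ideal.absNorm P) ≤ finrank ℚ K * Real.log m := by
  have hdvd : ∏ P ∈ S, P ∣ Ideal.span {(m : 𝓞 K)} :=
    Finset.prod_primes_dvd _ (fun P hP ↦ Ideal.prime_of_isPrime (hS P hP).2.1 (hS P hP).1)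
      fun P hP ↦ Ideal.dvd_span_singleton.mpr (hS P hP).2.2
  have hle : ∏ P ∈ S, Ideal.absNorm P ≤ m ^ finrank ℚ K := by
    rw [← map_prod, ← RingOfIntegers.rank, ← Ideal.absNorm_span_natCast (S := 𝓞 K)]
    refine Nat.le_of_dvd ?_ (map_dvd _ hdvd)
    rw [Ideal.absNorm_span_natCast]
    positivity
  have hne : ∀ P ∈ S, (Ideal.absNorm P : ℝ) ≠ 0 := fun P hP ↦ by
    have := two_le_absNorm (hS P hP).1 (hS P hP).2.1
    positivity
  rw [← Real.log_prod hne, ← Real.log_pow]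
  refine Real.log_le_log (Finset.prod_pos fun P hP ↦ ?_) (by exact_mod_cast hle)
  exact lt_of_le_of_ne (Nat.cast_nonneg _) (hne P hP).symm

/-- Chebyshev's upper bound for prime ideals. -/
lemma sum_log_absNorm_le {Y : ℝ} (hY : 0 ≤ Y) :
    ∑ P ∈ primeIdealsLE K Y, Real.log (Ideal.absNorm P) ≤ finrank ℚ K * Real.log 4 * Y := by
  refine (sum_log_absNorm_le_of_mem (primorial_ne_zero ⌊Y⌋₊) fun P hP ↦ ?_).trans ?_
  · rw [mem_primeIdealsLE] at hP
    obtain ⟨p, k, hk, hpP, hp, hN, -⟩ := exists_absNorm_eq_prime_pow hP.1 hP.2.1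
    refine ⟨hP.1, hP.2.1, ?_⟩
    have hle : p ≤ ⌊Y⌋₊ := Nat.le_floor <| le_trans
      (by exact_mod_cast hN ▸ Nat.le_self_pow hk.ne' p) hP.2.2
    obtain ⟨c, hc⟩ := hp.dvd_primorial_iff.mpr hle
    rw [hc, Nat.cast_mul]
    exact P.mul_mem_right _ hpP
  · rw [mul_assoc]
    gcongr
    calc Real.log (primorial ⌊Y⌋₊ : ℕ) ≤ Real.log ((4 : ℝ) ^ ⌊Y⌋₊) := by
          refine Real.log_le_log (by exact_mod_cast primorial_pos _) ?_
          exact_mod_cast primorial_le_four_pow _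
      _ = ⌊Y⌋₊ * Real.log 4 := Real.log_pow _ _
      _ ≤ Y * Real.log 4 :=
          mul_le_mul_of_nonneg_right (Nat.floor_le hY) (Real.log_nonneg (by norm_num))
      _ = _ := mul_comm _ _

variable (K) in
lemma exists_sum_log_absNorm_div_minFac_sq_le :
    ∃ C : ℝ, 0 ≤ C ∧ ∀ Y : ℝ, ∑ P ∈ primeIdealsLE K Y,
      Real.log (Ideal.absNorm P) / ((Ideal.absNorm P).minFac : ℝ) ^ 2 ≤ C := by
  have hsum : Summable fun p : ℕ ↦ Real.log p / (p : ℝ) ^ 2 := by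
    refine Summable.of_nonneg_of_le (fun p ↦ div_nonneg (Real.log_natCast_nonneg _) (by positivity))
      (fun p ↦ ?_) ((Real.summable_one_div_nat_rpow (p := 3 / 2)).mpr (by norm_num) |>.mul_left 2)
    rcases Nat.eq_zero_or_pos p with rfl | hp
    · simp
    have hp' : (0 : ℝ) < p := by exact_mod_cast hp
    have h1 := Real.log_le_rpow_div hp'.le (ε := 1 / 2) (by norm_num)
    rw [div_le_iff₀ (by positivity)]
    calc Real.log p ≤ (p : ℝ) ^ (1 / 2 : ℝ) / (1 / 2) := h1
      _ = 2 * (1 / (p : ℝ) ^ (3 / 2 : ℝ)) * (p : ℝ) ^ 2 := by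
        rw [← Real.rpow_natCast, mul_assoc, one_div_mul_eq_div, ← Real.rpow_sub hp']
        norm_num
        ring
  have h0 : ∀ p : ℕ, 0 ≤ Real.log p / (p : ℝ) ^ 2 := fun p ↦
    div_nonneg (Real.log_natCast_nonneg _) (by positivity)
  refine ⟨finrank ℚ K * ∑' p : ℕ, Real.log p / (p : ℝ) ^ 2,
    mul_nonneg (Nat.cast_nonneg _) (tsum_nonneg h0), fun Y ↦ ?_⟩
  classical
  rw [← Finset.sum_fiberwise_of_maps_to (t := (primeIdealsLE K Y).image
    fun P ↦ (Ideal.absNorm P).minFac) (fun P hP ↦ Finset.mem_image_of_mem _ hP)]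
  calc _ ≤ ∑ p ∈ (primeIdealsLE K Y).image fun P ↦ (Ideal.absNorm P).minFac,
        finrank ℚ K * (Real.log p / (p : ℝ) ^ 2) := by
        refine Finset.sum_le_sum fun p hp ↦ ?_
        obtain ⟨Q, hQ, hQp⟩ := Finset.mem_image.mp hp
        have hp0 : p ≠ 0 := hQp ▸ (Nat.minFac_pos _).ne'
        rw [← mul_div_assoc]
        calc _ = (∑ P ∈ primeIdealsLE K Y with (Ideal.absNorm P).minFac = p,
                Real.log (Ideal.absNorm P)) / (p : ℝ) ^ 2 := by
              rw [Finset.sum_div]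
              refine Finset.sum_congr rfl fun P hP ↦ ?_
              rw [(Finset.mem_filter.mp hP).2]
          _ ≤ _ := by
              gcongr
              refine sum_log_absNorm_le_of_mem hp0 fun P hP ↦ ?_
              obtain ⟨hP, hPp⟩ := Finset.mem_filter.mp hP
              rw [mem_primeIdealsLE] at hP
              obtain ⟨q, k, hk, hqP, hq, hN, hmin⟩ := exists_absNorm_eq_prime_pow hP.1 hP.2.1
              exact ⟨hP.1, hP.2.1, by rwa [← hPp, hmin]⟩
    _ ≤ _ := by
        rw [← Finset.mul_sum]
        gcongr
        exact hsum.sum_le_tsum _ fun p _ ↦ h0 p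

variable (K) in
lemma exists_sum_log_absNorm_mul_rpow_le {s : ℝ} (hs : 0 < s) (hs1 : s ≤ 1) :
    ∃ C : ℝ, 0 ≤ C ∧ ∀ Y : ℝ, 0 ≤ Y → ∑ P ∈ primeIdealsLE K Y,
      Real.log (Ideal.absNorm P) * (Ideal.absNorm P : ℝ) ^ (s - 1) ≤ C * Y ^ s := by
  set D : ℝ := finrank ℚ K * Real.log 4 * 2 with hD
  have hD0 : 0 ≤ D := by have := Real.log_nonneg (x := 4) (by norm_num); positivity
  have h2 : (2 : ℝ) ^ (-s) < 1 := Real.rpow_lt_one_of_one_lt_of_neg (by norm_num) (by linarith)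
  have h2' : 0 < 1 - (2 : ℝ) ^ (-s) := by linarith
  refine ⟨D / (1 - (2 : ℝ) ^ (-s)), by positivity, ?_⟩
  set A := D / (1 - (2 : ℝ) ^ (-s)) with hA
  have hAeq : A * (2 : ℝ) ^ (-s) + D = A := by rw [hA]; field_simp; ring
  have hA0 : 0 ≤ A := by positivity
  have key : ∀ k : ℕ, ∀ Y : ℝ, 0 ≤ Y → Y < 2 ^ k → ∑ P ∈ primeIdealsLE K Y,
      Real.log (Ideal.absNorm P) * (Ideal.absNorm P : ℝ) ^ (s - 1) ≤ A * Y ^ s := by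
    intro k
    induction k with
    | zero =>
      intro Y hY hY1
      rw [Finset.sum_eq_zero]
      · positivity
      · intro P hP
        rw [mem_primeIdealsLE] at hP
        have h3 : (2 : ℝ) ≤ Ideal.absNorm P := by exact_mod_cast two_le_absNorm hP.1 hP.2.1
        norm_num at hY1
        linarith
    | succ k ih =>
      intro Y hY hYk
      rcases hY.eq_or_lt with rfl | hY0
      · exact ih 0 le_rfl (by positivity)
      have h3 := ih (Y / 2) (by positivity) (by rw [pow_succ] at hYk; linarith)
      have h4 : ∑ P ∈ primeIdealsLE K Y \ primeIdealsLE K (Y / 2),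
          Real.log (Ideal.absNorm P) * (Ideal.absNorm P : ℝ) ^ (s - 1) ≤ D * Y ^ s := by
        calc _ ≤ ∑ P ∈ primeIdealsLE K Y \ primeIdealsLE K (Y / 2),
              Real.log (Ideal.absNorm P) * (Y / 2) ^ (s - 1) := by
              refine Finset.sum_le_sum fun P hP ↦ ?_
              obtain ⟨hP, hP'⟩ := Finset.mem_sdiff.mp hP
              rw [mem_primeIdealsLE] at hP hP'
              have h5 : Y / 2 ≤ Ideal.absNorm P := by
                by_contra! h
                exact hP' ⟨hP.1, hP.2.1, h.le⟩
              exact mul_le_mul_of_nonneg_left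
                (Real.rpow_le_rpow_of_nonpos (by positivity) h5 (by linarith))
                (log_absNorm_nonneg P)
          _ ≤ ∑ P ∈ primeIdealsLE K Y, Real.log (Ideal.absNorm P) * (Y / 2) ^ (s - 1) :=
              Finset.sum_le_sum_of_subset_of_nonneg Finset.sdiff_subset fun P _ _ ↦
                mul_nonneg (log_absNorm_nonneg P) (by positivity)
          _ ≤ finrank ℚ K * Real.log 4 * Y * (Y / 2) ^ (s - 1) := by
              rw [← Finset.sum_mul]
              gcongr
              exact sum_log_absNorm_le hY
          _ = D * (Y / 2) ^ s := by
              rw [Real.rpow_sub_one (by positivity), hD]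
              field_simp
          _ ≤ _ := by
              gcongr
              linarith
      rw [← Finset.sum_sdiff (primeIdealsLE_mono (K := K) (show Y / 2 ≤ Y by linarith))]
      calc _ ≤ D * Y ^ s + A * (Y / 2) ^ s := add_le_add h4 h3
        _ = (A * (2 : ℝ) ^ (-s) + D) * Y ^ s := by
          rw [Real.div_rpow hY (by norm_num), Real.rpow_neg (by norm_num)]
          ring
        _ = _ := by rw [hAeq]
  intro Y hY
  obtain ⟨k, hk⟩ := pow_unbounded_of_one_lt Y (one_lt_two (α := ℝ))
  exact key k Y hY hk

open Classical in
lemma log_absNorm_eq_sum {I : Ideal (𝓞 K)} (hI : I ≠ ⊥) {Y : ℝ}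
    (hY : (Ideal.absNorm I : ℝ) ≤ Y) {L : ℕ} (hL : Y ≤ L) :
    Real.log (Ideal.absNorm I) = ∑ P ∈ primeIdealsLE K Y, ∑ k ∈ Finset.Icc 1 L,
      if P ^ k ∣ I then Real.log (Ideal.absNorm P) else 0 := by
  set M := UniqueFactorizationMonoid.normalizedFactors I with hM
  have hN0 : 0 < Ideal.absNorm I := by
    rwa [Nat.pos_iff_ne_zero, Ne, Ideal.absNorm_eq_zero_iff]
  have hfact : Ideal.absNorm I = ∏ P ∈ M.toFinset, Ideal.absNorm P ^ M.count P := by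
    rw [← Finset.prod_multiset_map_count, ← map_multiset_prod, hM,
      Ideal.prod_normalizedFactors_eq_self hI]
  have hmem : ∀ P ∈ M.toFinset, P.IsPrime ∧ P ≠ ⊥ ∧ P ∣ I := fun P hP ↦ by
    have h1 := Multiset.mem_toFinset.mp hP
    have h2 := UniqueFactorizationMonoid.prime_of_normalized_factor P h1
    exact ⟨Ideal.isPrime_of_prime h2, h2.ne_zero,
      UniqueFactorizationMonoid.dvd_of_mem_normalizedFactors h1⟩
  have hsub : M.toFinset ⊆ primeIdealsLE K Y := fun P hP ↦ by
    obtain ⟨h1, h2, h3⟩ := hmem P hP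
    refine mem_primeIdealsLE.mpr ⟨h1, h2, le_trans ?_ hY⟩
    exact_mod_cast Nat.le_of_dvd hN0 (map_dvd Ideal.absNorm h3)
  have hlog : Real.log (Ideal.absNorm I) =
      ∑ P ∈ M.toFinset, M.count P * Real.log (Ideal.absNorm P) := by
    rw [hfact]
    push_cast
    rw [Real.log_prod]
    · simp
    · intro P hP
      have := two_le_absNorm (hmem P hP).1 (hmem P hP).2.1
      positivity
  rw [hlog, Finset.sum_subset hsub]
  · refine Finset.sum_congr rfl fun P hP ↦ ?_
    rw [mem_primeIdealsLE] at hP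
    have hprime := Ideal.prime_of_isPrime hP.2.1 hP.1
    have hdvd : ∀ k, P ^ k ∣ I ↔ k ≤ M.count P := fun k ↦ by
      rw [pow_dvd_iff_le_emultiplicity,
        UniqueFactorizationMonoid.emultiplicity_eq_count_normalizedFactors hprime.irreducible hI,
        normalize_eq, Nat.cast_le]
    have hcount : M.count P ≤ L := by
      have h1 := map_dvd Ideal.absNorm ((hdvd _).mpr le_rfl)
      rw [map_pow] at h1
      have h2 : M.count P < Ideal.absNorm I :=
        (Nat.lt_pow_self (two_le_absNorm hP.1 hP.2.1)).trans_le (Nat.le_of_dvd hN0 h1)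
      have h3 : (Ideal.absNorm I : ℝ) ≤ L := hY.trans hL
      exact h2.le.trans (by exact_mod_cast h3)
    rw [← Finset.sum_filter, Finset.sum_const, nsmul_eq_mul]
    congr 2
    have : (Finset.Icc 1 L).filter (fun k ↦ P ^ k ∣ I) = Finset.Icc 1 (M.count P) := by
      ext k
      simp only [Finset.mem_filter, Finset.mem_Icc, hdvd]
      omega
    rw [this, Nat.card_Icc]
    omega
  · intro P _ hP
    rw [Multiset.mem_toFinset] at hP
    simp [Multiset.count_eq_zero.mpr hP]

end PrimeSums

section Mertens

variable {K : Type*} [Field K] [NumberField K] {ι : Type*} [Fintype ι] [DecidableEq ι]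

open Classical in
lemma sum_log_absNorm_coordBox (b : Basis ι ℤ (𝓞 K)) {a : ι → ℤ} {X : ℕ} {Y : ℝ}
    (h0 : ∀ α ∈ coordBox b a X, α ≠ 0)
    (hY : ∀ α ∈ coordBox b a X, (Ideal.absNorm (Ideal.span {α}) : ℝ) ≤ Y) {L : ℕ} (hL : Y ≤ L) :
    ∑ α ∈ coordBox b a X, Real.log (Ideal.absNorm (Ideal.span {α})) =
      ∑ P ∈ primeIdealsLE K Y, Real.log (Ideal.absNorm P) *
        ∑ k ∈ Finset.Icc 1 L, (((coordBox b a X).filter (· ∈ P ^ k)).card : ℝ) := by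
  rw [Finset.sum_congr rfl fun α hα ↦ log_absNorm_eq_sum
    (by rw [Ne, Ideal.span_singleton_eq_bot]; exact h0 α hα) (hY α hα) hL, Finset.sum_comm]
  refine Finset.sum_congr rfl fun P _ ↦ ?_
  rw [Finset.sum_comm, Finset.mul_sum]
  refine Finset.sum_congr rfl fun k _ ↦ ?_
  rw [← Finset.sum_filter, Finset.sum_const, nsmul_eq_mul, mul_comm]
  simp only [Ideal.dvd_span_singleton]

lemma sum_Icc_two_inv_pow_le {q : ℝ} (hq : 2 ≤ q) (L : ℕ) :
    ∑ k ∈ Finset.Icc 2 L, 1 / q ^ k ≤ 2 / q ^ 2 := by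
  have h1 : q⁻¹ ≤ 1 / 2 := by rw [inv_le_comm₀ (by linarith) (by norm_num)]; simpa using hq
  have h2 : 0 ≤ q⁻¹ := by positivity
  have h3 := geom_sum_Ico_le_of_lt_one h2 (by linarith) (m := 2) (n := L + 1)
  have h4 : Finset.Ico 2 (L + 1) = Finset.Icc 2 L := by
    ext; simp only [Finset.mem_Ico, Finset.mem_Icc]; omega
  rw [h4] at h3
  simp only [one_div, ← inv_pow]
  refine h3.trans ?_
  rw [div_eq_mul_inv, div_eq_mul_inv, mul_comm, ← inv_pow]
  gcongr
  rw [inv_le_comm₀ (by linarith) (by norm_num)]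
  linarith

open Classical in
lemma exists_abs_sum_card_coordBox_sub_le (b : Basis ι ℤ (𝓞 K)) {T : ℝ} (hT : 0 ≤ T) :
    ∃ C : ℝ, 0 ≤ C ∧ ∀ (a : ι → ℤ) (X : ℕ) (P : Ideal (𝓞 K)) (L : ℕ), 1 ≤ L → P.IsPrime → P ≠ ⊥ →
      (Ideal.absNorm P : ℝ) ≤ (T * X) ^ Fintype.card ι →
      (∀ α ∈ coordBox b a X, α ≠ 0 ∧
        (Ideal.absNorm (Ideal.span {α}) : ℝ) ≤ (T * X) ^ Fintype.card ι) →
      |∑ k ∈ Finset.Icc 1 L, (((coordBox b a X).filter (· ∈ P ^ k)).card : ℝ) -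
        X ^ Fintype.card ι / Ideal.absNorm P| ≤
      C * X ^ (Fintype.card ι - 1) * (Ideal.absNorm P : ℝ) ^ ((1 / Fintype.card ι : ℝ) - 1) +
        C * X ^ Fintype.card ι / (Ideal.absNorm P : ℝ) ^ 2 := by
  obtain ⟨C₁, hC₁, h₁⟩ := exists_abs_card_coordBox_inter_ideal_sub_le b hT
  obtain ⟨C₂, hC₂, h₂⟩ := exists_card_coordBox_inter_ideal_le b hT
  refine ⟨max C₁ (2 * C₂), by positivity, fun a X P L hL hP hP0 hPX hbox ↦ ?_⟩
  have hn := card_basis_ne_zero b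
  set n := Fintype.card ι
  have hroot : ∀ N : ℕ, 0 < N → 0 < (N : ℝ) ^ (1 / n : ℝ) ∧ ((N : ℝ) ^ (1 / n : ℝ)) ^ n = N :=
    fun N hN ↦ ⟨by positivity, by
      rw [one_div, Real.rpow_inv_natCast_pow (by positivity) hn]⟩
  have hroot_le : ∀ N : ℕ, 0 < N → (N : ℝ) ≤ (T * X) ^ n → (N : ℝ) ^ (1 / n : ℝ) ≤ T * X := by
    intro N hN hle
    refine le_of_pow_le_pow_left₀ hn (by positivity) ?_
    rwa [(hroot N hN).2]
  have hNP := two_le_absNorm hP hP0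
  have hNP' : (0 : ℝ) < Ideal.absNorm P := by positivity
  have hfirst := h₁ P hP0 a X _ (hroot _ (by omega)).1 (hroot _ (by omega)).2
    (hroot_le _ (by omega) hPX)
  have hhigh : ∀ k, (((coordBox b a X).filter (· ∈ P ^ k)).card : ℝ) ≤
      C₂ * X ^ n * (1 / (Ideal.absNorm P : ℝ) ^ k) := by
    intro k
    by_cases hk : ((Ideal.absNorm (P ^ k) : ℕ) : ℝ) ≤ (T * X) ^ n
    · have hpos : 0 < Ideal.absNorm (P ^ k) := by rw [map_pow]; positivity
      have := h₂ (P ^ k) a X _ (hroot _ hpos).1 (hroot _ hpos).2 (hroot_le _ hpos hk)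
        ((coordBox b a X).filter (· ∈ P ^ k)) fun α hα ↦ Finset.mem_filter.mp hα
      rw [map_pow] at this
      push_cast at this
      rwa [mul_one_div, mul_div_assoc]
    · rw [Finset.filter_eq_empty_iff.mpr]
      · simp only [Finset.card_empty, Nat.cast_zero]; positivity
      · intro α hα hαP
        apply hk
        refine le_trans ?_ (hbox α hα).2
        have hpos : 0 < Ideal.absNorm (Ideal.span {α}) := by
          rw [Nat.pos_iff_ne_zero, Ne, Ideal.absNorm_eq_zero_iff, Ideal.span_singleton_eq_bot]
          exact (hbox α hα).1
        exact_mod_cast Nat.le_of_dvd hpos (map_dvd _ (Ideal.dvd_span_singleton.mpr hαP))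
  have hsplit : ∑ k ∈ Finset.Icc 1 L, (((coordBox b a X).filter (· ∈ P ^ k)).card : ℝ) =
      ((coordBox b a X).filter (· ∈ P)).card +
        ∑ k ∈ Finset.Icc 2 L, (((coordBox b a X).filter (· ∈ P ^ k)).card : ℝ) := by
    have hIcc : Finset.Icc 1 L = insert 1 (Finset.Icc 2 L) := by
      ext; simp only [Finset.mem_insert, Finset.mem_Icc]; omega
    rw [hIcc, Finset.sum_insert (by simp), pow_one]
  have htail : ∑ k ∈ Finset.Icc 2 L, (((coordBox b a X).filter (· ∈ P ^ k)).card : ℝ) ≤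
      2 * C₂ * X ^ n / (Ideal.absNorm P : ℝ) ^ 2 := by
    refine (Finset.sum_le_sum fun k _ ↦ hhigh k).trans ?_
    rw [← Finset.mul_sum]
    have h3 := sum_Icc_two_inv_pow_le (q := Ideal.absNorm P) (by exact_mod_cast hNP) L
    calc _ ≤ C₂ * X ^ n * (2 / (Ideal.absNorm P : ℝ) ^ 2) := by gcongr
      _ = _ := by ring
  have htail0 : 0 ≤ ∑ k ∈ Finset.Icc 2 L, (((coordBox b a X).filter (· ∈ P ^ k)).card : ℝ) :=
    Finset.sum_nonneg fun _ _ ↦ Nat.cast_nonneg _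
  have hrpow : ((X : ℝ) / (Ideal.absNorm P : ℝ) ^ (1 / n : ℝ)) ^ (n - 1) =
      X ^ (n - 1) * (Ideal.absNorm P : ℝ) ^ ((1 / n : ℝ) - 1) := by
    rw [div_pow, div_eq_mul_inv]
    congr 1
    rw [Real.rpow_sub_one hNP'.ne', inv_eq_iff_eq_inv, inv_div, eq_div_iff (by positivity),
      pow_sub_one_mul hn]
    exact (hroot _ (by omega)).2
  rw [hrpow, ← mul_assoc] at hfirst
  rw [hsplit, add_sub_right_comm]
  refine (abs_add_le _ _).trans (add_le_add (hfirst.trans ?_) ?_)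
  · gcongr
    exact le_max_left _ _
  · rw [abs_of_nonneg htail0]
    refine htail.trans ?_
    gcongr
    exact le_max_right _ _

/-- Mertens' first theorem for prime ideals, along the scales `(T * X) ^ n`. -/
lemma exists_abs_sum_log_div_absNorm_sub_le_of_basis (b : Basis ι ℤ (𝓞 K)) :
    ∃ T : ℝ, 1 ≤ T ∧ ∃ C : ℝ, ∀ X : ℕ, 1 ≤ X →
      |∑ P ∈ primeIdealsLE K ((T * X) ^ Fintype.card ι),
        Real.log (Ideal.absNorm P) / Ideal.absNorm P - Fintype.card ι * Real.log X| ≤ C := by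
  classical
  have hn := card_basis_ne_zero b
  obtain ⟨T, hT1, hT⟩ := exists_coordBox_norm_bounds b
  obtain ⟨C₁, hC₁, h₁⟩ := exists_abs_sum_card_coordBox_sub_le b (zero_le_one.trans hT1)
  obtain ⟨C₂, hC₂, h₂⟩ := exists_sum_log_absNorm_div_minFac_sq_le K
  obtain ⟨C₃, hC₃, h₃⟩ := exists_sum_log_absNorm_mul_rpow_le K (s := 1 / Fintype.card ι)
    (by positivity) (by
      rw [div_le_one (by positivity)]; exact_mod_cast Nat.one_le_iff_ne_zero.mpr hn)
  set n := Fintype.card ι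
  refine ⟨T, hT1, n * Real.log T + (C₁ * (C₃ * T) + C₁ * C₂), fun X hX ↦ ?_⟩
  have hX' : (1 : ℝ) ≤ X := by exact_mod_cast hX
  have hX0 : (0 : ℝ) < X := by linarith
  obtain ⟨a, ha⟩ := hT X
  set Y := (T * X) ^ n with hY
  have hY1 : 1 ≤ Y := one_le_pow₀ (by nlinarith)
  set L := ⌈Y⌉₊
  have hL : Y ≤ L := Nat.le_ceil Y
  have hL1 : 1 ≤ L := by exact_mod_cast hY1.trans hL
  have hpos : ∀ α ∈ coordBox b a X, 0 < (Ideal.absNorm (Ideal.span {α}) : ℝ) :=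
    fun α hα ↦ lt_of_lt_of_le (by positivity) (ha α hα).1
  have h0 : ∀ α ∈ coordBox b a X, α ≠ 0 := by
    rintro α hα rfl
    simpa using hpos 0 hα
  have hid := sum_log_absNorm_coordBox b h0 (fun α hα ↦ (ha α hα).2) hL
  set S := primeIdealsLE K Y
  set W := ∑ α ∈ coordBox b a X, Real.log (Ideal.absNorm (Ideal.span {α}))
  set M := ∑ P ∈ S, Real.log (Ideal.absNorm P) / Ideal.absNorm P with hM
  have hlogT : 0 ≤ Real.log T := Real.log_nonneg hT1
  have hbox : |W - X ^ n * (n * Real.log X)| ≤ X ^ n * (n * Real.log T) := by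
    have hcard : (X : ℝ) ^ n * (n * Real.log X) = ∑ α ∈ coordBox b a X, n * Real.log X := by
      rw [Finset.sum_const, card_coordBox, nsmul_eq_mul]
      push_cast
      rfl
    have hcard' : (X : ℝ) ^ n * (n * Real.log T) = ∑ α ∈ coordBox b a X, n * Real.log T := by
      rw [Finset.sum_const, card_coordBox, nsmul_eq_mul]
      push_cast
      rfl
    rw [hcard, hcard', ← Finset.sum_sub_distrib]
    refine (Finset.abs_sum_le_sum_abs _ _).trans (Finset.sum_le_sum fun α hα ↦ ?_)
    have h4 := Real.log_le_log (by positivity) (ha α hα).1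
    have h5 := Real.log_le_log (hpos α hα) (ha α hα).2
    rw [Real.log_pow] at h4
    rw [hY, Real.log_pow, Real.log_mul (by positivity) hX0.ne', mul_add] at h5
    rw [abs_le]
    constructor
    · have : 0 ≤ n * Real.log T := by positivity
      linarith
    · linarith
  have hdiff : |W - X ^ n * M| ≤ X ^ n * (C₁ * (C₃ * T) + C₁ * C₂) := by
    calc |W - X ^ n * M| = |∑ P ∈ S, Real.log (Ideal.absNorm P) *
          (∑ k ∈ Finset.Icc 1 L, (((coordBox b a X).filter (· ∈ P ^ k)).card : ℝ) -
            X ^ n / Ideal.absNorm P)| := by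
          rw [hid, hM, Finset.mul_sum, ← Finset.sum_sub_distrib]
          congr 1
          refine Finset.sum_congr rfl fun P _ ↦ ?_
          ring
      _ ≤ ∑ P ∈ S, Real.log (Ideal.absNorm P) *
          (C₁ * X ^ (n - 1) * (Ideal.absNorm P : ℝ) ^ ((1 / n : ℝ) - 1) +
            C₁ * X ^ n / ((Ideal.absNorm P).minFac : ℝ) ^ 2) := by
          refine (Finset.abs_sum_le_sum_abs _ _).trans (Finset.sum_le_sum fun P hP ↦ ?_)
          rw [mem_primeIdealsLE] at hP
          rw [abs_mul, abs_of_nonneg (log_absNorm_nonneg P)]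
          have hN := two_le_absNorm hP.1 hP.2.1
          refine mul_le_mul_of_nonneg_left ((h₁ a X P L hL1 hP.1 hP.2.1 hP.2.2
            fun α hα ↦ ⟨h0 α hα, (ha α hα).2⟩).trans ?_) (log_absNorm_nonneg P)
          have hmin : 0 < (Ideal.absNorm P).minFac := Nat.minFac_pos _
          gcongr
          exact_mod_cast Nat.minFac_le (by omega)
      _ = C₁ * X ^ (n - 1) * (∑ P ∈ S, Real.log (Ideal.absNorm P) *
            (Ideal.absNorm P : ℝ) ^ ((1 / n : ℝ) - 1)) +
          C₁ * X ^ n * ∑ P ∈ S, Real.log (Ideal.absNorm P) /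
            ((Ideal.absNorm P).minFac : ℝ) ^ 2 := by
          rw [Finset.mul_sum, Finset.mul_sum, ← Finset.sum_add_distrib]
          refine Finset.sum_congr rfl fun P _ ↦ ?_
          ring
      _ ≤ C₁ * X ^ (n - 1) * (C₃ * (T * X)) + C₁ * X ^ n * C₂ := by
          have h6 := h₃ Y (by positivity)
          rw [hY, one_div, Real.pow_rpow_inv_natCast (by positivity) hn, ← one_div, ← hY] at h6
          gcongr
          exact h₂ Y
      _ = X ^ n * (C₁ * (C₃ * T) + C₁ * C₂) := by
          rw [← pow_sub_one_mul hn (X : ℝ)]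
          ring
  have hXn : (0 : ℝ) < X ^ n := by positivity
  refine le_of_mul_le_mul_left ?_ hXn
  rw [← abs_of_pos hXn, ← abs_mul, abs_of_pos hXn, mul_add]
  calc _ = |(W - X ^ n * (n * Real.log X)) - (W - X ^ n * M)| := by congr 1; ring
    _ ≤ _ := abs_sub _ _
    _ ≤ _ := add_le_add hbox hdiff

variable (K) in
/-- Mertens' first theorem for prime ideals of a number field. -/
theorem exists_abs_sum_log_div_absNorm_sub_log_le :
    ∃ C : ℝ, ∀ x : ℝ, 1 ≤ x →
      |∑ P ∈ primeIdealsLE K x, Real.log (Ideal.absNorm P) / Ideal.absNorm P - Real.log x| ≤ C := by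
  classical
  have b := RingOfIntegers.basis K
  have hn := card_basis_ne_zero b
  obtain ⟨T, hT1, C, hC⟩ := exists_abs_sum_log_div_absNorm_sub_le_of_basis b
  set n := Fintype.card (Free.ChooseBasisIndex ℤ (𝓞 K))
  have hlog4 : 0 ≤ Real.log 4 := Real.log_nonneg (by norm_num)
  refine ⟨C + finrank ℚ K * Real.log 4 * (T * 2) ^ n + n * Real.log 2, fun x hx ↦ ?_⟩
  have hx0 : 0 < x := by linarith
  set y := x ^ (1 / n : ℝ) with hy
  have hyn : y ^ n = x := by rw [hy, one_div, Real.rpow_inv_natCast_pow hx0.le hn]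
  have hy1 : 1 ≤ y := Real.one_le_rpow hx (by positivity)
  set X := ⌈y⌉₊
  have hyX : y ≤ X := Nat.le_ceil y
  have hX1 : 1 ≤ X := by exact_mod_cast hy1.trans hyX
  have hX2 : (X : ℝ) ≤ 2 * y := by
    have := Nat.ceil_lt_add_one (zero_le_one.trans hy1)
    linarith
  have hX0 : (0 : ℝ) < X := by exact_mod_cast hX1
  set Y := (T * X) ^ n with hY
  have hxY : x ≤ Y := by
    rw [← hyn, hY]
    gcongr
    nlinarith
  have hYx : Y ≤ (T * 2) ^ n * x := by
    rw [← hyn, hY, ← mul_pow]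
    exact pow_le_pow_left₀ (by positivity) (by nlinarith) n
  have hmain := hC X hX1
  have hgap : ∑ P ∈ primeIdealsLE K Y \ primeIdealsLE K x,
      Real.log (Ideal.absNorm P) / Ideal.absNorm P ≤ finrank ℚ K * Real.log 4 * (T * 2) ^ n := by
    calc _ ≤ ∑ P ∈ primeIdealsLE K Y \ primeIdealsLE K x, Real.log (Ideal.absNorm P) / x := by
          refine Finset.sum_le_sum fun P hP ↦ ?_
          obtain ⟨hP, hP'⟩ := Finset.mem_sdiff.mp hP
          rw [mem_primeIdealsLE] at hP hP'
          refine div_le_div_of_nonneg_left (log_absNorm_nonneg P) hx0 ?_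
          by_contra! h
          exact hP' ⟨hP.1, hP.2.1, h.le⟩
      _ ≤ ∑ P ∈ primeIdealsLE K Y, Real.log (Ideal.absNorm P) / x :=
          Finset.sum_le_sum_of_subset_of_nonneg Finset.sdiff_subset fun P _ _ ↦
            div_nonneg (log_absNorm_nonneg P) hx0.le
      _ ≤ (finrank ℚ K * Real.log 4 * ((T * 2) ^ n * x)) / x := by
          rw [← Finset.sum_div]
          gcongr
          exact (sum_log_absNorm_le (hx0.le.trans hxY)).trans (by gcongr)
      _ = _ := by field_simp
  have hgap0 : 0 ≤ ∑ P ∈ primeIdealsLE K Y \ primeIdealsLE K x,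
      Real.log (Ideal.absNorm P) / Ideal.absNorm P :=
    Finset.sum_nonneg fun P _ ↦ div_nonneg (log_absNorm_nonneg P) (Nat.cast_nonneg _)
  rw [← Finset.sum_sdiff (primeIdealsLE_mono (K := K) hxY)] at hmain
  have hlog1 : Real.log x ≤ n * Real.log X := by
    rw [← hyn, Real.log_pow]
    gcongr
  have hlog2 : n * Real.log X ≤ Real.log x + n * Real.log 2 := by
    have : Real.log X ≤ Real.log 2 + Real.log y := by
      rw [← Real.log_mul (by norm_num) (by positivity)]
      exact Real.log_le_log hX0 hX2
    rw [← hyn, Real.log_pow, ← mul_add, add_comm]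
    gcongr
  have hlog3 : 0 ≤ n * Real.log 2 := by
    have := Real.log_nonneg (x := 2) (by norm_num)
    positivity
  rw [abs_le] at hmain ⊢
  constructor <;> linarith

end Mertens

/-- The number of roots of `f` modulo `p`. -/
def rootCount (f : ℤ[X]) (p : ℕ) : ℕ :=
  ((Finset.range p).filter fun r : ℕ ↦ (p : ℤ) ∣ f.eval (r : ℤ)).card

section RootsModP

lemma exists_numberField_of_irreducible {f : ℤ[X]} (hf : Irreducible f) (hdeg : 1 ≤ f.natDegree) :
    ∃ (K : Type) (_ : Field K) (_ : NumberField K) (η : 𝓞 K),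
      aeval η (f.scaleRoots f.leadingCoeff) = 0 ∧
      (∀ G : ℤ[X], aeval η G = 0 → f ∣ G.comp (C f.leadingCoeff * X)) ∧
      ∃ D : ℤ, D ≠ 0 ∧ ∀ x : 𝓞 K, ∃ U : ℤ[X], aeval η U = D • x := by
  have hprim := hf.isPrimitive (by omega)
  set g := f.map (Int.castRingHom ℚ) with hg
  have hgirr : Irreducible g := (IsPrimitive.Int.irreducible_iff_irreducible_map_cast hprim).mp hf
  have : Fact (Irreducible g) := ⟨hgirr⟩
  have hfin : FiniteDimensional ℚ (AdjoinRoot g) := (AdjoinRoot.powerBasis hgirr.ne_zero).finite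
  have hchar : CharZero (AdjoinRoot g) :=
    charZero_of_injective_algebraMap (algebraMap ℚ (AdjoinRoot g)).injective
  have : NumberField (AdjoinRoot g) := ⟨⟩
  set a := f.leadingCoeff
  have ha : a ≠ 0 := leadingCoeff_ne_zero.mpr hf.ne_zero
  set θ := AdjoinRoot.root g
  have haeval : ∀ G : ℤ[X], aeval θ G = AdjoinRoot.mk g (G.map (Int.castRingHom ℚ)) := by
    intro G
    rw [← AdjoinRoot.aeval_eq, aeval_def, aeval_def, eval₂_map]
    congr 1
  have hdvd : ∀ G : ℤ[X], aeval θ G = 0 ↔ f ∣ G := by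
    intro G
    rw [haeval, AdjoinRoot.mk_eq_zero, IsPrimitive.Int.dvd_iff_map_cast_dvd_map_cast f G hprim]
  have hscale : ∀ G : ℤ[X], aeval (a • θ) (G.scaleRoots a) = a ^ G.natDegree • aeval θ G := by
    intro G
    rw [zsmul_eq_mul, zsmul_eq_mul]
    have := scaleRoots_eval₂_mul (p := G) (algebraMap ℤ (AdjoinRoot g)) θ a
    simpa [aeval_def] using this
  have hint : IsIntegral ℤ (a • θ) :=
    isIntegral_leadingCoeff_smul f θ ((hdvd f).mpr dvd_rfl)
  let η : 𝓞 (AdjoinRoot g) := ⟨a • θ, hint⟩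
  have hη : ∀ G : ℤ[X],
      algebraMap (𝓞 (AdjoinRoot g)) (AdjoinRoot g) (aeval η G) = aeval (a • θ) G :=
    fun G ↦ (aeval_algebraMap_apply (AdjoinRoot g) η G).symm
  refine ⟨AdjoinRoot g, inferInstance, inferInstance, η, ?_, fun G hG ↦ ?_, ?_⟩
  · apply RingOfIntegers.coe_injective
    rw [hη, hscale, (hdvd f).mpr dvd_rfl, smul_zero, map_zero]
  · rw [← hdvd, aeval_comp, map_mul, aeval_C, aeval_X, ← Algebra.smul_def, ← hη, hG, map_zero]
  · let N : Submodule ℤ (𝓞 (AdjoinRoot g)) := LinearMap.range (aeval (R := ℤ) η).toLinearMap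
    have htors : Module.IsTorsion ℤ (𝓞 (AdjoinRoot g) ⧸ N) := by
      intro y
      obtain ⟨x, rfl⟩ := N.mkQ_surjective y
      obtain ⟨q, hq⟩ := AdjoinRoot.mk_surjective
        (algebraMap (𝓞 (AdjoinRoot g)) (AdjoinRoot g) x)
      obtain ⟨d, hd0, hd⟩ := IsLocalization.integerNormalization_spec (nonZeroDivisors ℤ) q
      set U := IsLocalization.integerNormalization (nonZeroDivisors ℤ) q
      refine ⟨⟨a ^ U.natDegree, mem_nonZeroDivisors_of_ne_zero (pow_ne_zero _ ha)⟩ * ⟨d, hd0⟩, ?_⟩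
      rw [Submonoid.smul_def, Submodule.mkQ_apply, ← Submodule.Quotient.mk_smul,
        Submodule.Quotient.mk_eq_zero]
      refine ⟨U.scaleRoots a, RingOfIntegers.coe_injective ?_⟩
      rw [AlgHom.toLinearMap_apply, hη, hscale, haeval, ← algebraMap_int_eq, hd]
      simp only [zsmul_eq_mul, map_mul, map_intCast, hq, Submonoid.coe_mul, Int.cast_mul,
        Int.cast_pow, mul_assoc, map_pow]
    obtain ⟨D, hD, hD0⟩ := Submodule.annihilator_top_inter_nonZeroDivisors htors
    refine ⟨D, nonZeroDivisors.ne_zero hD0, fun x ↦ ?_⟩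
    have h1 := Submodule.mem_annihilator.mp hD (N.mkQ x) trivial
    rwa [Submodule.mkQ_apply, ← Submodule.Quotient.mk_smul, Submodule.Quotient.mk_eq_zero] at h1

variable {K : Type*} [Field K]

lemma intCast_sub_mem_ideal_of_modEq {P : Ideal (𝓞 K)} {p : ℕ} (hp : (p : 𝓞 K) ∈ P) {m n : ℤ}
    (h : (p : ℤ) ∣ m - n) : (m : 𝓞 K) - n ∈ P := by
  obtain ⟨c, hc⟩ := h
  rw [← Int.cast_sub, hc]
  push_cast
  exact P.mul_mem_right _ hp

lemma aeval_sub_intCast_mem {P : Ideal (𝓞 K)} {η : 𝓞 K} {k : ℤ} (h : η - k ∈ P) (U : ℤ[X]) :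
    aeval η U - ((U.eval k : ℤ) : 𝓞 K) ∈ P := by
  have h1 := sub_dvd_eval_sub η (k : 𝓞 K) (U.map (algebraMap ℤ (𝓞 K)))
  rw [eval_map_algebraMap, eval_map_algebraMap, ← eq_intCast (algebraMap ℤ (𝓞 K)) k,
    aeval_algebraMap_apply_eq_algebraMap_eval, eq_intCast, eq_intCast] at h1
  exact P.mem_of_dvd h1 h

variable [NumberField K]

lemma intCast_mem_iff_dvd {P : Ideal (𝓞 K)} {p : ℕ} (hp : p.Prime) (hP : P ≠ ⊤)
    (hpP : (p : 𝓞 K) ∈ P) (m : ℤ) : (m : 𝓞 K) ∈ P ↔ (p : ℤ) ∣ m := by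
  refine ⟨fun hm ↦ ?_, fun ⟨c, hc⟩ ↦ ?_⟩
  · by_contra h
    obtain ⟨u, v, huv⟩ := (Nat.prime_iff_prime_int.mp hp).irreducible.coprime_iff_not_dvd.mpr h
    refine hP ((Ideal.eq_top_iff_one P).mpr ?_)
    have : (1 : 𝓞 K) = u * (p : 𝓞 K) + v * (m : 𝓞 K) := by exact_mod_cast huv.symm
    rw [this]
    exact P.add_mem (P.mul_mem_left _ hpP) (P.mul_mem_left _ hm)
  · rw [hc]
    push_cast
    exact P.mul_mem_right _ hpP

lemma exists_sub_intCast_mem_of_absNorm_eq {P : Ideal (𝓞 K)} {p : ℕ} (hp : p.Prime)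
    (hP : Ideal.absNorm P = p) (x : 𝓞 K) : ∃ k : ℤ, x - k ∈ P := by
  have : Fact p.Prime := ⟨hp⟩
  have hcard : Nat.card (𝓞 K ⧸ P) = p := by rw [natCard_quotient_eq_absNorm, hP]
  have h1 : (1 : 𝓞 K ⧸ P) ≠ 0 := by
    intro h
    rw [← map_one (Ideal.Quotient.mk P), Ideal.Quotient.eq_zero_iff_mem,
      ← Ideal.eq_top_iff_one] at h
    rw [h, Ideal.absNorm_top] at hP
    exact hp.one_lt.ne hP
  obtain ⟨k, hk⟩ := AddSubgroup.mem_zmultiples_iff.mp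
    (mem_zmultiples_of_prime_card hcard h1 (g' := Ideal.Quotient.mk P x))
  refine ⟨k, ?_⟩
  rw [← Ideal.Quotient.eq_zero_iff_mem, map_sub, ← hk]
  simp

lemma absNorm_eq_prime_of_forall_exists {P : Ideal (𝓞 K)} {p : ℕ} (hp : p.Prime)
    (hP : P ≠ ⊤) (hpP : (p : 𝓞 K) ∈ P) (h : ∀ x : 𝓞 K, ∃ k : ℤ, x - k ∈ P) :
    Ideal.absNorm P = p := by
  have : Fact p.Prime := ⟨hp⟩
  rw [← natCard_quotient_eq_absNorm]
  rw [← addOrderOf_eq_card_of_forall_mem_zmultiples (g := (1 : 𝓞 K ⧸ P))]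
  · apply addOrderOf_eq_prime
    · rw [nsmul_one, ← map_natCast (Ideal.Quotient.mk P), Ideal.Quotient.eq_zero_iff_mem]
      exact hpP
    · rw [← map_one (Ideal.Quotient.mk P), Ne, Ideal.Quotient.eq_zero_iff_mem,
        ← Ideal.eq_top_iff_one]
      exact hP
  · intro y
    obtain ⟨x, rfl⟩ := Ideal.Quotient.mk_surjective y
    obtain ⟨k, hk⟩ := h x
    refine AddSubgroup.mem_zmultiples_iff.mpr ⟨k, ?_⟩
    rw [← Ideal.Quotient.eq_zero_iff_mem, map_sub, sub_eq_zero] at hk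
    rw [hk]
    simp

/-- Dedekind's correspondence for primes of degree one. -/
lemma card_filter_absNorm_eq_rootCount {f : ℤ[X]} {η : 𝓞 K} {a D : ℤ} {p : ℕ} (hp : p.Prime)
    (hη : aeval η (f.scaleRoots a) = 0)
    (hf : ∀ G : ℤ[X], aeval η G = 0 → f ∣ G.comp (C a * X))
    (hD : ∀ x : 𝓞 K, ∃ U : ℤ[X], aeval η U = D • x) (hpD : ¬ (p : ℤ) ∣ D) (hpa : ¬ (p : ℤ) ∣ a)
    {Y : ℝ} (hY : (p : ℝ) ≤ Y) :
    ((primeIdealsLE K Y).filter fun P ↦ Ideal.absNorm P = p).card = rootCount f p := by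
  have hp' := Nat.prime_iff_prime_int.mp hp
  let J : ℕ → Ideal (𝓞 K) := fun r ↦ Ideal.span {(p : 𝓞 K), η - ((a * r : ℤ) : 𝓞 K)}
  have hpJ : ∀ r, (p : 𝓞 K) ∈ J r := fun r ↦ Ideal.subset_span (by simp)
  have hηJ : ∀ r, η - ((a * r : ℤ) : 𝓞 K) ∈ J r := fun r ↦ Ideal.subset_span (by simp)
  have hJtop : ∀ r : ℕ, (p : ℤ) ∣ f.eval (r : ℤ) → J r ≠ ⊤ := by
    intro r hr htop
    obtain ⟨y, z, hyz⟩ := Ideal.mem_span_pair.mp ((Ideal.eq_top_iff_one _).mp htop)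
    obtain ⟨U, hU⟩ := hD y
    obtain ⟨V, hV⟩ := hD z
    have h1 : aeval η (C D - C (p : ℤ) * U - (X - C (a * r : ℤ)) * V) = 0 := by
      simp only [map_sub, map_mul, aeval_C, aeval_X, hU, hV, algebraMap_int_eq,
        Int.coe_castRingHom, zsmul_eq_mul]
      push_cast
      push_cast at hyz
      linear_combination (-(D : 𝓞 K)) * hyz
    have h2 := eval_dvd (x := (r : ℤ)) (hf _ h1)
    simp only [eval_comp, eval_sub, eval_mul, eval_C, eval_X, sub_self, zero_mul, sub_zero] at h2
    exact hpD ((dvd_sub_left (dvd_mul_right _ _)).mp (hr.trans h2))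
  have hJnorm : ∀ r : ℕ, (p : ℤ) ∣ f.eval (r : ℤ) → Ideal.absNorm (J r) = p := by
    intro r hr
    refine absNorm_eq_prime_of_forall_exists hp (hJtop r hr) (hpJ r) fun x ↦ ?_
    obtain ⟨U, hU⟩ := hD x
    obtain ⟨u, v, huv⟩ := hp'.irreducible.coprime_iff_not_dvd.mpr hpD
    refine ⟨v * U.eval (a * r : ℤ), ?_⟩
    have h1 := aeval_sub_intCast_mem (hηJ r) U
    rw [hU, zsmul_eq_mul] at h1
    have h2 : (u : 𝓞 K) * (p : 𝓞 K) + v * D = 1 := by exact_mod_cast huv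
    have h3 : x - ((v * U.eval (a * r : ℤ) : ℤ) : 𝓞 K) =
        u * x * (p : 𝓞 K) + v * (D * x - ((U.eval (a * r : ℤ) : ℤ) : 𝓞 K)) := by
      rw [Int.cast_mul]
      linear_combination (-x) * h2
    rw [h3]
    exact add_mem (Ideal.mul_mem_left _ _ (hpJ r)) (Ideal.mul_mem_left _ _ h1)
  have hJprime : ∀ r : ℕ, (p : ℤ) ∣ f.eval (r : ℤ) → (J r).IsPrime := fun r hr ↦
    Ideal.isPrime_of_irreducible_absNorm (by rw [hJnorm r hr]; exact hp.prime.irreducible)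
  have hJbot : ∀ r, J r ≠ ⊥ := by
    intro r h
    have h1 := hpJ r
    rw [h, Ideal.mem_bot, Nat.cast_eq_zero] at h1
    exact hp.ne_zero h1
  symm
  refine Finset.card_bij (fun r _ ↦ J r) ?_ ?_ ?_
  · intro r hr
    have hr := (Finset.mem_filter.mp hr).2
    rw [Finset.mem_filter, mem_primeIdealsLE, hJnorm r hr]
    exact ⟨⟨hJprime r hr, hJbot r, hY⟩, rfl⟩
  · intro r hr s hs hrs
    rw [Finset.mem_filter, Finset.mem_range] at hr hs
    have h1 := sub_mem (hrs ▸ hηJ s : η - ((a * s : ℤ) : 𝓞 K) ∈ J r) (hηJ r)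
    rw [sub_sub_sub_cancel_left, ← Int.cast_sub, ← mul_sub,
      intCast_mem_iff_dvd hp (hJtop r hr.2) (hpJ r)] at h1
    have h2 := (hp'.dvd_or_dvd h1).resolve_left hpa
    have h3 := (Nat.modEq_iff_dvd (n := p) (a := s) (b := r)).mpr h2
    exact (h3.eq_of_lt_of_lt hs.1 hr.1).symm
  · intro P hP
    rw [Finset.mem_filter, mem_primeIdealsLE] at hP
    obtain ⟨⟨hPprime, hP0, -⟩, hPp⟩ := hP
    have hpP : (p : 𝓞 K) ∈ P := hPp ▸ Ideal.absNorm_mem P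
    obtain ⟨k, hk⟩ := exists_sub_intCast_mem_of_absNorm_eq hp hPp η
    obtain ⟨u, v, huv⟩ := hp'.irreducible.coprime_iff_not_dvd.mpr hpa
    have hp0 : (p : ℤ) ≠ 0 := by exact_mod_cast hp.ne_zero
    have hpos : (0 : ℤ) < p := by exact_mod_cast hp.pos
    obtain ⟨r, hr⟩ := Int.eq_ofNat_of_zero_le (Int.emod_nonneg (v * k) hp0)
    have hrp : r < p := by
      have := Int.emod_lt_of_pos (v * k) hpos
      omega
    have hrk : (p : ℤ) ∣ k - a * r := by
      rw [← hr]
      obtain ⟨c, hc⟩ := Int.dvd_self_sub_emod (x := v * k) (m := p)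
      refine ⟨u * k + a * c, ?_⟩
      linear_combination (-k) * huv + a * hc
    have hηP : η - ((a * r : ℤ) : 𝓞 K) ∈ P := by
      have := add_mem hk (intCast_sub_mem_ideal_of_modEq hpP hrk)
      rwa [sub_add_sub_cancel] at this
    have hroot : (p : ℤ) ∣ f.eval (r : ℤ) := by
      have h1 := aeval_sub_intCast_mem hηP (f.scaleRoots a)
      rw [hη, zero_sub, neg_mem_iff, intCast_mem_iff_dvd hp hPprime.ne_top hpP] at h1
      have h2 := scaleRoots_eval₂_mul (p := f) (RingHom.id ℤ) (r : ℤ) a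
      simp only [RingHom.id_apply, eval₂_id] at h2
      rw [h2] at h1
      exact (hp'.dvd_or_dvd h1).resolve_left fun h ↦ hpa (hp'.dvd_of_dvd_pow h)
    refine ⟨r, Finset.mem_filter.mpr ⟨Finset.mem_range.mpr hrp, hroot⟩, ?_⟩
    have hle : J r ≤ P := by
      rw [Ideal.span_le]
      rintro y (rfl | rfl)
      exacts [hpP, hηP]
    exact ((hJprime r hroot).isMaximal (hJbot r)).eq_of_le hPprime.ne_top hle

end RootsModP

section RootCount

lemma exists_abs_sum_sub_sum_le {g h : ℕ → ℝ} {E : ℤ} (hE : E ≠ 0)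
    (hgh : ∀ p : ℕ, p.Prime → ¬ (p : ℤ) ∣ E → g p = h p) :
    ∃ C : ℝ, ∀ s : Finset ℕ, (∀ p ∈ s, p.Prime) →
      |∑ p ∈ s, g p * Real.log p / p - ∑ p ∈ s, h p * Real.log p / p| ≤ C := by
  refine ⟨∑ p ∈ E.natAbs.primeFactors, |g p * Real.log p / p - h p * Real.log p / p|,
    fun s hs ↦ ?_⟩
  rw [← Finset.sum_sub_distrib]
  refine (Finset.abs_sum_le_sum_abs _ _).trans ?_
  rw [← Finset.sum_filter_add_sum_filter_not s fun p : ℕ ↦ (p : ℤ) ∣ E]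
  have h0 : ∑ p ∈ s.filter fun p : ℕ ↦ ¬ (p : ℤ) ∣ E,
      |g p * Real.log p / p - h p * Real.log p / p| = 0 := by
    refine Finset.sum_eq_zero fun p hp ↦ ?_
    rw [Finset.mem_filter] at hp
    rw [hgh p (hs p hp.1) hp.2, sub_self, abs_zero]
  rw [h0, add_zero]
  refine Finset.sum_le_sum_of_subset_of_nonneg (fun p hp ↦ ?_) fun _ _ _ ↦ abs_nonneg _
  rw [Finset.mem_filter] at hp
  exact Nat.mem_primeFactors.mpr ⟨hs p hp.1, Int.natCast_dvd.mp hp.2, Int.natAbs_ne_zero.mpr hE⟩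

variable (K : Type*) [Field K] [NumberField K]

/-- Mertens' first theorem for prime ideals of degree one. -/
lemma exists_abs_sum_card_absNorm_eq_sub_log_le :
    ∃ C : ℝ, ∀ x : ℝ, 1 ≤ x →
      |∑ p ∈ (Finset.range (⌊x⌋₊ + 1)).filter Nat.Prime,
        (((primeIdealsLE K p).filter fun P ↦ Ideal.absNorm P = p).card : ℝ) * Real.log p / p -
          Real.log x| ≤ C := by
  obtain ⟨C₁, h₁⟩ := exists_abs_sum_log_div_absNorm_sub_log_le K
  obtain ⟨C₂, hC₂, h₂⟩ := exists_sum_log_absNorm_div_minFac_sq_le K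
  refine ⟨C₁ + C₂, fun x hx ↦ ?_⟩
  have hmain := h₁ x hx
  rw [← Finset.sum_filter_add_sum_filter_not (primeIdealsLE K x)
    fun P ↦ (Ideal.absNorm P).Prime] at hmain
  have hprime : ∑ P ∈ primeIdealsLE K x with (Ideal.absNorm P).Prime,
      Real.log (Ideal.absNorm P) / Ideal.absNorm P =
      ∑ p ∈ (Finset.range (⌊x⌋₊ + 1)).filter Nat.Prime,
        (((primeIdealsLE K p).filter fun P ↦ Ideal.absNorm P = p).card : ℝ) *
          Real.log p / p := by
    rw [← Finset.sum_fiberwise_of_maps_to (g := fun P ↦ Ideal.absNorm P)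
      (t := (Finset.range (⌊x⌋₊ + 1)).filter Nat.Prime)]
    · refine Finset.sum_congr rfl fun p hp ↦ ?_
      rw [Finset.mem_filter, Finset.mem_range, Nat.lt_succ_iff, Nat.le_floor_iff (by linarith)]
        at hp
      have hfilter : ((primeIdealsLE K x).filter fun P ↦ (Ideal.absNorm P).Prime).filter
          (fun P ↦ Ideal.absNorm P = p) =
          (primeIdealsLE K p).filter fun P ↦ Ideal.absNorm P = p := by
        ext P
        simp only [Finset.mem_filter, mem_primeIdealsLE]
        constructor
        · rintro ⟨⟨⟨h3, h4, -⟩, -⟩, h5⟩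
          exact ⟨⟨h3, h4, by rw [h5]⟩, h5⟩
        · rintro ⟨⟨h3, h4, -⟩, h5⟩
          exact ⟨⟨⟨h3, h4, by rw [h5]; exact hp.1⟩, by rw [h5]; exact hp.2⟩, h5⟩
      rw [hfilter, Finset.sum_congr rfl fun P hP ↦ by rw [(Finset.mem_filter.mp hP).2],
        Finset.sum_const, nsmul_eq_mul, mul_div_assoc]
    · intro P hP
      rw [Finset.mem_filter, mem_primeIdealsLE] at hP
      rw [Finset.mem_filter, Finset.mem_range, Nat.lt_succ_iff, Nat.le_floor_iff (by linarith)]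
      exact ⟨hP.1.2.2, hP.2⟩
  have hrest : ∑ P ∈ primeIdealsLE K x with ¬ (Ideal.absNorm P).Prime,
      Real.log (Ideal.absNorm P) / Ideal.absNorm P ≤ C₂ := by
    refine le_trans ?_ (h₂ x)
    refine (Finset.sum_le_sum fun P hP ↦ ?_).trans
      (Finset.sum_le_sum_of_subset_of_nonneg (Finset.filter_subset _ _) fun P _ _ ↦
        div_nonneg (log_absNorm_nonneg P) (by positivity))
    rw [Finset.mem_filter, mem_primeIdealsLE] at hP
    obtain ⟨p, k, hk, -, hp, hPk, hmin⟩ := exists_absNorm_eq_prime_pow hP.1.1 hP.1.2.1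
    have hk1 : k ≠ 1 := by
      rintro rfl
      exact hP.2 (by rwa [hPk, pow_one])
    have hle : p ^ 2 ≤ Ideal.absNorm P := hPk ▸ Nat.pow_le_pow_right hp.pos (by omega)
    rw [hmin]
    exact div_le_div_of_nonneg_left (log_absNorm_nonneg P) (by have := hp.pos; positivity)
      (by exact_mod_cast hle)
  have hrest0 : 0 ≤ ∑ P ∈ primeIdealsLE K x with ¬ (Ideal.absNorm P).Prime,
      Real.log (Ideal.absNorm P) / Ideal.absNorm P :=
    Finset.sum_nonneg fun P _ ↦ div_nonneg (log_absNorm_nonneg P) (Nat.cast_nonneg _)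
  rw [hprime] at hmain
  rw [abs_le] at hmain ⊢
  constructor <;> linarith

/-- The mean value of the number of roots modulo `p` of an irreducible polynomial is one. -/
lemma exists_abs_sum_rootCount_sub_log_le {f : ℤ[X]} (hf : Irreducible f)
    (hdeg : 1 ≤ f.natDegree) :
    ∃ C : ℝ, ∀ x : ℝ, 1 ≤ x →
      |∑ p ∈ (Finset.range (⌊x⌋₊ + 1)).filter Nat.Prime, (rootCount f p : ℝ) * Real.log p / p -
          Real.log x| ≤ C := by
  obtain ⟨K, _, _, η, hη, hdvd, D, hD0, hD⟩ := exists_numberField_of_irreducible hf hdeg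
  obtain ⟨C₁, h₁⟩ := exists_abs_sum_card_absNorm_eq_sub_log_le K
  obtain ⟨C₂, h₂⟩ := exists_abs_sum_sub_sum_le (g := fun p ↦ rootCount f p)
    (h := fun p ↦ ((primeIdealsLE K p).filter fun P ↦ Ideal.absNorm P = p).card)
    (E := D * f.leadingCoeff) (mul_ne_zero hD0 (leadingCoeff_ne_zero.mpr hf.ne_zero))
    fun p hp hpE ↦ by
      rw [card_filter_absNorm_eq_rootCount hp hη hdvd hD (fun h ↦ hpE (h.mul_right _))
        (fun h ↦ hpE (h.mul_left _)) le_rfl]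
  refine ⟨C₂ + C₁, fun x hx ↦ (abs_sub_le _ _ _).trans (add_le_add (h₂ _ ?_) (h₁ x hx))⟩
  exact fun p hp ↦ (Finset.mem_filter.mp hp).2

lemma nu2_eq_rootCount_add_rootCount {f : ℤ[X]} {p : ℕ} (hp : p.Prime)
    (hpf : ¬ (p : ℤ) ∣ f.coeff 0) : nu2 f p = rootCount f p + rootCount X p := by
  rw [nu2, rootCount, rootCount, ← Finset.card_union_of_disjoint, ← Finset.filter_or]
  · congr 1
    refine Finset.filter_congr fun r _ ↦ ?_
    rw [eval_X, (Nat.prime_iff_prime_int.mp hp).dvd_mul, or_comm]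
  · refine Finset.disjoint_filter.mpr fun r hr h1 h2 ↦ hpf ?_
    rw [eval_X, Int.natCast_dvd_natCast] at h2
    rw [Nat.eq_zero_of_dvd_of_lt h2 (Finset.mem_range.mp hr)] at h1
    rwa [coeff_zero_eq_eval_zero]

end RootCount

end NumberFieldMertens

theorem nu2_sum_asymptotic (f : Polynomial ℤ) (hirr : Irreducible f)
    (hdeg : 1 ≤ f.natDegree) (hconst : f.coeff 0 ≠ 0) :
    ∃ C : ℝ, ∀ x : ℝ, 2 ≤ x →
      |(∑ p ∈ (Finset.range (⌊x⌋₊ + 1)).filter Nat.Prime,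
          (nu2 f p : ℝ) * Real.log p / (p : ℝ)) - 2 * Real.log x| ≤ C := by
  obtain ⟨C₁, h₁⟩ := exists_abs_sum_rootCount_sub_log_le hirr hdeg
  obtain ⟨C₂, h₂⟩ := exists_abs_sum_rootCount_sub_log_le (f := X) irreducible_X (by simp)
  obtain ⟨C₃, h₃⟩ := exists_abs_sum_sub_sum_le (g := fun p ↦ nu2 f p)
    (h := fun p ↦ rootCount f p + rootCount X p) hconst fun p hp hpf ↦ by
      rw [nu2_eq_rootCount_add_rootCount hp hpf, Nat.cast_add]
  refine ⟨C₃ + (C₁ + C₂), fun x hx ↦ ?_⟩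
  have hx1 : 1 ≤ x := by linarith
  have h4 := h₃ ((Finset.range (⌊x⌋₊ + 1)).filter Nat.Prime) fun p hp ↦ (Finset.mem_filter.mp hp).2
  simp only [add_mul, add_div, Finset.sum_add_distrib] at h4
  have h5 := h₁ x hx1
  have h6 := h₂ x hx1
  rw [abs_le] at h4 h5 h6 ⊢
  constructor <;> linarith
end
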